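/- arXiv:1104.3090 — 3 statements merged into one kernel-verified Lean document; each statement's English description precedes it below -/
import Mathlib

section
/- Let G = (V,E) be a 2-vertex-connected simple graph on at least 3 vertices equipped with a removable pairing (R,P). Then G has a spanning closed walk of length at most (4/3)·|E| − (2/3)·|R|. -/
open SimpleGraph

section TJoin
set_option linter.unusedSectionVars false
variable {V E : Type*} [Fintype V] [DecidableEq V] [Fintype E] [DecidableEq E]

/-- mod 2 boundary of an edge set in a multigraph with end maps `s`, `t`. -/
def tjBd (s t : E → V) (F : Finset E) : V → ZMod 2 :=
  ∑ e ∈ F, (Pi.single (s e) 1 + Pi.single (t e) 1)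

/-- the set of edges of `F` leaving `X`. -/
def tjCut (s t : E → V) (X : Finset V) (F : Finset E) : Finset E :=
  F.filter (fun e => ¬ (s e ∈ X ↔ t e ∈ X))

lemma fun_add_self (f : V → ZMod 2) : f + f = 0 := by
  funext v; exact CharTwo.add_self_eq_zero _

lemma fun_two : (2 : V → ZMod 2) = 0 := by
  have := fun_add_self (1 : V → ZMod 2)
  rw [← this]; norm_num

lemma sum_symmDiff' {M : Type*} [AddCommGroup M] (f : E → M) (A B : Finset E) :
    ∑ e ∈ symmDiff A B, f e = ∑ e ∈ A, f e + ∑ e ∈ B, (if e ∈ A then - f e else f e) := by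
  have h : ∀ (C : Finset E) (g : E → M), ∑ e ∈ C, g e = ∑ e, if e ∈ C then g e else 0 := by
    intro C g
    rw [Finset.sum_ite_mem, Finset.univ_inter]
  rw [h (symmDiff A B), h A, h B, ← Finset.sum_add_distrib]
  refine Finset.sum_congr rfl fun e _ => ?_
  by_cases ha : e ∈ A <;> by_cases hb : e ∈ B <;> simp [Finset.mem_symmDiff, ha, hb]

lemma tjBd_symmDiff (s t : E → V) (A B : Finset E) :
    tjBd s t (symmDiff A B) = tjBd s t A + tjBd s t B := by
  unfold tjBd
  rw [sum_symmDiff']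
  congr 1
  refine Finset.sum_congr rfl fun e _ => ?_
  split_ifs
  · funext v; exact CharTwo.neg_eq _
  · rfl

lemma tjBd_empty (s t : E → V) : tjBd s t ∅ = 0 := by simp [tjBd]

lemma tjBd_singleton (s t : E → V) (e : E) :
    tjBd s t {e} = Pi.single (s e) 1 + Pi.single (t e) 1 := by simp [tjBd]

lemma tjBd_union (s t : E → V) {A B : Finset E} (h : Disjoint A B) :
    tjBd s t (A ∪ B) = tjBd s t A + tjBd s t B := by
  unfold tjBd; rw [Finset.sum_union h]

lemma tjBd_cut (s t : E → V) (X : Finset V) (F : Finset E) :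
    ∑ v ∈ X, tjBd s t F v = ((tjCut s t X F).card : ZMod 2) := by
  unfold tjBd tjCut
  simp only [Finset.sum_apply, Pi.add_apply]
  rw [Finset.sum_comm, Finset.card_filter, Nat.cast_sum]
  refine Finset.sum_congr rfl fun e _ => ?_
  rw [Finset.sum_add_distrib, Finset.sum_pi_single', Finset.sum_pi_single']
  by_cases h1 : s e ∈ X <;> by_cases h2 : t e ∈ X <;> simp [h1, h2]
  decide

lemma tjBd_total (s t : E → V) (F : Finset E) : ∑ v, tjBd s t F v = 0 := by
  rw [tjBd_cut]; simp [tjCut]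

lemma tj_split (s t : E → V) (X : Finset V) : ∀ (n : ℕ) (D : Finset E) (y : V),
    D.card = n → y ∉ X → (∀ v, v ∉ X → tjBd s t D v = (Pi.single y 1 : V → ZMod 2) v) →
    ∃ Q, Q ⊆ D ∧ (tjCut s t X Q).card = 1 ∧
      ∀ v, v ∉ X → tjBd s t Q v = (Pi.single y 1 : V → ZMod 2) v := by
  intro n
  induction n with
  | zero =>
    intro D y hD hy h
    have := h y hy
    rw [Finset.card_eq_zero] at hD
    subst hD
    simp [tjBd_empty] at this
  | succ n ih =>
    intro D y hD hy h
    -- a nonloop edge at y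
    have hex : ∃ e ∈ D, (Pi.single (s e) 1 + Pi.single (t e) 1 : V → ZMod 2) y ≠ 0 := by
      by_contra hcon
      push Not at hcon
      have h1 := h y hy
      unfold tjBd at h1
      rw [Finset.sum_apply, Finset.sum_eq_zero hcon] at h1
      simp at h1
    obtain ⟨e, heD, he⟩ := hex
    obtain ⟨z, hz, hye⟩ : ∃ z, z ≠ y ∧ ((s e = y ∧ t e = z) ∨ (s e = z ∧ t e = y)) := by
      by_cases h1 : s e = y
      · by_cases h2 : t e = y
        · exfalso; apply he
          rw [h1, h2, fun_add_self]; rfl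
        · exact ⟨t e, h2, Or.inl ⟨h1, rfl⟩⟩
      · by_cases h2 : t e = y
        · exact ⟨s e, h1, Or.inr ⟨rfl, h2⟩⟩
        · exfalso; apply he
          simp [Ne.symm h1, Ne.symm h2]
    have hb : tjBd s t {e} = Pi.single y 1 + Pi.single z 1 := by
      rw [tjBd_singleton]
      rcases hye with ⟨a, b⟩ | ⟨a, b⟩ <;> rw [a, b]
      exact add_comm _ _
    by_cases hzX : z ∈ X
    · refine ⟨{e}, by simpa using heD, ?_, ?_⟩
      · rw [tjCut, Finset.filter_singleton, if_pos]
        · simp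
        · rcases hye with ⟨a, b⟩ | ⟨a, b⟩ <;> simp [a, b, hzX, hy]
      · intro v hv
        have : v ≠ z := fun h => hv (h ▸ hzX)
        rw [hb]; simp [this]
    · have hsp : tjBd s t D = tjBd s t {e} + tjBd s t (D.erase e) := by
        rw [← tjBd_union]
        · congr 1
          ext x; simp only [Finset.mem_union, Finset.mem_singleton, Finset.mem_erase]
          constructor
          · intro hx; by_cases hxe : x = e
            · exact Or.inl hxe
            · exact Or.inr ⟨hxe, hx⟩
          · rintro (rfl | hx)
            · exact heD
            · exact hx.2
        · simp
      obtain ⟨Q, hQ, hQc, hQb⟩ := ih (D.erase e) z (by rw [Finset.card_erase_of_mem heD, hD]; rfl)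
        hzX (by
          intro v hv
          have h1 := h v hv
          rw [hsp, hb] at h1
          simp only [Pi.add_apply] at h1
          have key : ∀ a b c : ZMod 2, a + b + c = a → c = b := by decide
          exact key _ _ _ h1)
      have heQ : e ∉ Q := fun h => by simpa using hQ h
      refine ⟨insert e Q, ?_, ?_, ?_⟩
      · intro x hx
        rcases Finset.mem_insert.1 hx with rfl | hx
        · exact heD
        · exact Finset.mem_of_mem_erase (hQ hx)
      · rw [tjCut, Finset.filter_insert, if_neg]
        · exact hQc
        · rcases hye with ⟨a, b⟩ | ⟨a, b⟩ <;> simp [a, b, hzX, hy]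
      · intro v hv
        rw [Finset.insert_eq, tjBd_union _ _ (by simpa using heQ), Pi.add_apply, hQb v hv, hb]
        have key : ∀ a b : ZMod 2, a + b + b = a := by decide
        exact key _ _


lemma sum_le_symmDiff_zero (w : E → ℤ) (A Z : Finset E) (hZ : ∀ e ∈ Z, w e = 0) :
    ∑ e ∈ symmDiff A Z, w e = ∑ e ∈ A, w e := by
  rw [sum_symmDiff', Finset.sum_eq_zero (s := Z), add_zero]
  intro e he; simp [hZ e he]

/-- zero-weight joins inside a zero-weight component -/
lemma tj_zero (s t : E → V) (w : E → ℤ) (X : Finset V) (r : V)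
    (hX : ∀ v ∈ X, ∃ Z : Finset E, (∀ e ∈ Z, w e = 0) ∧
      tjBd s t Z = Pi.single r 1 + Pi.single v 1)
    (φ : V → ZMod 2) (hφ : ∀ v, v ∉ X → φ v = 0) (hs : ∑ v ∈ X, φ v = 0) :
    ∃ Z : Finset E, (∀ e ∈ Z, w e = 0) ∧ tjBd s t Z = φ := by
  have main : ∀ Y : Finset V, Y ⊆ X → ∃ Z : Finset E, (∀ e ∈ Z, w e = 0) ∧
      tjBd s t Z = ∑ v ∈ Y, φ v • (Pi.single r 1 + Pi.single v 1 : V → ZMod 2) := by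
    intro Y
    induction Y using Finset.induction_on with
    | empty => intro _; exact ⟨∅, by simp, by simp [tjBd_empty]⟩
    | insert a Y ha ih =>
      intro hY
      obtain ⟨Z, hZ, hb⟩ := ih (fun x hx => hY (Finset.mem_insert_of_mem hx))
      obtain ⟨Z', hZ', hb'⟩ := hX a (hY (Finset.mem_insert_self _ _))
      have h01 : φ a = 0 ∨ φ a = 1 := by
        generalize φ a = x; revert x; decide
      rcases h01 with h | h
      · exact ⟨Z, hZ, by rw [Finset.sum_insert ha, h, zero_smul, zero_add, hb]⟩
      · refine ⟨symmDiff Z' Z, ?_, ?_⟩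
        · intro e he
          rcases Finset.mem_symmDiff.1 he with h | h
          · exact hZ' e h.1
          · exact hZ e h.1
        · rw [tjBd_symmDiff, hb, hb', Finset.sum_insert ha, h, one_smul]
  obtain ⟨Z, hZ, hb⟩ := main X (Finset.Subset.refl _)
  refine ⟨Z, hZ, ?_⟩
  rw [hb]
  simp only [smul_add]
  rw [Finset.sum_add_distrib, ← Finset.sum_smul, hs, zero_smul, zero_add]
  funext v
  rw [Finset.sum_apply]
  simp only [Pi.smul_apply, smul_eq_mul, Pi.single_apply, mul_ite, mul_one, mul_zero]
  rw [Finset.sum_ite_eq]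
  split_ifs with h
  · rfl
  · exact (hφ v h).symm

/-- Key step: find a cut whose reduction decreases the optimum by at most one. -/
lemma tj_step (s t : E → V) (T : V → ZMod 2) (w : E → ℤ) (hw : ∀ e, 0 ≤ w e)
    (hev : ∀ D : Finset E, tjBd s t D = 0 → Even (∑ e ∈ D, w e))
    (J : Finset E) (hJ : tjBd s t J = T)
    (hmin : ∀ F, tjBd s t F = T → ∑ e ∈ J, w e ≤ ∑ e ∈ F, w e)
    (hpos : 0 < ∑ e ∈ J, w e) :
    ∃ X : Finset V, ∑ v ∈ X, T v = 1 ∧ (∀ e ∈ tjCut s t X Finset.univ, 1 ≤ w e) ∧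
      ∀ F, tjBd s t F = T →
        ∑ e ∈ J, w e ≤ ∑ e ∈ F, w e - (tjCut s t X F).card + 1 := by
  classical
  -- the global minimiser
  obtain ⟨Fs, hFs, hFmin⟩ := Finset.exists_min_image
    (Finset.univ.filter (fun F : Finset E => ∃ u r : V,
      tjBd s t F = T + Pi.single u 1 + Pi.single r 1)) (fun F => ∑ e ∈ F, w e) (by
      obtain ⟨e, he, _⟩ := Finset.exists_ne_zero_of_sum_ne_zero hpos.ne'
      exact ⟨J, by
        simp only [Finset.mem_filter, Finset.mem_univ, true_and]
        exact ⟨s e, s e, by rw [add_assoc, fun_add_self, add_zero, hJ]⟩⟩)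
  simp only [Finset.mem_filter, Finset.mem_univ, true_and] at hFs hFmin
  obtain ⟨u, r, hFb⟩ := hFs
  have hFmin' : ∀ F (a b : V), tjBd s t F = T + Pi.single a 1 + Pi.single b 1 →
      ∑ e ∈ Fs, w e ≤ ∑ e ∈ F, w e := fun F a b h => hFmin F ⟨a, b, h⟩
  have hlt : ∑ e ∈ Fs, w e < ∑ e ∈ J, w e := by
    obtain ⟨e, he, hne⟩ := Finset.exists_ne_zero_of_sum_ne_zero hpos.ne'
    have h1 := hFmin' (symmDiff J {e}) (s e) (t e) (by
      rw [tjBd_symmDiff, hJ, tjBd_singleton, add_assoc])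
    rw [sum_symmDiff'] at h1
    simp only [Finset.sum_singleton, he, if_true] at h1
    have := hw e
    omega
  -- the zero component
  set X : Finset V := Finset.univ.filter (fun v => ∃ Z : Finset E, (∀ e ∈ Z, w e = 0) ∧
      tjBd s t Z = Pi.single r 1 + Pi.single v 1) with hXdef
  have hX : ∀ v ∈ X, ∃ Z : Finset E, (∀ e ∈ Z, w e = 0) ∧
      tjBd s t Z = Pi.single r 1 + Pi.single v 1 := by
    intro v hv; simpa [hXdef] using hv
  have hX' : ∀ v, (∃ Z : Finset E, (∀ e ∈ Z, w e = 0) ∧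
      tjBd s t Z = Pi.single r 1 + Pi.single v 1) → v ∈ X := by
    intro v hv; simpa [hXdef] using hv
  have hrX : r ∈ X := hX' r ⟨∅, by simp, by rw [tjBd_empty, fun_add_self]⟩
  have huX : u ∉ X := by
    intro hu
    obtain ⟨Z, hZ, hZb⟩ := hX u hu
    have h1 := hmin (symmDiff Fs Z) (by
      rw [tjBd_symmDiff, hFb, hZb]
      linear_combination (Pi.single u 1 + Pi.single r 1) * (fun_two (V := V)))
    rw [sum_le_symmDiff_zero w Fs Z hZ] at h1
    omega
  have hur : u ≠ r := fun h => huX (h ▸ hrX)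
  -- ends of cut edges
  have hends : ∀ e ∈ tjCut s t X Finset.univ, ∃ x y, x ∈ X ∧ y ∉ X ∧
      tjBd s t {e} = Pi.single x 1 + Pi.single y 1 := by
    intro e he
    simp only [tjCut, Finset.mem_filter, Finset.mem_univ, true_and] at he
    by_cases h1 : s e ∈ X
    · exact ⟨s e, t e, h1, fun h => he (by simp [h1, h]), tjBd_singleton _ _ _⟩
    · refine ⟨t e, s e, ?_, h1, by rw [tjBd_singleton, add_comm]⟩
      by_contra h2; exact he (by simp [h1, h2])
  have hcutpos : ∀ e ∈ tjCut s t X Finset.univ, 1 ≤ w e := by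
    intro e he
    obtain ⟨x, y, hx, hy, hb⟩ := hends e he
    by_contra hlt1
    have h0 : w e = 0 := by have := hw e; omega
    obtain ⟨Z, hZ, hZb⟩ := hX x hx
    refine hy (hX' y ⟨symmDiff Z {e}, ?_, ?_⟩)
    · intro f hf
      rcases Finset.mem_symmDiff.1 hf with h | h
      · exact hZ f h.1
      · rw [Finset.mem_singleton.1 h.1]; exact h0
    · rw [tjBd_symmDiff, hZb, hb]
      linear_combination (Pi.single x 1) * (fun_two (V := V))
  have hcutsub : ∀ F : Finset E, ∀ e ∈ tjCut s t X F, e ∈ F ∧ e ∈ tjCut s t X Finset.univ := by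
    intro F e he
    simp only [tjCut, Finset.mem_filter, Finset.mem_univ, true_and] at he ⊢
    exact he
  have hcutmem : ∀ F : Finset E, ∀ e ∈ F, e ∈ tjCut s t X Finset.univ → e ∈ tjCut s t X F := by
    intro F e he he'
    simp only [tjCut, Finset.mem_filter, Finset.mem_univ, true_and] at he' ⊢
    exact ⟨he, he'⟩
  have hflip : ∀ F : Finset E, tjBd s t F = T + Pi.single u 1 + Pi.single r 1 →
      ∀ e ∈ F, e ∈ tjCut s t X Finset.univ → ∑ e ∈ Fs, w e + w e ≤ ∑ e ∈ F, w e := by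
    intro F hF e heF he
    obtain ⟨x, y, hx, hy, hb⟩ := hends e he
    obtain ⟨Z, hZ, hZb⟩ := hX x hx
    have h1 := hFmin' (symmDiff (symmDiff F {e}) Z) u y (by
      rw [tjBd_symmDiff, tjBd_symmDiff, hZb, hb, hF]
      linear_combination (Pi.single x 1 + Pi.single r 1) * (fun_two (V := V)))
    rw [sum_le_symmDiff_zero w _ Z hZ, sum_symmDiff'] at h1
    simp only [Finset.sum_singleton, heF, if_true] at h1
    omega
  have hFcut : ∀ e ∈ tjCut s t X Finset.univ, e ∉ Fs := by
    intro e he heF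
    have h1 := hflip Fs hFb e heF he
    have := hcutpos e he
    omega
  have hFcut0 : tjCut s t X Fs = ∅ := by
    rw [Finset.eq_empty_iff_forall_notMem]
    intro e he
    exact hFcut e (hcutsub _ e he).2 (hcutsub _ e he).1
  have hTX : ∑ v ∈ X, T v = 1 := by
    have h1 := tjBd_cut s t X Fs
    rw [hFcut0, hFb] at h1
    simp only [Pi.add_apply, Finset.sum_add_distrib, Finset.sum_pi_single', huX, hrX, if_true,
      if_false, Finset.card_empty, Nat.cast_zero] at h1
    have key : ∀ a : ZMod 2, a + 0 + 1 = 0 → a = 1 := by decide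
    exact key _ h1
  refine ⟨X, hTX, hcutpos, ?_⟩
  -- relative lengths
  set l : E → ℤ := fun e => if e ∈ Fs then - w e else w e with hl
  have hlsum : ∀ D : Finset E, ∑ e ∈ symmDiff Fs D, w e = ∑ e ∈ Fs, w e + ∑ e ∈ D, l e :=
    fun D => sum_symmDiff' w Fs D
  have hlzero : ∀ D Z : Finset E, (∀ e ∈ Z, w e = 0) →
      ∑ e ∈ symmDiff D Z, l e = ∑ e ∈ D, l e := by
    intro D Z hZ
    refine sum_le_symmDiff_zero l D Z ?_
    intro e he; simp [hl, hZ e he]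
  have hfix : ∀ φ : V → ZMod 2, (∀ v, v ∉ X → φ v = 0) → ∑ v, φ v = 0 →
      ∃ Z : Finset E, (∀ e ∈ Z, w e = 0) ∧ tjBd s t Z = φ := by
    intro φ hφ hs
    refine tj_zero s t w X r hX φ hφ ?_
    rw [← hs]
    exact Finset.sum_subset (Finset.subset_univ X) (fun v _ hv => hφ v hv)
  -- claim A, small case
  have hA1 : ∀ D : Finset E, (∀ v, v ∉ X → tjBd s t D v = 0) → (tjCut s t X D).card ≤ 2 →
      ((tjCut s t X D).card : ℤ) ≤ ∑ e ∈ D, l e := by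
    intro D hD hc
    obtain ⟨Z, hZ, hZb⟩ := hfix (tjBd s t D) hD (tjBd_total s t D)
    have hb0 : tjBd s t (symmDiff D Z) = 0 := by
      rw [tjBd_symmDiff, hZb, fun_add_self]
    have hls := hlzero D Z hZ
    have hFD : tjBd s t (symmDiff Fs (symmDiff D Z)) = T + Pi.single u 1 + Pi.single r 1 := by
      rw [tjBd_symmDiff, hb0, add_zero, hFb]
    have hsum := hlsum (symmDiff D Z)
    by_cases hne : (tjCut s t X D).Nonempty
    · obtain ⟨e, he⟩ := hne
      obtain ⟨heD, heC⟩ := hcutsub _ e he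
      have hwe := hcutpos e heC
      have heZ : e ∉ Z := fun h => by have := hZ e h; omega
      have heDZ : e ∈ symmDiff D Z := Finset.mem_symmDiff.2 (Or.inl ⟨heD, heZ⟩)
      have heF : e ∈ symmDiff Fs (symmDiff D Z) :=
        Finset.mem_symmDiff.2 (Or.inr ⟨heDZ, hFcut e heC⟩)
      have h1 := hflip _ hFD e heF heC
      have hpar : Even (∑ e ∈ symmDiff D Z, l e) := by
        have h2 := hev _ hb0
        have h3 : Even (∑ e ∈ symmDiff D Z, l e - ∑ e ∈ symmDiff D Z, w e) := by
          rw [← Finset.sum_sub_distrib]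
          refine Finset.even_sum _ fun e _ => ?_
          simp only [hl]
          split_ifs
          · exact ⟨- w e, by ring⟩
          · simp
        have := h3.add h2
        simpa using this
      rw [hls] at hpar hsum
      obtain ⟨k, hk⟩ := hpar
      omega
    · rw [Finset.not_nonempty_iff_eq_empty] at hne
      have h1 := hFmin' _ _ _ hFD
      rw [hne, Finset.card_empty]
      push_cast
      omega
  have hcutadd : ∀ A B : Finset E, A ⊆ B →
      (tjCut s t X B).card = (tjCut s t X A).card + (tjCut s t X (B \ A)).card := by
    intro A B hAB
    unfold tjCut
    rw [← Finset.card_union_of_disjoint, ← Finset.filter_union, Finset.union_sdiff_of_subset hAB]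
    exact Finset.disjoint_filter_filter Finset.disjoint_sdiff
  have hbdadd : ∀ A B : Finset E, A ⊆ B →
      tjBd s t B = tjBd s t A + tjBd s t (B \ A) := by
    intro A B hAB
    rw [← tjBd_union _ _ Finset.disjoint_sdiff, Finset.union_sdiff_of_subset hAB]
  have hladd : ∀ A B : Finset E, A ⊆ B →
      ∑ e ∈ B, l e = ∑ e ∈ A, l e + ∑ e ∈ B \ A, l e := by
    intro A B hAB
    rw [← Finset.sum_union Finset.disjoint_sdiff, Finset.union_sdiff_of_subset hAB]
  -- claim A
  have hA : ∀ n : ℕ, ∀ D : Finset E, (tjCut s t X D).card ≤ n →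
      (∀ v, v ∉ X → tjBd s t D v = 0) → ((tjCut s t X D).card : ℤ) ≤ ∑ e ∈ D, l e := by
    intro n
    induction n with
    | zero => intro D hn hD; exact hA1 D hD (by omega)
    | succ n ih =>
      intro D hn hD
      by_cases hc : (tjCut s t X D).card ≤ 2
      · exact hA1 D hD hc
      · have hne : (tjCut s t X D).Nonempty := by
          rw [← Finset.card_pos]; omega
        obtain ⟨e, he⟩ := hne
        obtain ⟨heD, heC⟩ := hcutsub _ e he
        obtain ⟨x, y, hx, hy, hb⟩ := hends e heC
        have hsub1 : {e} ⊆ D := by simpa using heD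
        have hbe := hbdadd {e} D hsub1
        obtain ⟨Q, hQD, hQc, hQb⟩ := tj_split s t X _ (D \ {e}) y rfl hy (by
          intro v hv
          have h1 := hD v hv
          have hvx : v ≠ x := fun h => hv (h ▸ hx)
          rw [hbe, hb] at h1
          simp only [Pi.add_apply, Pi.single_eq_of_ne hvx, zero_add] at h1
          have key : ∀ a b : ZMod 2, a + b = 0 → b = a := by decide
          exact key _ _ h1)
        have heQ : e ∉ Q := fun h => by simpa using hQD h
        have hCsub : insert e Q ⊆ D := by
          intro f hf
          rcases Finset.mem_insert.1 hf with rfl | hf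
          · exact heD
          · exact (Finset.mem_sdiff.1 (hQD hf)).1
        have hCc : (tjCut s t X (insert e Q)).card = 2 := by
          have h1 : e ∉ tjCut s t X Q := fun h => heQ (hcutsub _ _ h).1
          have h2 : tjCut s t X (insert e Q) = insert e (tjCut s t X Q) := by
            unfold tjCut
            rw [Finset.filter_insert, if_pos]
            simpa [tjCut] using heC
          rw [h2, Finset.card_insert_of_notMem h1, hQc]
        have hCb : ∀ v, v ∉ X → tjBd s t (insert e Q) v = 0 := by
          intro v hv
          have hvx : v ≠ x := fun h => hv (h ▸ hx)
          rw [Finset.insert_eq, tjBd_union _ _ (by simpa using heQ), Pi.add_apply, hQb v hv, hb]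
          simp only [Pi.add_apply, Pi.single_eq_of_ne hvx, zero_add]
          exact CharTwo.add_self_eq_zero _
        have h1 := hA1 _ hCb (by omega)
        have h2 := hcutadd _ _ hCsub
        have h3 := ih (D \ insert e Q) (by omega) (by
          intro v hv
          have h4 := hD v hv
          rw [hbdadd _ _ hCsub, Pi.add_apply, hCb v hv, zero_add] at h4
          exact h4)
        have h5 := hladd _ _ hCsub
        omega
  -- claim B
  intro F hF
  have hDb : tjBd s t (symmDiff F Fs) = Pi.single u 1 + Pi.single r 1 := by
    rw [tjBd_symmDiff, hF, hFb]
    linear_combination T * (fun_two (V := V))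
  have hDc : tjCut s t X F = tjCut s t X (symmDiff F Fs) := by
    ext e
    constructor
    · intro he
      obtain ⟨heF, heC⟩ := hcutsub _ e he
      exact hcutmem _ e (Finset.mem_symmDiff.2 (Or.inl ⟨heF, hFcut e heC⟩)) heC
    · intro he
      obtain ⟨heF, heC⟩ := hcutsub _ e he
      rcases Finset.mem_symmDiff.1 heF with h | h
      · exact hcutmem _ e h.1 heC
      · exact absurd h.1 (hFcut e heC)
  obtain ⟨Q, hQD, hQc, hQb⟩ := tj_split s t X _ (symmDiff F Fs) u rfl huX (by
    intro v hv
    have hvr : v ≠ r := fun h => hv (h ▸ hrX)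
    rw [hDb, Pi.add_apply, Pi.single_eq_of_ne hvr, add_zero])
  have h1 := hcutadd _ _ hQD
  have h2 := hladd _ _ hQD
  have h3 := hA _ (symmDiff F Fs \ Q) le_rfl (by
    intro v hv
    have h4 : tjBd s t (symmDiff F Fs) v = _ := congrFun (hbdadd _ _ hQD) v
    have hvr : v ≠ r := fun h => hv (h ▸ hrX)
    rw [hDb, Pi.add_apply, Pi.add_apply, hQb v hv, Pi.single_eq_of_ne hvr, add_zero] at h4
    simpa using h4)
  have h4 : ∑ e ∈ F, w e = ∑ e ∈ Fs, w e + ∑ e ∈ symmDiff F Fs, l e := by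
    rw [← hlsum, symmDiff_comm F, symmDiff_symmDiff_cancel_left]
  obtain ⟨Z, hZ, hZb⟩ := hfix (tjBd s t Q + Pi.single u 1 + Pi.single r 1) (by
      intro v hv
      have hvr : v ≠ r := fun h => hv (h ▸ hrX)
      rw [Pi.add_apply, Pi.add_apply, hQb v hv, Pi.single_eq_of_ne hvr, add_zero]
      exact CharTwo.add_self_eq_zero _) (by
      simp only [Pi.add_apply, Finset.sum_add_distrib, tjBd_total, Finset.sum_pi_single',
        Finset.mem_univ, if_true]
      decide)
  have h5 := hmin (symmDiff Fs (symmDiff Q Z)) (by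
    rw [tjBd_symmDiff, tjBd_symmDiff, hZb, hFb]
    linear_combination (Pi.single u 1 + Pi.single r 1 + tjBd s t Q) * (fun_two (V := V)))
  rw [hlsum, hlzero Q Z hZ] at h5
  rw [hDc]
  omega

lemma tj_main (s t : E → V) (c : E → ℤ) (hc : ∀ e, 0 ≤ c e) (k : ℤ) (T : V → ZMod 2)
    (hT : ∃ J, tjBd s t J = T)
    (hcut : ∀ X : Finset V, ∑ v ∈ X, T v = 1 → k ≤ ∑ e ∈ tjCut s t X Finset.univ, c e) :
    ∀ (n : ℕ) (w : E → ℤ), (∀ e, 0 ≤ w e) →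
      (∀ D : Finset E, tjBd s t D = 0 → Even (∑ e ∈ D, w e)) → ∑ e, w e = n →
      ∃ J, tjBd s t J = T ∧ k * ∑ e ∈ J, w e ≤ ∑ e, c e * w e := by
  classical
  intro n
  induction n using Nat.strong_induction_on with
  | _ n ih =>
  intro w hw hev hn
  obtain ⟨J, hJ, hmin⟩ := Finset.exists_min_image
    (Finset.univ.filter (fun F : Finset E => tjBd s t F = T)) (fun F => ∑ e ∈ F, w e) (by
      obtain ⟨J, hJ⟩ := hT
      exact ⟨J, by simpa using hJ⟩)
  simp only [Finset.mem_filter, Finset.mem_univ, true_and] at hJ hmin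
  have hJ0 : 0 ≤ ∑ e ∈ J, w e := Finset.sum_nonneg fun e _ => hw e
  rcases hJ0.eq_or_lt with h0 | hpos
  · refine ⟨J, hJ, ?_⟩
    rw [← h0, mul_zero]
    exact Finset.sum_nonneg fun e _ => mul_nonneg (hc e) (hw e)
  obtain ⟨X, hTX, hcutpos, hstep⟩ := tj_step s t T w hw hev J hJ hmin hpos
  set w' : E → ℤ := fun e => w e - (if e ∈ tjCut s t X Finset.univ then 1 else 0) with hw'
  have hw'0 : ∀ e, 0 ≤ w' e := by
    intro e
    simp only [hw']
    split_ifs with h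
    · have := hcutpos e h; omega
    · simpa using hw e
  have hcutc : ∀ D : Finset E, ∑ e ∈ D, (if e ∈ tjCut s t X Finset.univ then (1 : ℤ) else 0)
      = (tjCut s t X D).card := by
    intro D
    rw [tjCut, tjCut, Finset.card_filter]
    push_cast
    exact Finset.sum_congr rfl fun e _ => by simp
  have hsum : ∀ D : Finset E, ∑ e ∈ D, w' e = ∑ e ∈ D, w e - (tjCut s t X D).card := by
    intro D
    simp only [hw']
    rw [Finset.sum_sub_distrib, hcutc]
  have hJc : (tjCut s t X J).card ≠ 0 := by
    intro h
    have h1 := tjBd_cut s t X J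
    rw [hJ, hTX, h] at h1
    simp at h1
  have hle : (tjCut s t X J).card ≤ (tjCut s t X Finset.univ).card :=
    Finset.card_le_card (Finset.filter_subset_filter _ (Finset.subset_univ _))
  have hn' := hsum Finset.univ
  have hn0 : 0 ≤ ∑ e, w' e := Finset.sum_nonneg fun e _ => hw'0 e
  obtain ⟨J', hJ', hb⟩ := ih (∑ e, w' e).toNat (by omega) w' hw'0 (by
    intro D hD
    rw [hsum]
    refine (hev D hD).sub ?_
    have h1 := tjBd_cut s t X D
    rw [hD] at h1
    simp only [Pi.zero_apply, Finset.sum_const_zero] at h1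
    have h2 := (ZMod.natCast_eq_zero_iff_even).1 h1.symm
    exact_mod_cast h2) (by omega)
  refine ⟨J, hJ, ?_⟩
  have h1 := hstep J' hJ'
  have h2 := hsum J'
  have h3 : ∑ e, c e * w' e = ∑ e, c e * w e - ∑ e ∈ tjCut s t X Finset.univ, c e := by
    simp only [hw', mul_sub, Finset.sum_sub_distrib, mul_ite, mul_one, mul_zero]
    rw [Finset.sum_ite_mem, Finset.univ_inter]
  have h4 := hcut X hTX
  by_cases hk : 0 ≤ k
  · have h5 : k * ∑ e ∈ J, w e ≤ k * (∑ e ∈ J', w' e + 1) :=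
      mul_le_mul_of_nonneg_left (by omega) hk
    linarith
  · have h5 : 0 ≤ ∑ e, c e * w e := Finset.sum_nonneg fun e _ => mul_nonneg (hc e) (hw e)
    nlinarith

/-- In a bridgeless multigraph, for every integer weighting there is a join of the odd vertices
of weight at most a third of the total. -/
lemma tj_third (s t : E → V)
    (hbr : ∀ X : Finset V, (tjCut s t X Finset.univ).card ≠ 1) (w : E → ℤ) :
    ∃ J, tjBd s t J = tjBd s t Finset.univ ∧ 3 * ∑ e ∈ J, w e ≤ ∑ e, w e := by
  classical
  set N : Finset E := Finset.univ.filter (fun e => w e < 0) with hN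
  obtain ⟨J', hJ', hb⟩ := tj_main s t (fun e => if e ∈ N then 2 else 1)
    (by intro e; split_ifs <;> norm_num) 3
    (tjBd s t Finset.univ + tjBd s t N) ⟨symmDiff Finset.univ N, tjBd_symmDiff _ _ _ _⟩
    (by
      intro X hX
      simp only [Pi.add_apply, Finset.sum_add_distrib, tjBd_cut] at hX
      have h1 : ∑ e ∈ tjCut s t X Finset.univ, (if e ∈ N then (2 : ℤ) else 1)
          = (tjCut s t X Finset.univ).card + (tjCut s t X N).card := by
        have h2 : ∀ e, (if e ∈ N then (2 : ℤ) else 1) = 1 + if e ∈ N then 1 else 0 := by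
          intro e; split_ifs <;> norm_num
        simp only [h2, Finset.sum_add_distrib, Finset.sum_const, nsmul_eq_mul, mul_one]
        congr 1
        rw [Finset.sum_ite_mem]
        simp only [Finset.sum_const, nsmul_eq_mul, mul_one]
        congr 2
        ext e
        simp [tjCut, and_comm]
      rw [h1]
      have h3 : (tjCut s t X N).card ≤ (tjCut s t X Finset.univ).card :=
        Finset.card_le_card (Finset.filter_subset_filter _ (Finset.subset_univ _))
      have h4 := hbr X
      rw [← Nat.cast_add, ZMod.natCast_eq_one_iff_odd] at hX
      obtain ⟨m, hm⟩ := hX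
      omega)
    (∑ e, 2 * |w e|).toNat (fun e => 2 * |w e|) (fun e => by positivity)
    (fun D _ => by rw [← Finset.mul_sum]; exact even_two_mul _)
    (by rw [Int.toNat_of_nonneg]; exact Finset.sum_nonneg fun e _ => by positivity)
  refine ⟨symmDiff J' N, ?_, ?_⟩
  · rw [tjBd_symmDiff, hJ', add_assoc, fun_add_self, add_zero]
  · have h1 : ∑ e ∈ symmDiff J' N, w e = ∑ e ∈ J', |w e| + ∑ e ∈ N, w e := by
      rw [symmDiff_comm, sum_symmDiff', add_comm]
      congr 1
      refine Finset.sum_congr rfl fun e _ => ?_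
      simp only [hN, Finset.mem_filter, Finset.mem_univ, true_and]
      split_ifs with h
      · rw [abs_of_neg h]
      · rw [abs_of_nonneg (not_lt.1 h)]
    have h2 : ∑ e, (if e ∈ N then (2 : ℤ) else 1) * (2 * |w e|) + 6 * ∑ e ∈ N, w e
        = 2 * ∑ e, w e := by
      have h3 : ∑ e ∈ N, w e = ∑ e, if e ∈ N then w e else 0 := by
        rw [Finset.sum_ite_mem, Finset.univ_inter]
      rw [h3, Finset.mul_sum, Finset.mul_sum, ← Finset.sum_add_distrib]
      refine Finset.sum_congr rfl fun e _ => ?_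
      simp only [hN, Finset.mem_filter, Finset.mem_univ, true_and]
      split_ifs with h
      · rw [abs_of_neg h]; ring
      · rw [abs_of_nonneg (not_lt.1 h)]; ring
    rw [← Finset.mul_sum] at hb
    rw [h1]
    linarith

end TJoin
section Euler
set_option linter.unusedSectionVars false
variable {V : Type*} [Fintype V] [DecidableEq V] (G : SimpleGraph V) [DecidableRel G.Adj]

lemma walk_parity {u v : V} (p : G.Walk u v) (x : V) :
    ((p.edges.countP (fun e => x ∈ e) : ℕ) : ZMod 2)
      = (if x = u then 1 else 0) + (if x = v then 1 else 0) := by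
  induction p with
  | nil => 
    simp only [SimpleGraph.Walk.edges_nil, List.countP_nil, Nat.cast_zero]
    exact (CharTwo.add_self_eq_zero _).symm
  | @cons a b c h p ih =>
    rw [SimpleGraph.Walk.edges_cons, List.countP_cons, Nat.cast_add, ih]
    have hab : a ≠ b := h.ne
    by_cases h1 : x = a
    · subst h1
      simp [hab]
      exact add_comm _ _
    · by_cases h2 : x = b
      · subst h2
        simp [h1]
        generalize (if x = c then (1 : ZMod 2) else 0) = q
        revert q; decide
      · simp [h1, h2]

lemma sum_count_eq {u v : V} (p : G.Walk u v) (x : V) :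
    ∑ e ∈ G.edgeFinset with x ∈ e, p.edges.count e = p.edges.countP (fun e => x ∈ e) := by
  rw [List.countP_eq_length_filter]
  have := Multiset.sum_count_eq_card (s := G.edgeFinset.filter (fun e => x ∈ e))
    (m := ((p.edges.filter (fun e => x ∈ e) : List (Sym2 V)) : Multiset (Sym2 V))) (by
      intro a ha
      simp only [Multiset.mem_coe, List.mem_filter, decide_eq_true_eq] at ha
      simp only [Finset.mem_filter, SimpleGraph.mem_edgeFinset]
      exact ⟨p.edges_subset_edgeSet ha.1, ha.2⟩)
  rw [Multiset.coe_card] at this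
  rw [← this]
  refine Finset.sum_congr rfl fun e he => ?_
  rw [Multiset.coe_count, List.count_filter]
  simpa using (Finset.mem_filter.1 he).2

lemma sum_count_all {u v : V} (p : G.Walk u v) :
    ∑ e ∈ G.edgeFinset, p.edges.count e = p.length := by
  have := Multiset.sum_count_eq_card (s := G.edgeFinset)
    (m := (p.edges : Multiset (Sym2 V))) (by
      intro a ha
      rw [SimpleGraph.mem_edgeFinset]
      exact p.edges_subset_edgeSet ha)
  simpa using this

lemma euler_close (m : Sym2 V → ℕ)
    (hev : ∀ x, Even (∑ e ∈ G.edgeFinset with x ∈ e, m e)) :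
    ∀ (n : ℕ) (u v : V) (p : G.Walk u v), 1 ≤ p.length → (∀ e, p.edges.count e ≤ m e) →
      ∑ e ∈ G.edgeFinset, m e ≤ n + p.length →
      ∃ q : G.Walk u u, 1 ≤ q.length ∧ ∀ e, q.edges.count e ≤ m e := by
  intro n
  induction n with
  | zero =>
    intro u v p h1 hc hn
    by_cases huv : u = v
    · subst huv; exact ⟨p, h1, hc⟩
    exfalso
    have hle : ∀ e ∈ G.edgeFinset, p.edges.count e = m e := by
      refine (Finset.sum_eq_sum_iff_of_le (fun e _ => hc e)).1 ?_
      apply le_antisymm (Finset.sum_le_sum fun e _ => hc e)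
      rw [sum_count_all]; omega
    have h2 := walk_parity G p v
    rw [← sum_count_eq, Finset.sum_congr rfl
      (fun e he => hle e (Finset.mem_filter.1 he).1)] at h2
    rw [(ZMod.natCast_eq_zero_iff_even).2 (hev v)] at h2
    simp [Ne.symm huv] at h2
  | succ n ih =>
    intro u v p h1 hc hn
    by_cases huv : u = v
    · subst huv; exact ⟨p, h1, hc⟩
    have hex : ∃ e ∈ G.edgeFinset, v ∈ e ∧ p.edges.count e < m e := by
      by_contra hcon
      push Not at hcon
      have h2 := walk_parity G p v
      rw [← sum_count_eq, Finset.sum_congr rfl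
        (fun e he => le_antisymm (hc e) (hcon e (Finset.mem_filter.1 he).1
          (Finset.mem_filter.1 he).2))] at h2
      rw [(ZMod.natCast_eq_zero_iff_even).2 (hev v)] at h2
      simp [Ne.symm huv] at h2
    obtain ⟨e, he, hve, hlt⟩ := hex
    obtain ⟨z, rfl⟩ := Sym2.mem_iff_exists.1 hve
    have hadj : G.Adj v z := by simpa using he
    refine ih u z (p.concat hadj) (by simp) ?_ (by simp; omega)
    intro f
    rw [SimpleGraph.Walk.edges_concat, List.concat_eq_append, List.count_append]
    by_cases hf : f = s(v, z)
    · subst hf; simp; omega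
    · rw [List.count_singleton]
      have := hc f
      simp [Ne.symm hf]; exact this

lemma euler_span (m : Sym2 V → ℕ)
    (hev : ∀ x, Even (∑ e ∈ G.edgeFinset with x ∈ e, m e))
    (hcon : ∀ S : Set V, (∃ x, x ∈ S) → (∃ y, y ∉ S) →
      ∃ x y, x ∈ S ∧ y ∉ S ∧ G.Adj x y ∧ 0 < m s(x, y)) :
    ∀ (n : ℕ) (u : V) (p : G.Walk u u), (∀ e, p.edges.count e ≤ m e) →
      ∑ e ∈ G.edgeFinset, m e ≤ n + p.length →
      ∃ (v : V) (q : G.Walk v v), (∀ x, x ∈ q.support) ∧ ∀ e, q.edges.count e ≤ m e := by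
  intro n
  induction n using Nat.strong_induction_on with
  | _ n ih =>
  intro u p hc hn
  by_cases hsp : ∀ x, x ∈ p.support
  · exact ⟨u, p, hsp, hc⟩
  push Not at hsp
  obtain ⟨x, y, hx, hy, hadj, hm⟩ := hcon {x | x ∈ p.support} ⟨u, p.start_mem_support⟩ hsp
  have hx' : x ∈ p.support := hx
  have hy' : y ∉ p.support := hy
  have hcr : ∀ e, (p.rotate x hx').edges.count e = p.edges.count e := fun e =>
    (p.rotate_edges x hx').perm.count_eq e
  have h0 : p.edges.count s(x, y) = 0 := by
    rw [List.count_eq_zero]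
    intro h
    exact hy' (p.snd_mem_support_of_mem_edges h)
  obtain ⟨q, hq1, hqc⟩ := euler_close G (fun e => m e - p.edges.count e) (by
      intro z
      have h1 : ∑ e ∈ G.edgeFinset with z ∈ e, (m e - p.edges.count e)
          = ∑ e ∈ G.edgeFinset with z ∈ e, m e - p.edges.countP (fun e => z ∈ e) := by
        rw [← sum_count_eq, Finset.sum_tsub_distrib _ (fun e _ => hc e)]
      rw [h1]
      refine (hev z).tsub ?_
      rw [← ZMod.natCast_eq_zero_iff_even, walk_parity]
      exact CharTwo.add_self_eq_zero _)
    (∑ e ∈ G.edgeFinset, (m e - p.edges.count e)) x y hadj.toWalk (by simp) (by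
      intro e
      by_cases he : e = s(x, y)
      · subst he; simp; omega
      · rw [List.count_eq_zero.2]
        · omega
        · simpa using he) (by omega)
  have hlen : (p.rotate x hx').length = p.length := by
    rw [← SimpleGraph.Walk.length_edges, ← SimpleGraph.Walk.length_edges]
    exact (p.rotate_edges x hx').perm.length_eq
  have hc' : ∀ e, ((p.rotate x hx').append q).edges.count e ≤ m e := by
    intro e
    rw [SimpleGraph.Walk.edges_append, List.count_append, hcr]
    have := hqc e
    have := hc e
    omega
  have htot : ((p.rotate x hx').append q).length ≤ ∑ e ∈ G.edgeFinset, m e := by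
    rw [← sum_count_all]
    exact Finset.sum_le_sum fun e _ => hc' e
  rw [SimpleGraph.Walk.length_append, hlen] at htot
  refine ih (n - q.length) (by omega) x _ hc' ?_
  rw [SimpleGraph.Walk.length_append, hlen]
  omega

end Euler

section Split
set_option linter.unusedSectionVars false
variable {V : Type*} [Fintype V] [DecidableEq V] (G : SimpleGraph V) [DecidableRel G.Adj]
  (P : Finset (Finset (Sym2 V))) (c : {p // p ∈ P} → V) (a b : Sym2 V → V)

open Classical in
/-- the end of `e` at `x` in the split graph. -/
noncomputable def splitEnd (e : Sym2 V) (x : V) : V ⊕ {p // p ∈ P} :=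
  if h : ∃ p : {p // p ∈ P}, e ∈ p.1 ∧ c p = x then Sum.inr h.choose else Sum.inl x

/-- first end map of the split graph. -/
noncomputable def splitS : ({e // e ∈ G.edgeFinset} ⊕ {p // p ∈ P}) → V ⊕ {p // p ∈ P} :=
  Sum.elim (fun e => splitEnd P c e.1 (a e.1)) (fun p => Sum.inr p)

/-- second end map of the split graph. -/
noncomputable def splitT : ({e // e ∈ G.edgeFinset} ⊕ {p // p ∈ P}) → V ⊕ {p // p ∈ P} :=
  Sum.elim (fun e => splitEnd P c e.1 (b e.1)) (fun p => Sum.inl (c p))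

lemma splitEnd_cases (e : Sym2 V) (x : V) : splitEnd P c e x = Sum.inl x ∨
    ∃ p : {p // p ∈ P}, e ∈ p.1 ∧ c p = x ∧ splitEnd P c e x = Sum.inr p := by
  unfold splitEnd
  split_ifs with h
  · exact Or.inr ⟨h.choose, h.choose_spec.1, h.choose_spec.2, rfl⟩
  · exact Or.inl rfl

lemma splitEnd_eq_inr (hdisj : ∀ p ∈ P, ∀ q ∈ P, p ≠ q → Disjoint p q) (e : Sym2 V) (x : V)
    (p : {p // p ∈ P}) : splitEnd P c e x = Sum.inr p ↔ e ∈ p.1 ∧ c p = x := by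
  have huniq : ∀ q : {p // p ∈ P}, e ∈ q.1 → e ∈ p.1 → q = p := by
    intro q h1 h2
    by_contra hne
    exact Finset.disjoint_left.1 (hdisj q.1 q.2 p.1 p.2 (fun h => hne (Subtype.ext h))) h1 h2
  constructor
  · intro h
    rcases splitEnd_cases P c e x with h1 | ⟨q, hq, hc, h1⟩
    · rw [h1] at h; cases h
    · rw [h1] at h; cases h; exact ⟨hq, hc⟩
  · rintro ⟨h1, h2⟩
    unfold splitEnd
    rw [dif_pos ⟨p, h1, h2⟩]
    congr 1
    exact huniq _ (Exists.choose_spec (⟨p, h1, h2⟩ :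
      ∃ p : {p // p ∈ P}, e ∈ p.1 ∧ c p = x)).1 h1

lemma split_bridgeless
    (hcard : 3 ≤ Fintype.card V)
    (h2vc : ∀ v : V, (G.induce {u : V | u ≠ v}).Connected)
    (hPpair : ∀ p ∈ P, p.card = 2)
    (hPE : ∀ p ∈ P, p ⊆ G.edgeFinset)
    (hdisj : ∀ p ∈ P, ∀ q ∈ P, p ≠ q → Disjoint p q)
    (hab : ∀ e, e = s(a e, b e))
    (hc : ∀ p : {p // p ∈ P}, (∀ e ∈ p.1, c p ∈ e) ∧ 3 ≤ G.degree (c p))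
    (X : Finset (V ⊕ {p // p ∈ P})) :
    (tjCut (splitS G P c a) (splitT G P c b) X Finset.univ).card ≠ 1 := by
  classical
  intro h1
  obtain ⟨i, hi⟩ := Finset.card_eq_one.1 h1
  have hi' : ∀ j, ¬ (splitS G P c a j ∈ X ↔ splitT G P c b j ∈ X) ↔ j = i := by
    intro j
    have : j ∈ tjCut (splitS G P c a) (splitT G P c b) X Finset.univ ↔ j = i := by
      rw [hi, Finset.mem_singleton]
    rw [← this]; simp [tjCut]
  have hno : ∀ j, j ≠ i → (splitS G P c a j ∈ X ↔ splitT G P c b j ∈ X) := by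
    intro j hj
    by_contra h
    exact hj ((hi' j).1 h)
  have hyes : ¬ (splitS G P c a i ∈ X ↔ splitT G P c b i ∈ X) := (hi' i).2 rfl
  have hsat : ∀ (e : Sym2 V) (x : V),
      (∀ p : {p // p ∈ P}, e ∈ p.1 → c p = x → Sum.inr p ≠ i) →
      (splitEnd P c e x ∈ X ↔ Sum.inl x ∈ X) := by
    intro e x h
    rcases splitEnd_cases P c e x with h2 | ⟨p, hp, hcp, h2⟩
    · rw [h2]
    · rw [h2]
      have := hno (Sum.inr p) (h p hp hcp)
      simp only [splitS, splitT, Sum.elim_inr, hcp] at this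
      exact this
  -- an edge of G, in split form
  have hedge : ∀ x y (hxy : G.Adj x y), Sum.inl ⟨s(x, y), by simpa using hxy⟩ ≠ i →
      (splitEnd P c s(x, y) x ∈ X ↔ splitEnd P c s(x, y) y ∈ X) := by
    intro x y hxy hne
    have h3 := hno _ hne
    simp only [splitS, splitT, Sum.elim_inl] at h3
    have h4 := hab s(x, y)
    rcases Sym2.eq_iff.1 h4 with ⟨h5, h6⟩ | ⟨h5, h6⟩
    · rw [← h5, ← h6] at h3; exact h3
    · rw [← h5, ← h6] at h3; exact h3.symm
  -- crossing in G - v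
  have hcross : ∀ (v x y : V) (Y : Set V), x ≠ v → y ≠ v → x ∈ Y → y ∉ Y →
      ∃ x' y', x' ≠ v ∧ y' ≠ v ∧ x' ∈ Y ∧ y' ∉ Y ∧ G.Adj x' y' := by
    intro v x y Y hx hy hxY hyY
    obtain ⟨p⟩ := (h2vc v).preconnected ⟨x, hx⟩ ⟨y, hy⟩
    obtain ⟨d, _, hd1, hd2⟩ := p.exists_boundary_dart {z | z.1 ∈ Y} hxY hyY
    exact ⟨d.fst.1, d.snd.1, d.fst.2, d.snd.2, hd1, hd2, d.adj⟩
  rcases i with ⟨e0, he0⟩ | p0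
  · -- a genuine edge of G
    have hsat' : ∀ e x, (splitEnd P c e x ∈ X ↔ Sum.inl x ∈ X) := fun e x =>
      hsat e x (fun p _ _ h => by cases h)
    simp only [splitS, splitT, Sum.elim_inl, hsat'] at hyes
    have hedge' : ∀ x y, G.Adj x y → s(x, y) ≠ e0 → (Sum.inl x ∈ X ↔ Sum.inl y ∈ X) := by
      intro x y hxy hne
      have := hedge x y hxy (fun h => hne (by simpa using h))
      rwa [hsat', hsat'] at this
    have key : ∀ u v : V, e0 = s(u, v) → Sum.inl u ∈ X → Sum.inl v ∉ X → False := by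
      intro u v he hu hv
      have huv : u ≠ v := by rintro rfl; exact hv hu
      obtain ⟨z, hz⟩ : ∃ z, z ∉ ({u, v} : Finset V) := by
        by_contra hcon
        push Not at hcon
        have h2 : Fintype.card V ≤ ({u, v} : Finset V).card := by
          rw [← Finset.card_univ]
          exact Finset.card_le_card fun z _ => hcon z
        have h3 := Finset.card_le_two (a := u) (b := v)
        omega
      simp only [Finset.mem_insert, Finset.mem_singleton, not_or] at hz
      by_cases hzX : Sum.inl z ∈ X
      · obtain ⟨x', y', hx', hy', h3, h4, h5⟩ :=
          hcross u z v {x | Sum.inl x ∈ X} hz.1 huv.symm hzX hv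
        refine h4 ((hedge' x' y' h5 ?_).1 h3)
        rw [he]
        intro h
        rcases Sym2.eq_iff.1 h with h | h
        · exact hx' h.1
        · exact hy' h.2
      · obtain ⟨x', y', hx', hy', h3, h4, h5⟩ :=
          hcross v u z {x | Sum.inl x ∈ X} huv hz.2 hu hzX
        refine h4 ((hedge' x' y' h5 ?_).1 h3)
        rw [he]
        intro h
        rcases Sym2.eq_iff.1 h with h | h
        · exact hy' h.2
        · exact hx' h.1
    by_cases h3 : Sum.inl (a e0) ∈ X
    · exact key _ _ (hab e0) h3 (fun h4 => hyes (by simp [h3, h4]))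
    · exact key (b e0) (a e0) ((hab e0).trans Sym2.eq_swap)
        (by by_contra h4; exact hyes (by simp [h3, h4])) h3
  · -- a new edge
    simp only [splitS, splitT, Sum.elim_inr] at hyes
    have hedge' : ∀ x y (hxy : G.Adj x y),
      (splitEnd P c s(x, y) x ∈ X ↔ splitEnd P c s(x, y) y ∈ X) := fun x y hxy =>
        hedge x y hxy (by simp)
    set v := c p0 with hv
    have hsat1 : ∀ e x, x ≠ v → (splitEnd P c e x ∈ X ↔ Sum.inl x ∈ X) := by
      intro e x hx
      refine hsat e x ?_
      rintro p hp hcp h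
      cases h
      exact hx hcp.symm
    have hall : ∀ x y, x ≠ v → y ≠ v → Sum.inl x ∈ X → Sum.inl y ∈ X := by
      intro x y hx hy hxX
      by_contra hyX
      obtain ⟨x', y', hx', hy', h3, h4, h5⟩ :=
          hcross v x y {x | Sum.inl x ∈ X} hx hy hxX hyX
      have := hedge' x' y' h5
      rw [hsat1 _ _ hx', hsat1 _ _ hy'] at this
      exact h4 (this.1 h3)
    have hall' : ∀ x y, x ≠ v → y ≠ v → (Sum.inl x ∈ X ↔ Sum.inl y ∈ X) := fun x y hx hy =>
      ⟨hall x y hx hy, hall y x hy hx⟩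
    -- an edge in p0
    obtain ⟨e, he⟩ : p0.1.Nonempty := by
      rw [← Finset.card_pos, hPpair _ p0.2]; norm_num
    obtain ⟨y, hy⟩ := Sym2.mem_iff_exists.1 ((hc p0).1 e he)
    have hadj : G.Adj v y := by
      have := hPE _ p0.2 he
      rw [hy] at this
      simpa using this
    have h3 := hedge' v y hadj
    rw [hsat1 _ _ hadj.ne', ← hy, (splitEnd_eq_inr P c hdisj e v p0).2 ⟨he, rfl⟩] at h3
    -- an edge at v not in p0
    obtain ⟨x, hx, hxp⟩ : ∃ x, G.Adj v x ∧ s(v, x) ∉ p0.1 := by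
      by_contra hcon
      push Not at hcon
      have h5 : ((G.neighborFinset v).image (fun x => s(v, x))).card = G.degree v := by
        rw [Finset.card_image_of_injective, SimpleGraph.card_neighborFinset_eq_degree]
        intro x y hxy
        exact Sym2.congr_right.1 hxy
      have h6 : ((G.neighborFinset v).image (fun x => s(v, x))).card ≤ p0.1.card := by
        refine Finset.card_le_card ?_
        intro f hf
        obtain ⟨x, hx, rfl⟩ := Finset.mem_image.1 hf
        exact hcon x (by simpa using hx)
      have h7 : 3 ≤ G.degree v := (hc p0).2
      rw [h5, hPpair _ p0.2] at h6
      omega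
    have h4 := hedge' v x hx
    rw [hsat1 _ _ hx.ne', hsat _ v (by
      rintro p hp _ h
      cases h
      exact hxp hp)] at h4
    exact hyes (h3.trans ((hall' y x hadj.ne' hx.ne').trans h4.symm))

end Split

section Final
set_option linter.unusedSectionVars false
variable {V : Type*} [Fintype V] [DecidableEq V] (G : SimpleGraph V) [DecidableRel G.Adj]
  (P : Finset (Finset (Sym2 V))) (c : {p // p ∈ P} → V) (a b : Sym2 V → V)

/-- incidence of an edge of the split graph with a new vertex. -/
def splitTouch (p : {p // p ∈ P}) : ({e // e ∈ G.edgeFinset} ⊕ {p // p ∈ P}) → Prop :=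
  Sum.elim (fun e => e.1 ∈ p.1) (fun q => q = p)

instance (p : {p // p ∈ P}) : DecidablePred (splitTouch G P p) := by
  intro x
  rcases x with e | q
  · exact inferInstanceAs (Decidable (e.1 ∈ p.1))
  · exact inferInstanceAs (Decidable (q = p))

lemma splitTouch_inl (p : {p // p ∈ P}) (e : {e // e ∈ G.edgeFinset}) :
    splitTouch G P p (Sum.inl e) ↔ e.1 ∈ p.1 := Iff.rfl

lemma splitTouch_inr (p q : {p // p ∈ P}) :
    splitTouch G P p (Sum.inr q) ↔ q = p := Iff.rfl

/-- the original edges in an edge set of the split graph. -/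
def splitOrig (J : Finset ({e // e ∈ G.edgeFinset} ⊕ {p // p ∈ P})) : Finset (Sym2 V) :=
  J.toLeft.map (Function.Embedding.subtype _)

lemma splitOrig_sum {M : Type*} [AddCommMonoid M]
    (J : Finset ({e // e ∈ G.edgeFinset} ⊕ {p // p ∈ P})) (f : Sym2 V → M) :
    ∑ e ∈ splitOrig G P J, f e = ∑ x ∈ J, Sum.elim (fun e => f e.1) (fun _ => 0) x := by
  classical
  unfold splitOrig
  rw [Finset.sum_map]
  have h : ∀ (J : Finset ({e // e ∈ G.edgeFinset} ⊕ {p // p ∈ P}))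
      (g : ({e // e ∈ G.edgeFinset} ⊕ {p // p ∈ P}) → M),
      ∑ x ∈ J, g x = ∑ x, if x ∈ J then g x else 0 := by
    intro C g
    rw [Finset.sum_ite_mem, Finset.univ_inter]
  rw [h, Fintype.sum_sum_type]
  simp only [Sum.elim_inl, Sum.elim_inr, ite_self, Finset.sum_const_zero, add_zero]
  rw [← Finset.sum_filter]
  refine Finset.sum_congr ?_ fun _ _ => rfl
  ext e; simp

lemma splitOrig_univ : splitOrig G P Finset.univ = G.edgeFinset := by
  ext e; simp [splitOrig]

lemma splitOrig_sub (J : Finset ({e // e ∈ G.edgeFinset} ⊕ {p // p ∈ P})) :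
    splitOrig G P J ⊆ G.edgeFinset := by
  intro e he
  rw [splitOrig, Finset.mem_map] at he
  obtain ⟨f, _, rfl⟩ := he
  exact f.2

lemma split_bd_inr (hPE : ∀ p ∈ P, p ⊆ G.edgeFinset)
    (hdisj : ∀ p ∈ P, ∀ q ∈ P, p ≠ q → Disjoint p q)
    (hab : ∀ e, e = s(a e, b e))
    (hc : ∀ p : {p // p ∈ P}, (∀ e ∈ p.1, c p ∈ e))
    (F : Finset ({e // e ∈ G.edgeFinset} ⊕ {p // p ∈ P})) (p : {p // p ∈ P}) :
    tjBd (splitS G P c a) (splitT G P c b) F (Sum.inr p)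
      = ((F.filter (splitTouch G P p)).card : ZMod 2) := by
  unfold tjBd
  rw [Finset.sum_apply, Finset.card_filter, Nat.cast_sum]
  refine Finset.sum_congr rfl fun x _ => ?_
  rw [Pi.add_apply, Pi.single_apply, Pi.single_apply]
  rcases x with ⟨e, he⟩ | q
  · have hs : (Sum.inr p = splitS G P c a (Sum.inl ⟨e, he⟩)) ↔ (e ∈ p.1 ∧ c p = a e) :=
      eq_comm.trans (splitEnd_eq_inr P c hdisj e (a e) p)
    have ht : (Sum.inr p = splitT G P c b (Sum.inl ⟨e, he⟩)) ↔ (e ∈ p.1 ∧ c p = b e) :=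
      eq_comm.trans (splitEnd_eq_inr P c hdisj e (b e) p)
    simp only [hs, ht, splitTouch_inl]
    have hne : a e ≠ b e := by
      have h1 : e ∈ G.edgeSet := by simpa using he
      rw [hab e] at h1
      exact (G.mem_edgeSet.1 h1).ne
    by_cases hep : e ∈ p.1
    · have h1 := hc p e hep
      rw [hab e, Sym2.mem_iff] at h1
      rcases h1 with h1 | h1 <;> simp [hep, h1, hne, hne.symm]
    · simp [hep]
  · simp only [splitS, splitT, Sum.elim_inr, splitTouch_inr]
    simp [eq_comm]

lemma split_parity (hab : ∀ e, e = s(a e, b e))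
    (F : Finset ({e // e ∈ G.edgeFinset} ⊕ {p // p ∈ P})) (v : V) :
    ∑ z with Sum.elim id c z = v, tjBd (splitS G P c a) (splitT G P c b) F z
      = ∑ e ∈ splitOrig G P F, (if v ∈ e then (1 : ZMod 2) else 0) := by
  have hproj : ∀ e x, Sum.elim id c (splitEnd P c e x) = x := by
    intro e x
    rcases splitEnd_cases P c e x with h2 | ⟨p, hp, hcp, h2⟩
    · rw [h2]; rfl
    · rw [h2]; exact hcp
  rw [tjBd_cut, tjCut, Finset.card_filter, Nat.cast_sum, splitOrig_sum]
  refine Finset.sum_congr rfl fun x _ => ?_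
  simp only [Finset.mem_filter, Finset.mem_univ, true_and]
  rcases x with ⟨e, he⟩ | q
  · simp only [splitS, splitT, Sum.elim_inl, hproj]
    have hne : a e ≠ b e := by
      have h1 : e ∈ G.edgeSet := by simpa using he
      rw [hab e] at h1
      exact (G.mem_edgeSet.1 h1).ne
    have hve : v ∈ e ↔ v = a e ∨ v = b e := by
      conv_lhs => rw [hab e]
      exact Sym2.mem_iff
    by_cases h1 : a e = v
    · have h2 : b e ≠ v := fun h => hne (h1.trans h.symm)
      simp [hve, h1, h2]
    · by_cases h2 : b e = v
      · simp [hve, h1, h2]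
      · simp [hve, h1, h2, Ne.symm h1, Ne.symm h2]
  · simp [splitS, splitT]

end Final

/-- A 2-vertex-connected simple graph on at least 3 vertices with a
removable pairing `(R, P)` has a spanning closed walk of length at most
`(4/3)·|E| − (2/3)·|R|`. -/
theorem spanning_closed_walk_of_removable_pairing
    {V : Type*} [Fintype V] [DecidableEq V]
    (G : SimpleGraph V) [DecidableRel G.Adj]
    (hcard : 3 ≤ Fintype.card V)
    (hconn : G.Connected)
    (h2vc : ∀ v : V, (G.induce {u : V | u ≠ v}).Connected)
    (R : Finset (Sym2 V)) (P : Finset (Finset (Sym2 V)))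
    (hR : R ⊆ G.edgeFinset)
    (hPpair : ∀ p ∈ P, p.card = 2)
    (hPsub : ∀ p ∈ P, p ⊆ R)
    (hPdisj : ∀ p ∈ P, ∀ q ∈ P, p ≠ q → Disjoint p q)
    (hPdeg : ∀ p ∈ P, ∃ v : V, (∀ e ∈ p, v ∈ e) ∧ 3 ≤ G.degree v)
    (hPdel : ∀ D : Finset (Sym2 V), D ⊆ R → (∀ p ∈ P, (D ∩ p).card ≤ 1) →
      (G.deleteEdges (D : Set (Sym2 V))).Connected) :
    ∃ (v : V) (w : G.Walk v v), (∀ u : V, u ∈ w.support) ∧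
      (w.length : ℝ) ≤ 4 / 3 * G.edgeFinset.card - 2 / 3 * R.card := by
  have hends : ∀ e : Sym2 V, ∃ x : V × V, e = s(x.1, x.2) := fun e =>
    Sym2.inductionOn e fun x y => ⟨(x, y), rfl⟩
  choose ab hab using hends
  have hcen : ∀ p : {p // p ∈ P}, ∃ v : V, (∀ e ∈ p.1, v ∈ e) ∧ 3 ≤ G.degree v :=
    fun p => hPdeg p.1 p.2
  choose c hc using hcen
  have hPE : ∀ p ∈ P, p ⊆ G.edgeFinset := fun p hp => (hPsub p hp).trans hR
  set f0 : Sym2 V → ℤ := fun e => if e ∈ R then -1 else 1 with hf0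
  set K : ℤ := G.edgeFinset.card + 1 with hK
  obtain ⟨J, hJb, hJw⟩ := tj_third (splitS G P c (fun e => (ab e).1))
    (splitT G P c (fun e => (ab e).2))
    (split_bridgeless G P c _ _ hcard h2vc hPpair hPE hPdisj hab hc)
    (fun x => Sum.elim (fun e => f0 e.1) (fun _ => 0) x
      + K * ((Finset.univ.filter (fun p => splitTouch G P p x)).card : ℤ))
  -- rewrite the weight inequality
  have hcount : ∀ F : Finset ({e // e ∈ G.edgeFinset} ⊕ {p // p ∈ P}),
      ∑ x ∈ F, ((Finset.univ.filter (fun p => splitTouch G P p x)).card : ℤ)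
        = ∑ p, ((F.filter (splitTouch G P p)).card : ℤ) := by
    intro F
    simp only [Finset.card_filter, Nat.cast_sum]
    rw [Finset.sum_comm]
  rw [Finset.sum_add_distrib, Finset.sum_add_distrib, ← splitOrig_sum, ← splitOrig_sum,
    ← Finset.mul_sum, ← Finset.mul_sum, hcount, hcount, splitOrig_univ] at hJw
  set J0 := splitOrig G P J with hJ0
  have hJ0E : J0 ⊆ G.edgeFinset := splitOrig_sub G P J
  have hn3 : ∀ p, (Finset.univ.filter (splitTouch G P p)).card = 3 := by
    intro p
    rw [Finset.card_filter, Fintype.sum_sum_type]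
    have h1 : ∑ e : {e // e ∈ G.edgeFinset}, (if splitTouch G P p (Sum.inl e) then 1 else 0)
        = p.1.card := by
      rw [← Finset.card_filter, ← Finset.card_map (Function.Embedding.subtype _)]
      congr 1
      ext e
      simp only [Finset.mem_map, Finset.mem_filter, Finset.mem_univ, true_and, splitTouch_inl,
        Function.Embedding.subtype_apply, Subtype.exists, exists_and_right,
        exists_eq_right]
      constructor
      · rintro ⟨_, h⟩; exact h
      · intro h; exact ⟨hPE _ p.2 h, h⟩
    rw [h1, hPpair _ p.2]
    simp [splitTouch_inr]
  have hodd : ∀ p, Odd (J.filter (splitTouch G P p)).card := by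
    intro p
    have h1 := congrFun hJb (Sum.inr p)
    rw [split_bd_inr G P c _ _ hPE hPdisj hab (fun p => (hc p).1),
      split_bd_inr G P c _ _ hPE hPdisj hab (fun p => (hc p).1), hn3] at h1
    rw [← ZMod.natCast_eq_one_iff_odd, h1]
    decide
  have hWlow : -(G.edgeFinset.card : ℤ) ≤ ∑ e ∈ J0, f0 e := by
    have h1 : ∑ e ∈ J0, (-1 : ℤ) ≤ ∑ e ∈ J0, f0 e := by
      refine Finset.sum_le_sum fun e _ => ?_
      simp only [hf0]; split_ifs <;> norm_num
    have h2 := Finset.card_le_card hJ0E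
    simp only [Finset.sum_const, nsmul_eq_mul] at h1
    omega
  have hWtot : ∑ e ∈ G.edgeFinset, f0 e = G.edgeFinset.card - 2 * R.card := by
    have h1 : ∀ e, f0 e = 1 - 2 * (if e ∈ R then 1 else 0) := by
      intro e; simp only [hf0]; split_ifs <;> norm_num
    simp only [h1, Finset.sum_sub_distrib, ← Finset.mul_sum, Finset.sum_ite_mem,
      Finset.inter_eq_right.2 hR]
    simp
  simp only [hn3] at hJw
  have hS : ∑ p : {p // p ∈ P}, ((J.filter (splitTouch G P p)).card : ℤ)
      = ∑ p : {p // p ∈ P}, (((J.filter (splitTouch G P p)).card : ℤ) - 1)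
        + ∑ p : {p // p ∈ P}, (1 : ℤ) := by
    rw [← Finset.sum_add_distrib]; simp
  have hS3 : ∑ p : {p // p ∈ P}, ((3 : ℕ) : ℤ) = 3 * ∑ p : {p // p ∈ P}, (1 : ℤ) := by
    rw [Finset.mul_sum]; simp
  rw [hS, hS3] at hJw
  have hterm : ∀ p : {p // p ∈ P}, 0 ≤ ((J.filter (splitTouch G P p)).card : ℤ) - 1 := by
    intro p
    obtain ⟨k, hk⟩ := hodd p
    omega
  have hSnn : 0 ≤ ∑ p : {p // p ∈ P}, (((J.filter (splitTouch G P p)).card : ℤ) - 1) :=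
    Finset.sum_nonneg fun p _ => hterm p
  have hKpos : 0 < K := by omega
  have hone : ∀ p : {p // p ∈ P}, (J.filter (splitTouch G P p)).card ≤ 1 := by
    intro p
    by_contra hcon
    have h1 : (2 : ℤ) ≤ ((J.filter (splitTouch G P p)).card : ℤ) - 1 := by
      obtain ⟨k, hk⟩ := hodd p
      omega
    have h2 := Finset.single_le_sum (f := fun p : {p // p ∈ P} =>
      ((J.filter (splitTouch G P p)).card : ℤ) - 1) (fun p _ => hterm p) (Finset.mem_univ p)
    have h3 : (2 : ℤ) ≤ ∑ p : {p // p ∈ P}, (((J.filter (splitTouch G P p)).card : ℤ) - 1) :=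
      h1.trans h2
    nlinarith
  have hmainW : 3 * ∑ e ∈ J0, f0 e ≤ G.edgeFinset.card - 2 * R.card := by
    rw [← hWtot]
    have := mul_nonneg hKpos.le hSnn
    linarith
  -- deleted edges
  have hDcon := hPdel (J0.filter (fun e => e ∈ R)) (fun e he => (Finset.mem_filter.1 he).2) (by
    intro p hp
    have h1 : (J0.filter (fun e => e ∈ p)).card ≤ 1 := by
      rw [Finset.card_filter, hJ0, splitOrig_sum]
      refine le_trans ?_ (hone ⟨p, hp⟩)
      rw [Finset.card_filter]
      refine Finset.sum_le_sum fun x _ => ?_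
      rcases x with e | q
      · simp [splitTouch_inl]
      · simp
    refine le_trans (Finset.card_le_card ?_) h1
    intro e he
    rw [Finset.mem_inter, Finset.mem_filter] at he
    exact Finset.mem_filter.2 ⟨he.1.1, he.2⟩)
  -- the Eulerian multigraph
  set m : Sym2 V → ℕ := fun e => if e ∈ J0 then (if e ∈ R then 0 else 2) else 1 with hm
  have hev : ∀ x, Even (∑ e ∈ G.edgeFinset with x ∈ e, m e) := by
    intro x
    have h1 := split_parity G P c _ _ hab J x
    rw [hJb, split_parity G P c _ _ hab, splitOrig_univ, ← hJ0] at h1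
    rw [← ZMod.natCast_eq_zero_iff_even, Finset.sum_filter, Nat.cast_sum]
    have h2 : ∑ e ∈ J0, (if x ∈ e then (1 : ZMod 2) else 0)
        = ∑ e ∈ G.edgeFinset, if e ∈ J0 then (if x ∈ e then (1 : ZMod 2) else 0) else 0 := by
      rw [Finset.sum_ite_mem, Finset.inter_eq_right.2 hJ0E]
    have h3 : ∑ e ∈ G.edgeFinset, (((if x ∈ e then m e else 0 : ℕ)) : ZMod 2)
        = ∑ e ∈ G.edgeFinset, (if x ∈ e then (1 : ZMod 2) else 0)
          + ∑ e ∈ J0, (if x ∈ e then (1 : ZMod 2) else 0) := by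
      rw [h2, ← Finset.sum_add_distrib]
      refine Finset.sum_congr rfl fun e _ => ?_
      simp only [hm]
      split_ifs <;> decide
    rw [h3, h1]
    exact CharTwo.add_self_eq_zero _
  have hmcon : ∀ S : Set V, (∃ x, x ∈ S) → (∃ y, y ∉ S) →
      ∃ x y, x ∈ S ∧ y ∉ S ∧ G.Adj x y ∧ 0 < m s(x, y) := by
    rintro S ⟨x, hx⟩ ⟨y, hy⟩
    obtain ⟨p⟩ := hDcon.preconnected x y
    obtain ⟨d, _, hd1, hd2⟩ := p.exists_boundary_dart S hx hy
    have hadj := d.adj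
    rw [SimpleGraph.deleteEdges_adj] at hadj
    refine ⟨d.fst, d.snd, hd1, hd2, hadj.1, ?_⟩
    have h3 := hadj.2
    simp only [Finset.coe_filter, Set.mem_ofPred_eq, not_and] at h3
    simp only [hm]
    split_ifs with h4 h5
    · exact absurd h5 (h3 h4)
    · norm_num
    · norm_num
  obtain ⟨v0⟩ := hconn.nonempty
  obtain ⟨v, q, hq, hqc⟩ := euler_span G m hev hmcon _ v0 SimpleGraph.Walk.nil (by simp) le_self_add
  refine ⟨v, q, hq, ?_⟩
  have hlen : q.length ≤ ∑ e ∈ G.edgeFinset, m e := by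
    rw [← sum_count_all]
    exact Finset.sum_le_sum fun e _ => hqc e
  have hmsum : ((∑ e ∈ G.edgeFinset, m e : ℕ) : ℤ) = G.edgeFinset.card + ∑ e ∈ J0, f0 e := by
    have h2 : ∑ e ∈ J0, f0 e = ∑ e ∈ G.edgeFinset, if e ∈ J0 then f0 e else 0 := by
      rw [Finset.sum_ite_mem, Finset.inter_eq_right.2 hJ0E]
    have h3 : (G.edgeFinset.card : ℤ) = ∑ e ∈ G.edgeFinset, (1 : ℤ) := by simp
    rw [h2, h3, ← Finset.sum_add_distrib, Nat.cast_sum]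
    refine Finset.sum_congr rfl fun e _ => ?_
    simp only [hm, hf0]
    split_ifs <;> norm_num
  have hfin : 3 * (q.length : ℤ) ≤ 4 * G.edgeFinset.card - 2 * R.card := by
    have : (q.length : ℤ) ≤ ((∑ e ∈ G.edgeFinset, m e : ℕ) : ℤ) := by exact_mod_cast hlen
    linarith
  have hfin' : 3 * (q.length : ℝ) ≤ 4 * G.edgeFinset.card - 2 * R.card := by
    exact_mod_cast hfin
  linarith
end

section
/- Let G = (V,E) be a 2-vertex-connected simple graph on at least 3 vertices equipped with a removable pairing (R,P). Then there exist finitely many subsets M_1, …, M_k of E and nonnegative reals p_1, …, p_k summing to 1 such that: (a) for every edge e ∈ E, the sum of p_i over all i with e ∈ M_i equals 1/3; (b) for each i, M_i contains at most one edge from every pair of P; and (c) for each i and every vertex v ∈ V, deg_G(v) + |{e ∈ M_i : v is an endpoint of e}| is even. -/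
open SimpleGraph


set_option linter.unusedSectionVars false

namespace TJoin

section basic
variable {V E : Type*} [Fintype V] [DecidableEq V] [Fintype E] [DecidableEq E]

/-- Mod 2 boundary of an edge set in a multigraph with end maps `s`, `t`. -/
def bd (s t : E → V) (M : Finset E) : V → ZMod 2 :=
  ∑ e ∈ M, (Pi.single (s e) 1 + Pi.single (t e) 1)

/-- Edges crossing a cut. -/
def cut (s t : E → V) (S : V → ZMod 2) : Finset E :=
  Finset.univ.filter (fun e => S (s e) ≠ S (t e))

/-- Non-loop edges at `b`. -/
def star (s t : E → V) (b : V) : Finset E := cut s t (Pi.single b 1)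

lemma zmod2_add_self (x : ZMod 2) : x + x = 0 := by
  revert x; decide

lemma fn_add_self (x : V → ZMod 2) : x + x = 0 := by
  ext v; exact zmod2_add_self _

lemma zmod2_cases (x : ZMod 2) : x = 0 ∨ x = 1 := by
  revert x; decide

lemma sum_symmDiff_two {A : Type*} [AddCommGroup A] (h : ∀ x : A, x + x = 0) (g : E → A)
    (M N : Finset E) : ∑ e ∈ symmDiff M N, g e = ∑ e ∈ M, g e + ∑ e ∈ N, g e := by
  have h1 : ∑ e ∈ symmDiff M N, g e = ∑ e ∈ M \ N, g e + ∑ e ∈ N \ M, g e := by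
    rw [symmDiff_def, Finset.sup_eq_union, Finset.sum_union]
    exact disjoint_sdiff_sdiff
  have h2 := Finset.sum_inter_add_sum_sdiff M N g
  have h3 := Finset.sum_inter_add_sum_sdiff N M g
  rw [Finset.inter_comm] at h3
  rw [h1, ← h2, ← h3]
  have := h (∑ e ∈ M ∩ N, g e)
  calc _ = (∑ e ∈ M ∩ N, g e + ∑ e ∈ M ∩ N, g e) + (∑ e ∈ M \ N, g e + ∑ e ∈ N \ M, g e) := by
        rw [this, zero_add]
    _ = _ := by abel

lemma bd_symmDiff (s t : E → V) (M N : Finset E) :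
    bd s t (symmDiff M N) = bd s t M + bd s t N :=
  sum_symmDiff_two fn_add_self _ _ _

lemma bd_empty (s t : E → V) : bd s t ∅ = 0 := by simp [bd]

lemma bd_singleton (s t : E → V) (e : E) :
    bd s t {e} = Pi.single (s e) 1 + Pi.single (t e) 1 := by simp [bd]

lemma pair_single (a : V) (S : V → ZMod 2) :
    ∑ v, (Pi.single a 1 : V → ZMod 2) v * S v = S a := by
  simp [Pi.single_apply]

lemma bd_pair (s t : E → V) (M : Finset E) (S : V → ZMod 2) :
    ∑ v, bd s t M v * S v = ∑ e ∈ M, (S (s e) + S (t e)) := by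
  simp only [bd, Finset.sum_apply, Finset.sum_mul]
  rw [Finset.sum_comm]
  refine Finset.sum_congr rfl fun e _ => ?_
  simp only [Pi.add_apply, add_mul, Finset.sum_add_distrib, pair_single]

lemma sum_cut (s t : E → V) (M : Finset E) (S : V → ZMod 2) :
    ∑ e ∈ M, (S (s e) + S (t e)) = ((M ∩ cut s t S).card : ZMod 2) := by
  rw [Finset.card_eq_sum_ones, Nat.cast_sum, ← Finset.sum_subset (s₁ := M ∩ cut s t S) (s₂ := M)]
  · refine Finset.sum_congr rfl fun e he => ?_
    have : S (s e) ≠ S (t e) := by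
      simp only [cut, Finset.mem_inter, Finset.mem_filter] at he; exact he.2.2
    revert this
    generalize S (s e) = x; generalize S (t e) = y
    revert x y; decide
  · exact Finset.inter_subset_left
  · intro e he hne
    have : S (s e) = S (t e) := by
      by_contra h
      exact hne (by simp [cut, he, h])
    rw [this, zmod2_add_self]

lemma bd_apply (s t : E → V) (M : Finset E) (b : V) :
    bd s t M b = ((M ∩ star s t b).card : ZMod 2) := by
  rw [star, ← sum_cut, ← bd_pair]
  simp [Pi.single_apply]

lemma mem_star {s t : E → V} {b : V} {e : E} :
    e ∈ star s t b ↔ (s e = b ∧ t e ≠ b) ∨ (s e ≠ b ∧ t e = b) := by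
  simp only [star, cut, Finset.mem_filter, Finset.mem_univ, true_and, Pi.single_apply]
  by_cases h1 : s e = b <;> by_cases h2 : t e = b <;> simp [h1, h2]

/-- The far end. -/
def far (s t : E → V) (b : V) (e : E) : V := if s e = b then t e else s e

lemma far_ne {s t : E → V} {b : V} {e : E} (h : e ∈ star s t b) : far s t b e ≠ b := by
  rw [mem_star] at h
  unfold far
  split_ifs with h1
  · rcases h with h | h
    · exact h.2
    · exact absurd h1 h.1
  · exact h1

lemma bd_star {s t : E → V} {b : V} {e : E} (h : e ∈ star s t b) (S : V → ZMod 2) :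
    S (s e) + S (t e) = S b + S (far s t b e) := by
  rw [mem_star] at h
  unfold far
  rcases h with h | h
  · simp [h.1]
  · simp [h.1, h.2, add_comm]

lemma single_star {s t : E → V} {b : V} {e : E} (h : e ∈ star s t b) :
    bd s t {e} = Pi.single b 1 + Pi.single (far s t b e) 1 := by
  rw [bd_singleton]
  rw [mem_star] at h
  unfold far
  rcases h with h | h
  · simp [h.1]
  · simp [h.1, h.2, add_comm]

lemma exists_even_sub (s t : E → V) (D : Finset E) (a b : V)
    (hD : bd s t D = Pi.single a 1 + Pi.single b 1) (h2 : 2 ≤ (D ∩ star s t b).card) :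
    ∃ C ⊆ D, bd s t C = 0 ∧ (C ∩ star s t b).card = 2 := by
  classical
  set D0 := D \ star s t b with hD0
  let Rel : V → V → Prop := fun x y => ∃ D1 ⊆ D0, bd s t D1 = Pi.single x 1 + Pi.single y 1
  have hrefl : ∀ x, Rel x x := fun x => ⟨∅, by simp, by rw [bd_empty, fn_add_self]⟩
  have hsd : ∀ {A B : Finset E}, A ⊆ D0 → B ⊆ D0 → symmDiff A B ⊆ D0 := by
    intro A B hA hB e he
    rw [Finset.mem_symmDiff] at he
    rcases he with h | h
    · exact hA h.1
    · exact hB h.1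
  have htrans : ∀ x y z, Rel x y → Rel y z → Rel x z := by
    rintro x y z ⟨A, hA, hA'⟩ ⟨B, hB, hB'⟩
    refine ⟨symmDiff A B, hsd hA hB, ?_⟩
    rw [bd_symmDiff, hA', hB']
    calc _ = Pi.single x 1 + Pi.single z 1 + (Pi.single y 1 + Pi.single y 1 : V → ZMod 2) := by abel
      _ = _ := by rw [fn_add_self, add_zero]
  have hsymm : ∀ x y, Rel x y → Rel y x := by
    rintro x y ⟨A, hA, hA'⟩
    exact ⟨A, hA, by rw [hA', add_comm]⟩
  have hedge : ∀ e ∈ D0, Rel (s e) (t e) := fun e he =>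
    ⟨{e}, by simpa using he, bd_singleton s t e⟩
  have hb : ∀ x, x ≠ b → ¬ Rel x b := by
    rintro x hx ⟨A, hA, hA'⟩
    have h1 := congrFun hA' b
    rw [bd_apply] at h1
    have : A ∩ star s t b = ∅ := by
      ext e
      simp only [Finset.mem_inter, Finset.notMem_empty, iff_false, not_and]
      intro he
      have := hA he
      rw [hD0, Finset.mem_sdiff] at this
      exact this.2
    rw [this] at h1
    simp [Ne.symm hx] at h1
  have key : ∃ f ∈ D ∩ star s t b, ∃ g ∈ D ∩ star s t b, f ≠ g ∧
      Rel (far s t b f) (far s t b g) := by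
    by_contra hno
    push Not at hno
    have ha : ∀ f ∈ D ∩ star s t b, Rel (far s t b f) a := by
      intro f hf
      let S : V → ZMod 2 := fun y => if Rel (far s t b f) y then 1 else 0
      have hSb : S b = 0 := by
        simp only [S]
        rw [if_neg (hb _ (far_ne (Finset.mem_inter.1 hf).2))]
      have h1 := bd_pair s t D S
      rw [hD] at h1
      simp only [Pi.add_apply, add_mul, Finset.sum_add_distrib, pair_single, hSb, add_zero] at h1
      have h3 : ∑ e ∈ D, (S (s e) + S (t e)) = 1 := by
        rw [Finset.sum_eq_single f]
        · rw [bd_star (Finset.mem_inter.1 hf).2, hSb, zero_add]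
          simp only [S]
          rw [if_pos (hrefl _)]
        · intro e he hef
          by_cases hes : e ∈ star s t b
          · rw [bd_star hes, hSb, zero_add]
            simp only [S]
            rw [if_neg]
            exact hno f hf e (Finset.mem_inter.2 ⟨he, hes⟩) (Ne.symm hef)
          · have hr := hedge e (by rw [hD0, Finset.mem_sdiff]; exact ⟨he, hes⟩)
            have : S (s e) = S (t e) := by
              simp only [S]
              congr 1
              exact propext ⟨fun h => htrans _ _ _ h hr, fun h => htrans _ _ _ h (hsymm _ _ hr)⟩
            rw [this, zmod2_add_self]
        · intro h
          exact absurd (Finset.mem_inter.1 hf).1 h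
      rw [← Finset.sum_add_distrib, h3] at h1
      by_contra hc
      simp only [S, if_neg hc] at h1
      exact absurd h1 (by decide)
    obtain ⟨f, hf, g, hg, hfg⟩ := Finset.one_lt_card.1 h2
    exact hno f hf g hg hfg (htrans _ _ _ (ha f hf) (hsymm _ _ (ha g hg)))
  obtain ⟨f, hf, g, hg, hfg, D1, hD1, hb1⟩ := key
  rw [Finset.mem_inter] at hf hg
  have hD1' : ∀ e ∈ D1, e ∈ D ∧ e ∉ star s t b := by
    intro e he
    have := hD1 he
    rwa [hD0, Finset.mem_sdiff] at this
  have hset : symmDiff D1 (symmDiff {f} {g}) = D1 ∪ {f, g} := by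
    ext e
    have := hD1' e
    simp only [Finset.mem_symmDiff, Finset.mem_union, Finset.mem_insert, Finset.mem_singleton]
    grind
  refine ⟨D1 ∪ {f, g}, ?_, ?_, ?_⟩
  · intro e he
    have := hD1' e
    simp only [Finset.mem_union, Finset.mem_insert, Finset.mem_singleton] at he
    grind
  · rw [← hset, bd_symmDiff, bd_symmDiff, hb1, single_star hf.2, single_star hg.2]
    ext v
    simp only [Pi.add_apply, Pi.zero_apply]
    generalize (Pi.single (far s t b f) 1 : V → ZMod 2) v = x
    generalize (Pi.single (far s t b g) 1 : V → ZMod 2) v = y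
    generalize (Pi.single b 1 : V → ZMod 2) v = u
    revert x y u; decide
  · have : (D1 ∪ {f, g}) ∩ star s t b = {f, g} := by
      ext e
      have := hD1' e
      simp only [Finset.mem_inter, Finset.mem_union, Finset.mem_insert, Finset.mem_singleton]
      grind
    rw [this, Finset.card_pair hfg]

lemma wt_ind (w : E → ℕ) (M : Finset E) : ∑ e ∈ M, w e = ∑ e, if e ∈ M then w e else 0 := by
  simp

lemma wt_exchange (w : E → ℕ) (A B C : Finset E) (h : C ⊆ symmDiff A B) :
    ∑ e ∈ symmDiff A C, w e + ∑ e ∈ symmDiff B C, w e = ∑ e ∈ A, w e + ∑ e ∈ B, w e := by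
  simp only [wt_ind w (symmDiff A C), wt_ind w (symmDiff B C), wt_ind w A, wt_ind w B,
    ← Finset.sum_add_distrib]
  refine Finset.sum_congr rfl fun e _ => ?_
  have := @h e
  simp only [Finset.mem_symmDiff] at this ⊢
  by_cases h1 : e ∈ A <;> by_cases h2 : e ∈ B <;> by_cases h3 : e ∈ C <;> simp_all

lemma wt_parity (s t : E → V) (w : E → ℕ) (p : V → ZMod 2)
    (hp : ∀ e, (w e : ZMod 2) = p (s e) + p (t e)) (A B : Finset E) (h : bd s t A = bd s t B) :
    (∑ e ∈ A, w e) % 2 = (∑ e ∈ B, w e) % 2 := by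
  have : ((∑ e ∈ A, w e : ℕ) : ZMod 2) = ((∑ e ∈ B, w e : ℕ) : ZMod 2) := by
    push_cast
    simp only [hp]
    rw [← bd_pair, ← bd_pair, h]
  exact (ZMod.natCast_eq_natCast_iff' _ _ _).1 this

lemma sub_star (s t : E → V) (w : E → ℕ) (hw : ∀ e, s e ≠ t e → 1 ≤ w e) (b : V)
    (M : Finset E) :
    ∑ e ∈ M, w e = ∑ e ∈ M, (if e ∈ star s t b then w e - 1 else w e)
      + (M ∩ star s t b).card := by
  rw [← Finset.filter_mem_eq_inter, Finset.card_filter, ← Finset.sum_add_distrib]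
  refine Finset.sum_congr rfl fun e _ => ?_
  split_ifs with h
  · have : s e ≠ t e := by
      rw [mem_star] at h
      rintro h'
      rw [h'] at h
      tauto
    have := hw e this
    omega
  · rfl

/-- existence of a weight minimiser -/
lemma exists_min {A : Type*} (Q : A → Prop) (m : A → ℕ) (h : ∃ x, Q x) :
    ∃ x, Q x ∧ ∀ y, Q y → m x ≤ m y := by
  obtain ⟨x, hx⟩ := h
  obtain ⟨y, hy, hmin⟩ := WellFounded.has_min (measure m).wf {x | Q x} ⟨x, hx⟩
  exact ⟨y, hy, fun z hz => not_lt.1 (hmin z hz)⟩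

set_option maxHeartbeats 1600000 in
lemma star_step (s t : E → V) (w : E → ℕ) (p : V → ZMod 2)
    (hp : ∀ e, (w e : ZMod 2) = p (s e) + p (t e)) (hw : ∀ e, s e ≠ t e → 1 ≤ w e)
    (τ : V → ZMod 2) (hτ : τ ≠ 0) (hex : ∃ J, bd s t J = τ) :
    ∃ b, τ b = 1 ∧ ∀ J₁, bd s t J₁ = τ → ∃ J, bd s t J = τ ∧
      ∑ e ∈ J, w e ≤ ∑ e ∈ J₁, (if e ∈ star s t b then w e - 1 else w e) + 1 := by
  classical
  -- globally minimal join after changing parity at two vertices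
  obtain ⟨⟨⟨a, b⟩, I⟩, hI, hImin⟩ := exists_min
    (fun x : (V × V) × Finset E => bd s t x.2 = τ + Pi.single x.1.1 1 + Pi.single x.1.2 1)
    (fun x => ∑ e ∈ x.2, w e) (by
      obtain ⟨J, hJ⟩ := hex
      have hne : ∃ v, τ v ≠ 0 := by
        by_contra h
        push Not at h
        exact hτ (funext h)
      obtain ⟨v, _⟩ := hne
      refine ⟨⟨⟨v, v⟩, J⟩, ?_⟩
      simp only
      rw [hJ, add_assoc, fn_add_self, add_zero])
  simp only at hI hImin
  have hImin' : ∀ a' b' K, bd s t K = τ + Pi.single a' 1 + Pi.single b' 1 →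
      ∑ e ∈ I, w e ≤ ∑ e ∈ K, w e := fun a' b' K h => hImin ⟨⟨a', b'⟩, K⟩ h
  -- minimal joins for (a,b) avoid the star of b
  have havoid : ∀ K, bd s t K = τ + Pi.single a 1 + Pi.single b 1 →
      ∑ e ∈ K, w e ≤ ∑ e ∈ I, w e → ∀ f ∈ star s t b, f ∉ K := by
    intro K hK hle f hf hfK
    have h1 : bd s t (symmDiff K {f}) = τ + Pi.single a 1 + Pi.single (far s t b f) 1 := by
      rw [bd_symmDiff, hK, single_star hf]
      calc _ = τ + Pi.single a 1 + Pi.single (far s t b f) 1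
            + (Pi.single b 1 + Pi.single b 1 : V → ZMod 2) := by abel
        _ = _ := by rw [fn_add_self, add_zero]
    have h2 := hImin' _ _ _ h1
    have h3 : symmDiff K {f} = K.erase f := by
      ext e
      simp only [Finset.mem_symmDiff, Finset.mem_singleton, Finset.mem_erase]
      grind
    rw [h3] at h2
    have h4 := Finset.sum_erase_add K w hfK
    have h5 : s f ≠ t f := by
      rw [mem_star] at hf
      intro h'
      rw [h'] at hf
      tauto
    have := hw f h5
    omega
  have hIav := havoid I hI le_rfl
  -- minimal J
  obtain ⟨J₀, hJ₀, hJ₀min⟩ := exists_min (fun J => bd s t J = τ) (fun J => ∑ e ∈ J, w e) hex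
  have hab : a ≠ b := by
    rintro rfl
    rw [add_assoc, fn_add_self, add_zero] at hI
    have h1 := hJ₀min I hI
    have : ∃ e ∈ J₀, s e ≠ t e := by
      by_contra h
      push Not at h
      apply hτ
      rw [← hJ₀]
      unfold bd
      apply Finset.sum_eq_zero
      intro e he
      rw [h e he, fn_add_self]
    obtain ⟨e, he, hst⟩ := this
    have h2 := hImin' (s e) (t e) (J₀.erase e) (by
      have h3 : symmDiff J₀ {e} = J₀.erase e := by
        ext e
        simp only [Finset.mem_symmDiff, Finset.mem_singleton, Finset.mem_erase]
        grind
      rw [← h3, bd_symmDiff, hJ₀, bd_singleton, add_assoc])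
    have h4 := Finset.sum_erase_add J₀ w he
    have := hw e hst
    omega
  -- each minimal join has exactly one edge at b
  have hone : ∀ J, bd s t J = τ → ∑ e ∈ J, w e ≤ ∑ e ∈ J₀, w e → (J ∩ star s t b).card = 1 := by
    intro J hJ hJle
    have hK : bd s t (symmDiff J I) = Pi.single a 1 + Pi.single b 1 := by
      rw [bd_symmDiff, hJ, hI]
      calc _ = (τ + τ) + (Pi.single a 1 + Pi.single b 1 : V → ZMod 2) := by abel
        _ = _ := by rw [fn_add_self, zero_add]
    have hKs : symmDiff J I ∩ star s t b = J ∩ star s t b := by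
      ext e
      have := hIav e
      simp only [Finset.mem_symmDiff, Finset.mem_inter]
      grind
    have hlt : ¬ 2 ≤ (symmDiff J I ∩ star s t b).card := by
      intro h2
      obtain ⟨C, hC, hC0, hC2⟩ := exists_even_sub s t _ a b hK h2
      have h3 := wt_exchange w J I C hC
      have h4 := hJ₀min (symmDiff J C) (by rw [bd_symmDiff, hC0, add_zero, hJ])
      have h5 := havoid (symmDiff I C) (by rw [bd_symmDiff, hC0, add_zero, hI]) (by omega)
      have : (C ∩ star s t b).Nonempty := by
        rw [← Finset.card_pos]; omega
      obtain ⟨f, hf⟩ := this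
      rw [Finset.mem_inter] at hf
      apply h5 f hf.2
      rw [Finset.mem_symmDiff]
      exact Or.inr ⟨hf.1, hIav f hf.2⟩
    have hodd := congrFun hK b
    rw [bd_apply, hKs] at hodd
    rw [hKs] at hlt
    have : (J ∩ star s t b).card ≠ 0 := by
      intro h0
      rw [h0] at hodd
      simp [Ne.symm hab] at hodd
    omega
  have hτb : τ b = 1 := by
    rw [← hJ₀, bd_apply, hone J₀ hJ₀ le_rfl]; simp
  have hoddb : ∀ J, bd s t J = τ → (J ∩ star s t b).card % 2 = 1 := by
    intro J hJ
    have : ((J ∩ star s t b).card : ZMod 2) = ((1 : ℕ) : ZMod 2) := by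
      rw [← bd_apply, hJ, hτb]; simp
    exact (ZMod.natCast_eq_natCast_iff' _ _ _).1 this
  refine ⟨b, hτb, fun J₁ hJ₁ => ?_⟩
  set w' : E → ℕ := fun e => if e ∈ star s t b then w e - 1 else w e with hw'
  have hww : ∀ M : Finset E, ∑ e ∈ M, w e = ∑ e ∈ M, w' e + (M ∩ star s t b).card :=
    fun M => sub_star s t w hw b M
  obtain ⟨J₂, hJ₂, hJ₂min⟩ := exists_min (fun J => bd s t J = τ) (fun J => ∑ e ∈ J, w' e) hex
  obtain ⟨⟨J, J'⟩, ⟨hJ, hJle, hJ', hJ'le⟩, hmin⟩ := exists_min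
    (fun x : Finset E × Finset E => bd s t x.1 = τ ∧ ∑ e ∈ x.1, w e ≤ ∑ e ∈ J₀, w e ∧
      bd s t x.2 = τ ∧ ∑ e ∈ x.2, w' e ≤ ∑ e ∈ J₂, w' e)
    (fun x => (symmDiff x.1 x.2).card) ⟨⟨J₀, J₂⟩, hJ₀, le_rfl, hJ₂, le_rfl⟩
  simp only at hJ hJle hJ' hJ'le hmin
  have hJ'1 : (J' ∩ star s t b).card = 1 := by
    have h1 := hoddb J' hJ'
    by_contra hne
    have h3 : 3 ≤ (J' ∩ star s t b).card := by omega
    have hJ1 := hone J hJ hJle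
    have hD2 : 2 ≤ (symmDiff J J' ∩ star s t b).card := by
      have hsub : (J' ∩ star s t b) \ (J ∩ star s t b) ⊆ symmDiff J J' ∩ star s t b := by
        intro e
        simp only [Finset.mem_symmDiff, Finset.mem_inter, Finset.mem_sdiff]
        tauto
      have := Finset.card_le_card hsub
      have := Finset.le_card_sdiff (J ∩ star s t b) (J' ∩ star s t b)
      omega
    obtain ⟨C, hC, hC0, hC2⟩ := exists_even_sub s t (symmDiff J J') b b
      (by rw [bd_symmDiff, hJ, hJ', fn_add_self, fn_add_self]) hD2
    have hA : bd s t (symmDiff J C) = τ := by rw [bd_symmDiff, hC0, add_zero, hJ]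
    have hB : bd s t (symmDiff J' C) = τ := by rw [bd_symmDiff, hC0, add_zero, hJ']
    have e1 := wt_exchange w' J J' C hC
    have m1 := hJ₀min _ hA
    have m2 := hJ₂min _ hB
    have m3 := hJ₂min _ hJ'
    have m4 := hJ₀min _ hJ
    have par := wt_parity s t w p hp _ _ (hA.trans hJ.symm)
    have w1 := hww (symmDiff J C)
    have w2 := hww J
    have o1 := hoddb _ hA
    have hle3 : (symmDiff J C ∩ star s t b).card ≤ 3 := by
      have hsub : symmDiff J C ∩ star s t b ⊆ (J ∩ star s t b) ∪ (C ∩ star s t b) := by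
        intro e
        simp only [Finset.mem_symmDiff, Finset.mem_inter, Finset.mem_union]
        tauto
      have := Finset.card_le_card hsub
      have := Finset.card_union_le (J ∩ star s t b) (C ∩ star s t b)
      omega
    have hCne : C.Nonempty := by
      rw [Finset.nonempty_iff_ne_empty]
      rintro rfl
      simp at hC2
    have hcard1 : (symmDiff (symmDiff J C) J').card < (symmDiff J J').card := by
      apply Finset.card_lt_card
      have hs : symmDiff (symmDiff J C) J' = symmDiff J J' \ C := by
        ext e
        have := @hC e
        simp only [Finset.mem_symmDiff, Finset.mem_sdiff] at this ⊢
        tauto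
      rw [hs]
      exact Finset.sdiff_ssubset hC hCne
    have hcard2 : (symmDiff J (symmDiff J' C)).card < (symmDiff J J').card := by
      apply Finset.card_lt_card
      have hs : symmDiff J (symmDiff J' C) = symmDiff J J' \ C := by
        ext e
        have := @hC e
        simp only [Finset.mem_symmDiff, Finset.mem_sdiff] at this ⊢
        tauto
      rw [hs]
      exact Finset.sdiff_ssubset hC hCne
    by_cases hc : (symmDiff J C ∩ star s t b).card = 1
    · have := hmin ⟨symmDiff J C, J'⟩ ⟨hA, by dsimp only; omega, hJ', hJ'le⟩
      simp only at this
      omega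
    · have hnm : ¬ ∑ e ∈ symmDiff J C, w e ≤ ∑ e ∈ J₀, w e := fun h => hc (hone _ hA h)
      have := hmin ⟨J, symmDiff J' C⟩ ⟨hJ, hJle, hB, by dsimp only; omega⟩
      simp only at this
      omega
  refine ⟨J', hJ', ?_⟩
  change ∑ e ∈ J', w e ≤ ∑ e ∈ J₁, w' e + 1
  have := hww J'
  have := hJ₂min J₁ hJ₁
  omega

/-- T-joins of small weight, natural weights in a bipartite weighting. -/
theorem tjoin_aux (n : ℕ) : ∀ (s t : E → V) (w : E → ℕ) (p : V → ZMod 2) (τ : V → ZMod 2)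
    (z : E → ℝ), ∑ e, w e + (Finset.univ.filter (fun e => s e ≠ t e)).card = n →
    (∀ e, (w e : ZMod 2) = p (s e) + p (t e)) → (∀ e, 0 ≤ z e) →
    (∀ S : V → ZMod 2, ∑ v, τ v * S v = 1 → 1 ≤ ∑ e ∈ cut s t S, z e) →
    ∃ J, bd s t J = τ ∧ ∑ e ∈ J, (w e : ℝ) ≤ ∑ e, z e * w e := by
  induction n using Nat.strong_induction_on with
  | _ n ih =>
  intro s t w p τ z hn hp hz hcut
  by_cases hzero : ∃ e, s e ≠ t e ∧ w e = 0
  · obtain ⟨e₀, hne, hw0⟩ := hzero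
    let β : V → ZMod 2 := Pi.single (s e₀) 1 + Pi.single (t e₀) 1
    let c : V → V := fun v => if v = t e₀ then s e₀ else v
    have hcs : c (s e₀) = s e₀ := by simp [c]
    have hct : c (t e₀) = s e₀ := by simp [c]
    let L : (V → ZMod 2) → (V → ZMod 2) := fun x => x + x (t e₀) • β
    have hLadd : ∀ x y, L (x + y) = L x + L y := by
      intro x y
      simp only [L, Pi.add_apply, add_smul]
      abel
    have hLsingle : ∀ v, L (Pi.single v 1) = Pi.single (c v) 1 := by
      intro v
      by_cases hv : v = t e₀
      · subst hv
        simp only [L, hct, β, Pi.single_eq_same, one_smul]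
        rw [add_left_comm, fn_add_self, add_zero]
      · simp [L, c, hv, Ne.symm hv]
    have hLbd : ∀ M, bd (c ∘ s) (c ∘ t) M = L (bd s t M) := by
      intro M
      induction M using Finset.induction_on with
      | empty => simp [bd_empty, L]
      | insert e M he ihM =>
        have h1 : ∀ s t : E → V, bd s t (insert e M) =
            (Pi.single (s e) 1 + Pi.single (t e) 1) + bd s t M := by
          intro s t
          unfold bd
          rw [Finset.sum_insert he]
        rw [h1, h1, hLadd, ihM, hLadd, hLsingle, hLsingle]
        rfl
    have hpc : ∀ v, p (c v) = p v := by
      intro v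
      have := hp e₀
      rw [hw0, Nat.cast_zero] at this
      simp only [c]
      split_ifs with h
      · rw [h]
        revert this
        generalize p (s e₀) = x; generalize p (t e₀) = y
        revert x y; decide
      · rfl
    have hlt : (Finset.univ.filter (fun e => (c ∘ s) e ≠ (c ∘ t) e)).card <
        (Finset.univ.filter (fun e => s e ≠ t e)).card := by
      apply Finset.card_lt_card
      rw [Finset.ssubset_iff_of_subset]
      · exact ⟨e₀, by simpa using hne, by simp [hcs, hct]⟩
      · intro e
        simp only [Finset.mem_filter, Finset.mem_univ, true_and, Function.comp]
        intro h h'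
        exact h (by rw [h'])
    obtain ⟨J, hJ, hJw⟩ := ih _ (by omega) (c ∘ s) (c ∘ t) w p (L τ) z rfl
      (by intro e; simp only [Function.comp, hpc]; exact hp e) hz (by
        intro S hS
        apply hcut (S ∘ c)
        rw [← hS]
        have hbeta : ∑ v, β v * (S ∘ c) v = 0 := by
          simp only [β, Pi.add_apply, add_mul, Finset.sum_add_distrib, pair_single]
          simp only [Function.comp, hcs, hct, zmod2_add_self]
        have h1 : ∑ v, L τ v * (S ∘ c) v = ∑ v, τ v * (S ∘ c) v := by
          simp only [L, Pi.add_apply, Pi.smul_apply, smul_eq_mul, add_mul, Finset.sum_add_distrib,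
            mul_assoc]
          rw [← Finset.mul_sum, hbeta, mul_zero, add_zero]
        rw [← h1]
        refine Finset.sum_congr rfl fun v _ => ?_
        by_cases hv : v = t e₀
        · have : L τ v = 0 := by
            subst hv
            simp [L, β, hne, zmod2_add_self]
          rw [this]; simp
        · simp [c, hv])
    rw [hLbd] at hJ
    rcases zmod2_cases (bd s t J (t e₀) + τ (t e₀)) with h0 | h1
    · refine ⟨J, ?_, hJw⟩
      have : bd s t J (t e₀) = τ (t e₀) := by
        revert h0
        generalize bd s t J (t e₀) = x; generalize τ (t e₀) = y
        revert x y; decide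
      simp only [L, this] at hJ
      exact add_right_cancel hJ
    · refine ⟨symmDiff J {e₀}, ?_, ?_⟩
      · rw [bd_symmDiff, bd_singleton]
        change bd s t J + β = τ
        ext v
        have hv := congrFun hJ v
        simp only [L, Pi.add_apply, Pi.smul_apply, smul_eq_mul] at hv ⊢
        revert hv h1
        generalize bd s t J (t e₀) = x; generalize τ (t e₀) = y
        generalize bd s t J v = x'; generalize τ v = y'; generalize β v = q
        revert x y x' y' q; decide
      · refine le_trans (le_of_eq ?_) hJw
        have hi : ∀ M : Finset E, ∑ e ∈ M, (w e : ℝ) = ∑ e, if e ∈ M then (w e : ℝ) else 0 := by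
          intro M; simp
        rw [hi, hi J]
        refine Finset.sum_congr rfl fun e _ => ?_
        by_cases he : e = e₀
        · subst he; simp [hw0]
        · simp [Finset.mem_symmDiff, he]
  · push Not at hzero
    have hw : ∀ e, s e ≠ t e → 1 ≤ w e := fun e he => Nat.one_le_iff_ne_zero.2 (hzero e he)
    by_cases hτ : τ = 0
    · refine ⟨∅, by rw [bd_empty, hτ], ?_⟩
      simp only [Finset.sum_empty]
      exact Finset.sum_nonneg fun e _ => mul_nonneg (hz e) (Nat.cast_nonneg _)
    have hnl : ∀ v e, e ∈ star s t v → s e ≠ t e := by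
      intro v e h h'
      rw [mem_star, h'] at h
      tauto
    have hstar : ∀ v, τ v = 1 → 1 ≤ ∑ e ∈ star s t v, z e := by
      intro v hv
      apply hcut
      simp [Pi.single_apply, hv]
    have hne : ∃ v, τ v = 1 := by
      by_contra h
      push Not at h
      exact hτ (funext fun v => (zmod2_cases (τ v)).resolve_right (h v))
    have hposstar : ∀ v, τ v = 1 → ∃ e ∈ star s t v, s e ≠ t e := by
      intro v hv
      have h1 := hstar v hv
      have : (star s t v).Nonempty := by
        by_contra h
        rw [Finset.not_nonempty_iff_eq_empty] at h
        rw [h] at h1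
        norm_num at h1
      obtain ⟨e, he⟩ := this
      exact ⟨e, he, hnl v e he⟩
    have hpos : 0 < ∑ e, w e := by
      obtain ⟨v, hv⟩ := hne
      obtain ⟨e, _, he⟩ := hposstar v hv
      have := Finset.single_le_sum (f := w) (fun i _ => Nat.zero_le _) (Finset.mem_univ e)
      have := hw e he
      omega
    have hex : ∃ J, bd s t J = τ := by
      obtain ⟨J, hJ, _⟩ := ih _ (by rw [Finset.sum_const_zero]; omega) s t (fun _ => 0) 0 τ z rfl
        (by simp) hz hcut
      exact ⟨J, hJ⟩
    obtain ⟨b, hb, hstep⟩ := star_step s t w p hp hw τ hτ hex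
    have hww := sub_star s t w hw b
    set w' : E → ℕ := fun e => if e ∈ star s t b then w e - 1 else w e with hw'
    have hw'le : ∑ e, w' e < ∑ e, w e := by
      have hu : ∑ e, w e = ∑ e, w' e + (Finset.univ ∩ star s t b).card := hww Finset.univ
      obtain ⟨e, he, _⟩ := hposstar b hb
      have : 0 < (Finset.univ ∩ star s t b).card := Finset.card_pos.2 ⟨e, by simpa using he⟩
      omega
    have hreal : ∀ e, (w e : ℝ) = w' e + if e ∈ star s t b then 1 else 0 := by
      intro e
      simp only [hw']
      split_ifs with h
      · have := hw e (hnl b e h)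
        rw [Nat.cast_sub this]; simp
      · simp
    obtain ⟨J₁, hJ₁, hJ₁w⟩ := ih _ (by omega) s t w' (p + Pi.single b 1) τ z rfl (by
      intro e
      have h1 := hp e
      simp only [hw', Pi.add_apply]
      split_ifs with h
      · rw [Nat.cast_sub (hw e (hnl b e h)), h1]
        have h2 := bd_star h (Pi.single b 1)
        rw [Pi.single_eq_same, Pi.single_eq_of_ne (far_ne h)] at h2
        rw [add_add_add_comm, h2]
        generalize p (s e) = x; generalize p (t e) = y
        revert x y; decide
      · rw [h1]
        have h2 : (Pi.single b 1 : V → ZMod 2) (s e) = (Pi.single b 1 : V → ZMod 2) (t e) := by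
          by_contra h3
          exact h (by simp only [star, cut, Finset.mem_filter, Finset.mem_univ, true_and]; exact h3)
        rw [add_add_add_comm, h2, zmod2_add_self, add_zero]) hz hcut
    obtain ⟨J, hJ, hJw⟩ := hstep J₁ hJ₁
    refine ⟨J, hJ, ?_⟩
    have h1 : (∑ e ∈ J, (w e : ℝ)) ≤ ∑ e ∈ J₁, (w' e : ℝ) + 1 := by exact_mod_cast hJw
    have h2 : ∑ e, z e * (w e : ℝ) = ∑ e, z e * (w' e : ℝ) + ∑ e ∈ star s t b, z e := by
      simp only [hreal, mul_add, Finset.sum_add_distrib]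
      congr 1
      simp
    have := hstar b hb
    linarith

theorem tjoin (s t : E → V) (w : E → ℕ) (τ : V → ZMod 2)
    (z : E → ℝ) (hz : ∀ e, 0 ≤ z e)
    (hcut : ∀ S : V → ZMod 2, ∑ v, τ v * S v = 1 → 1 ≤ ∑ e ∈ cut s t S, z e) :
    ∃ J, bd s t J = τ ∧ ∑ e ∈ J, (w e : ℝ) ≤ ∑ e, z e * w e := by
  obtain ⟨J, hJ, hw⟩ := tjoin_aux _ s t (fun e => 2 * w e) 0 τ z rfl (by
    intro e
    push_cast
    have : (2 : ZMod 2) = 0 := by decide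
    simp [this]) hz hcut
  refine ⟨J, hJ, ?_⟩
  push_cast at hw
  have h2 : ∑ e, z e * (2 * (w e : ℝ)) = 2 * ∑ e, z e * w e := by
    rw [Finset.mul_sum]; exact Finset.sum_congr rfl fun e _ => by ring
  rw [← Finset.mul_sum, h2] at hw
  linarith

/-- Signed integer weights: a valid set of weight at most a third. -/
theorem third_weight (s t : E → V)
    (hcut : ∀ S : V → ZMod 2, (∃ u v, S u ≠ S v) → 2 ≤ (cut s t S).card) (w : E → ℤ) :
    ∃ M, bd s t M = bd s t Finset.univ ∧ ∑ e ∈ M, (w e : ℝ) ≤ (∑ e, (w e : ℝ)) / 3 := by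
  classical
  set N : Finset E := Finset.univ.filter (fun e => w e < 0) with hN
  obtain ⟨J, hJ, hJw⟩ := tjoin s t (fun e => (w e).natAbs) (bd s t Finset.univ + bd s t N)
    (fun e => if e ∈ N then 2 / 3 else 1 / 3) (by intro e; positivity) (by
      intro S hS
      simp only [Pi.add_apply, add_mul, Finset.sum_add_distrib, bd_pair] at hS
      rw [← Finset.sum_add_distrib, ← Finset.sum_add_distrib, sum_cut, sum_cut,
        Finset.univ_inter, ← Nat.cast_add] at hS
      have hS' : ((cut s t S).card + (N ∩ cut s t S).card) % 2 = 1 := by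
        have : (((cut s t S).card + (N ∩ cut s t S).card : ℕ) : ZMod 2) = ((1 : ℕ) : ZMod 2) := by
          rw [hS]; simp
        exact (ZMod.natCast_eq_natCast_iff' _ _ _).1 this
      have hle : (N ∩ cut s t S).card ≤ (cut s t S).card :=
        Finset.card_le_card Finset.inter_subset_right
      have h2 : 2 ≤ (cut s t S).card := by
        apply hcut
        have : 0 < (cut s t S).card := by omega
        obtain ⟨e, he⟩ := Finset.card_pos.1 this
        simp only [cut, Finset.mem_filter] at he
        exact ⟨_, _, he.2⟩
      have h3 : 3 ≤ (cut s t S).card + (N ∩ cut s t S).card := by omega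
      have h4 : ∑ e ∈ cut s t S, (if e ∈ N then (2 : ℝ) / 3 else 1 / 3) =
          ((cut s t S).card + (N ∩ cut s t S).card : ℕ) / 3 := by
        have : ∀ e, (if e ∈ N then (2 : ℝ) / 3 else 1 / 3) = 1 / 3 + if e ∈ N then 1 / 3 else 0 := by
          intro e; split_ifs <;> norm_num
        simp only [this, Finset.sum_add_distrib]
        rw [← Finset.sum_filter, Finset.filter_mem_eq_inter, Finset.inter_comm]
        simp only [Finset.sum_const, nsmul_eq_mul]
        push_cast
        ring
      rw [h4]
      have : (3 : ℝ) ≤ ((cut s t S).card + (N ∩ cut s t S).card : ℕ) := by exact_mod_cast h3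
      linarith)
  refine ⟨symmDiff J N, ?_, ?_⟩
  · rw [bd_symmDiff, hJ, add_assoc, fn_add_self, add_zero]
  · have hi : ∀ (M : Finset E) (g : E → ℝ), ∑ e ∈ M, g e = ∑ e, if e ∈ M then g e else 0 := by
      intro M g; simp
    rw [hi] at hJw ⊢
    have key : ∀ e, (if e ∈ symmDiff J N then (w e : ℝ) else 0) - w e / 3 =
        (if e ∈ J then ((w e).natAbs : ℝ) else 0)
          - (if e ∈ N then (2 : ℝ) / 3 else 1 / 3) * (w e).natAbs := by
      intro e
      have habs : ((w e).natAbs : ℝ) = if e ∈ N then -(w e : ℝ) else w e := by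
        rw [Nat.cast_natAbs, Int.cast_abs]
        split_ifs with h
        · have : w e < 0 := by simpa [hN] using h
          exact abs_of_neg (by exact_mod_cast this)
        · have : 0 ≤ w e := by simpa [hN] using h
          exact abs_of_nonneg (by exact_mod_cast this)
      rw [habs]
      by_cases h1 : e ∈ J <;> by_cases h2 : e ∈ N <;> simp [Finset.mem_symmDiff, h1, h2] <;> ring
    have hs := Finset.sum_congr rfl fun e (_ : e ∈ (Finset.univ : Finset E)) => key e
    rw [Finset.sum_sub_distrib, Finset.sum_sub_distrib, ← Finset.sum_div] at hs
    linarith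

/-- Fractional version: the constant `1/3` vector is a convex combination. -/
theorem third_distribution (s t : E → V)
    (hcut : ∀ S : V → ZMod 2, (∃ u v, S u ≠ S v) → 2 ≤ (cut s t S).card) :
    ∃ q : {M : Finset E // bd s t M = bd s t Finset.univ} → ℝ, (∀ M, 0 ≤ q M) ∧ ∑ M, q M = 1 ∧
      ∀ e, ∑ M, (if e ∈ M.1 then q M else 0) = 1 / 3 := by
  classical
  let F := {M : Finset E // bd s t M = bd s t Finset.univ}
  let T : (F → ℝ) →ₗ[ℝ] (E → ℝ) :=
    { toFun := fun q e => ∑ M, (if e ∈ M.1 then q M else 0)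
      map_add' := by
        intro a b
        ext e
        simp only [Pi.add_apply, ← Finset.sum_add_distrib]
        refine Finset.sum_congr rfl fun M _ => ?_
        split_ifs <;> simp
      map_smul' := by
        intro a b
        ext e
        simp only [Pi.smul_apply, smul_eq_mul, Finset.mul_sum, RingHom.id_apply]
        refine Finset.sum_congr rfl fun M _ => ?_
        split_ifs <;> simp }
  have hT : ∀ q e, T q e = ∑ M, (if e ∈ M.1 then q M else 0) := fun q e => rfl
  by_cases hx : (fun _ => 1 / 3 : E → ℝ) ∈ T '' stdSimplex ℝ F
  · obtain ⟨q, hq, hqT⟩ := hx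
    exact ⟨q, hq.1, hq.2, fun e => by rw [← hT, hqT]⟩
  exfalso
  have hconv : Convex ℝ (T '' stdSimplex ℝ F) := (convex_stdSimplex ℝ F).linear_image T
  have hclosed : IsClosed (T '' stdSimplex ℝ F) :=
    ((isCompact_stdSimplex ℝ F).image T.continuous_of_finiteDimensional).isClosed
  obtain ⟨f, u, hfx, hfu⟩ := geometric_hahn_banach_point_closed hconv hclosed hx
  set w : E → ℝ := fun e => f (Pi.single e 1) with hw
  have hf : ∀ y : E → ℝ, f y = ∑ e, y e * w e := by
    intro y
    have := LinearMap.pi_apply_eq_sum_univ (f : (E → ℝ) →ₗ[ℝ] ℝ) y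
    simp only [ContinuousLinearMap.coe_coe, smul_eq_mul] at this
    rw [this]
    refine Finset.sum_congr rfl fun e _ => ?_
    simp only [hw]
    congr 2
    ext j
    simp [Pi.single_apply, eq_comm]
  rw [hf] at hfx
  have hM : ∀ M : F, u < ∑ e ∈ M.1, w e := by
    intro M
    have h1 := hfu _ ⟨_, single_mem_stdSimplex ℝ M, rfl⟩
    rw [hf] at h1
    refine h1.trans_eq ?_
    have : ∀ e, T (Pi.single M 1) e = if e ∈ M.1 then 1 else 0 := by
      intro e
      rw [hT, Finset.sum_eq_single M]
      · simp
      · intro M' _ hne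
        simp [hne]
      · simp
    simp only [this]
    simp
  rw [← Finset.mul_sum] at hfx
  obtain ⟨n, hn⟩ := exists_nat_gt ((Fintype.card E : ℝ) / (u - 1 / 3 * ∑ e, w e))
  have hε : 0 < u - 1 / 3 * ∑ e, w e := by linarith
  rw [div_lt_iff₀ hε] at hn
  obtain ⟨M, hMb, hMw⟩ := third_weight s t hcut (fun e => ⌊(n : ℝ) * w e⌋)
  have hM1 := hM ⟨M, hMb⟩
  simp only at hM1
  have h1 : ∑ e, (⌊(n : ℝ) * w e⌋ : ℝ) ≤ n * ∑ e, w e := by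
    rw [Finset.mul_sum]
    exact Finset.sum_le_sum fun e _ => Int.floor_le _
  have h2 : n * ∑ e ∈ M, w e ≤ ∑ e ∈ M, (⌊(n : ℝ) * w e⌋ : ℝ) + Fintype.card E := by
    have hc : (M.card : ℝ) ≤ Fintype.card E := by exact_mod_cast Finset.card_le_univ M
    have : n * ∑ e ∈ M, w e ≤ ∑ e ∈ M, ((⌊(n : ℝ) * w e⌋ : ℝ) + 1) := by
      rw [Finset.mul_sum]
      exact Finset.sum_le_sum fun e _ => (Int.lt_floor_add_one _).le
    rw [Finset.sum_add_distrib] at this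
    simp only [Finset.sum_const, nsmul_eq_mul, mul_one] at this
    linarith
  have h3 : (n : ℝ) * u ≤ n * ∑ e ∈ M, w e := mul_le_mul_of_nonneg_left hM1.le (Nat.cast_nonneg _)
  nlinarith

end basic

section graph
open SimpleGraph

lemma walk_cross {W : Type*} {H : SimpleGraph W} (S : W → ZMod 2) {u v : W} (p : H.Walk u v)
    (h : S u ≠ S v) : ∃ x y, H.Adj x y ∧ S x ≠ S y := by
  induction p with
  | nil => exact absurd rfl h
  | @cons a b c hab p ih =>
    by_cases h1 : S a = S b
    · exact ih (by rwa [← h1])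
    · exact ⟨a, b, hab, h1⟩

lemma avoid_cross {V : Type*} (G : SimpleGraph V)
    (h2vc : ∀ v : V, (G.induce {u : V | u ≠ v}).Connected) (S : V → ZMod 2) (v a b : V)
    (ha : a ≠ v) (hb : b ≠ v) (hab : S a ≠ S b) :
    ∃ x y, G.Adj x y ∧ x ≠ v ∧ y ≠ v ∧ S x ≠ S y := by
  obtain ⟨p⟩ := (h2vc v).preconnected ⟨a, ha⟩ ⟨b, hb⟩
  obtain ⟨x, y, hxy, hS⟩ := walk_cross (fun x => S x.1) p hab
  exact ⟨x.1, y.1, hxy, x.2, y.2, hS⟩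

lemma two_cross {V : Type*} [Fintype V] [DecidableEq V] (G : SimpleGraph V)
    (hcard : 3 ≤ Fintype.card V) (hconn : G.Connected)
    (h2vc : ∀ v : V, (G.induce {u : V | u ≠ v}).Connected) (S : V → ZMod 2)
    (h : ∃ u v, S u ≠ S v) :
    ∃ a b c d, G.Adj a b ∧ S a ≠ S b ∧ G.Adj c d ∧ S c ≠ S d ∧ s(a, b) ≠ s(c, d) := by
  obtain ⟨u, v, huv⟩ := h
  obtain ⟨p⟩ := hconn.preconnected u v
  obtain ⟨a, b, hab, hS⟩ := walk_cross S p huv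
  obtain ⟨x, hx⟩ : ∃ x, x ∉ ({a, b} : Finset V) := by
    by_contra hc
    push Not at hc
    have h1 := Finset.card_le_card (fun x _ => hc x : (Finset.univ : Finset V) ⊆ {a, b})
    have := Finset.card_le_two (a := a) (b := b)
    rw [Finset.card_univ] at h1
    omega
  simp only [Finset.mem_insert, Finset.mem_singleton, not_or] at hx
  by_cases hxa : S x = S a
  · obtain ⟨c, d, hcd, hc, hd, hSc⟩ := avoid_cross G h2vc S a x b hx.1 hab.ne'
      (by rw [hxa]; exact hS)
    refine ⟨a, b, c, d, hab, hS, hcd, hSc, ?_⟩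
    intro he
    have : a ∈ s(c, d) := by rw [← he]; simp
    rw [Sym2.mem_iff] at this
    grind
  · obtain ⟨c, d, hcd, hc, hd, hSc⟩ := avoid_cross G h2vc S b x a hx.2 hab.ne hxa
    refine ⟨a, b, c, d, hab, hS, hcd, hSc, ?_⟩
    intro he
    have : b ∈ s(c, d) := by rw [← he]; simp
    rw [Sym2.mem_iff] at this
    grind

end graph
end TJoin

theorem distribution_over_subsets_of_removable_pairing
    {V : Type*} [Fintype V] [DecidableEq V]
    (G : SimpleGraph V) [DecidableRel G.Adj]
    (hcard : 3 ≤ Fintype.card V)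
    (hconn : G.Connected)
    (h2vc : ∀ v : V, (G.induce {u : V | u ≠ v}).Connected)
    (R : Finset (Sym2 V)) (P : Finset (Finset (Sym2 V)))
    (hR : R ⊆ G.edgeFinset)
    (hPpair : ∀ p ∈ P, p.card = 2)
    (hPsub : ∀ p ∈ P, p ⊆ R)
    (hPdisj : ∀ p ∈ P, ∀ q ∈ P, p ≠ q → Disjoint p q)
    (hPdeg : ∀ p ∈ P, ∃ v : V, (∀ e ∈ p, v ∈ e) ∧ 3 ≤ G.degree v)
    (hPdel : ∀ D : Finset (Sym2 V), D ⊆ R → (∀ p ∈ P, (D ∩ p).card ≤ 1) →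
      (G.deleteEdges (D : Set (Sym2 V))).Connected) :
    ∃ (k : ℕ) (M : Fin k → Finset (Sym2 V)) (p : Fin k → ℝ),
      (∀ i, M i ⊆ G.edgeFinset) ∧
      (∀ i, 0 ≤ p i) ∧ (∑ i, p i = 1) ∧
      (∀ e ∈ G.edgeFinset,
        ∑ i ∈ Finset.univ.filter (fun i => e ∈ M i), p i = 1 / 3) ∧
      (∀ i, ∀ q ∈ P, ((M i) ∩ q).card ≤ 1) ∧
      (∀ i, ∀ v : V,
        Even (G.degree v + ((M i).filter (fun e => v ∈ e)).card)) := by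
  classical
  let EG := {e : Sym2 V // e ∈ G.edgeFinset}
  let PP := {p : Finset (Sym2 V) // p ∈ P}
  have hends : ∀ e : EG, ∃ x y, e.1 = s(x, y) ∧ G.Adj x y := by
    rintro ⟨e, he⟩
    induction e using Sym2.ind with
    | _ x y => exact ⟨x, y, rfl, by simpa using he⟩
  choose X Y hXY hadj using hends
  have hct : ∀ p : PP, ∃ v : V, (∀ e ∈ p.1, v ∈ e) ∧ 3 ≤ G.degree v := fun p => hPdeg p.1 p.2
  choose ctr hctr hdeg using hct
  have huniq : ∀ (p q : PP) (e : Sym2 V), e ∈ p.1 → e ∈ q.1 → p = q := by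
    intro p q e hp hq
    by_contra hne
    have := hPdisj p.1 p.2 q.1 q.2 (fun h => hne (Subtype.ext h))
    exact Finset.disjoint_left.1 this hp hq
  let φ : Sym2 V → V → V ⊕ PP := fun e v =>
    if h : ∃ p : PP, e ∈ p.1 ∧ ctr p = v then Sum.inr h.choose else Sum.inl v
  have hφr : ∀ e v p, φ e v = Sum.inr p ↔ e ∈ p.1 ∧ ctr p = v := by
    intro e v p
    simp only [φ]
    split_ifs with h
    · have hs := h.choose_spec
      constructor
      · intro h1
        rw [Sum.inr.injEq] at h1
        rwa [h1] at hs
      · intro h1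
        rw [huniq _ p e hs.1 h1.1]
    · simp only [false_iff]
      exact fun h1 => h ⟨p, h1⟩
  have hφl : ∀ e v, (¬ ∃ p : PP, e ∈ p.1 ∧ ctr p = v) → φ e v = Sum.inl v := by
    intro e v h
    simp only [φ]
    rw [dif_neg h]
  have hφS : ∀ (S : V ⊕ PP → ZMod 2) e v,
      (∀ p : PP, e ∈ p.1 → S (Sum.inr p) = S (Sum.inl (ctr p))) →
      S (φ e v) = S (Sum.inl v) := by
    intro S e v h
    by_cases hp : ∃ p : PP, e ∈ p.1 ∧ ctr p = v
    · obtain ⟨p, hp, hv⟩ := hp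
      rw [(hφr e v p).2 ⟨hp, hv⟩, h p hp, hv]
    · rw [hφl e v hp]
  let s : EG ⊕ PP → V ⊕ PP := Sum.elim (fun e => φ e.1 (X e)) (fun p => Sum.inl (ctr p))
  let t : EG ⊕ PP → V ⊕ PP := Sum.elim (fun e => φ e.1 (Y e)) (fun p => Sum.inr p)
  -- an edge of G given by adjacent vertices that crosses
  have hcross : ∀ (S : V ⊕ PP → ZMod 2) x y (hxy : G.Adj x y),
      S (φ s(x, y) x) ≠ S (φ s(x, y) y) →
      Sum.inl ⟨s(x, y), by simpa using hxy⟩ ∈ TJoin.cut s t S := by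
    intro S x y hxy h
    simp only [TJoin.cut, Finset.mem_filter, Finset.mem_univ, true_and, s, t, Sum.elim_inl]
    set e : EG := ⟨s(x, y), by simpa using hxy⟩ with he
    have h1 := hXY e
    have h2 : s(x, y) = s(X e, Y e) := h1
    rw [Sym2.eq_iff] at h2
    rcases h2 with ⟨h3, h4⟩ | ⟨h3, h4⟩
    · rw [← h3, ← h4]; exact h
    · rw [← h3, ← h4]; exact h.symm
  have hcut : ∀ S : V ⊕ PP → ZMod 2, (∃ u v, S u ≠ S v) → 2 ≤ (TJoin.cut s t S).card := by
    intro S hS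
    by_cases hall : ∀ p : PP, S (Sum.inr p) = S (Sum.inl (ctr p))
    · have hne : ∃ u v, S (Sum.inl u) ≠ S (Sum.inl v) := by
        have hrep : ∀ x : V ⊕ PP, ∃ u, S x = S (Sum.inl u) := by
          rintro (u | p)
          · exact ⟨u, rfl⟩
          · exact ⟨_, hall p⟩
        obtain ⟨u, v, huv⟩ := hS
        obtain ⟨u', hu⟩ := hrep u
        obtain ⟨v', hv⟩ := hrep v
        exact ⟨u', v', by rwa [← hu, ← hv]⟩
      obtain ⟨a, b, c, d, hab, hSab, hcd, hScd, hne⟩ :=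
        TJoin.two_cross G hcard hconn h2vc (fun v => S (Sum.inl v)) hne
      have h1 := hcross S a b hab (by
        rw [hφS S _ _ (fun p _ => hall p), hφS S _ _ (fun p _ => hall p)]; exact hSab)
      have h2 := hcross S c d hcd (by
        rw [hφS S _ _ (fun p _ => hall p), hφS S _ _ (fun p _ => hall p)]; exact hScd)
      refine Finset.one_lt_card.2 ⟨_, h1, _, h2, ?_⟩
      intro h
      rw [Sum.inl.injEq, Subtype.mk.injEq] at h
      exact hne h
    · push Not at hall
      obtain ⟨p, hp⟩ := hall
      have hpc : ∀ q : PP, S (Sum.inr q) ≠ S (Sum.inl (ctr q)) →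
          (Sum.inr q : EG ⊕ PP) ∈ TJoin.cut s t S := by
        intro q hq
        simp only [TJoin.cut, Finset.mem_filter, Finset.mem_univ, true_and, s, t, Sum.elim_inr]
        exact hq.symm
      by_contra hlt
      have hun : ∀ f ∈ TJoin.cut s t S, f = Sum.inr p := by
        intro f hf
        by_contra hne
        exact hlt (Finset.one_lt_card.2 ⟨_, hf, _, hpc p hp, hne⟩)
      have hq : ∀ q : PP, q ≠ p → S (Sum.inr q) = S (Sum.inl (ctr q)) := by
        intro q hqp
        by_contra hne
        have := hun _ (hpc q hne)
        rw [Sum.inr.injEq] at this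
        exact hqp this
      have hno : ∀ x y, G.Adj x y → S (φ s(x, y) x) = S (φ s(x, y) y) := by
        intro x y hxy
        by_contra hne
        have := hun _ (hcross S x y hxy hne)
        simp at this
      have hnp : ∀ x y, G.Adj x y → s(x, y) ∉ p.1 → S (Sum.inl x) = S (Sum.inl y) := by
        intro x y hxy hxyp
        have h1 := hno x y hxy
        have h2 : ∀ q : PP, s(x, y) ∈ q.1 → S (Sum.inr q) = S (Sum.inl (ctr q)) := by
          intro q hqe
          apply hq
          rintro rfl
          exact hxyp hqe
        rwa [hφS S _ _ h2, hφS S _ _ h2] at h1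
      -- a pair edge
      obtain ⟨e, he⟩ : p.1.Nonempty := by
        rw [← Finset.card_pos, hPpair p.1 p.2]; norm_num
      obtain ⟨u, hu⟩ := Sym2.mem_iff_exists.1 (hctr p e he)
      have heG : e ∈ G.edgeFinset := hR (hPsub p.1 p.2 he)
      subst hu
      have hvu : G.Adj (ctr p) u := by simpa using heG
      have hSu : S (Sum.inl u) = S (Sum.inr p) := by
        have h1 := hno _ _ hvu
        rw [(hφr _ _ p).2 ⟨he, rfl⟩, hφl] at h1
        · exact h1.symm
        · rintro ⟨q, hqe, hqc⟩
          have := huniq q p _ hqe he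
          subst this
          exact hvu.ne hqc
      obtain ⟨x, hvx, hxp⟩ : ∃ x, G.Adj (ctr p) x ∧ s(ctr p, x) ∉ p.1 := by
        by_contra hc
        push Not at hc
        have h1 : (G.neighborFinset (ctr p)).card ≤ p.1.card := by
          apply Finset.card_le_card_of_injOn (fun x => s(ctr p, x))
          · intro x hx
            exact hc x (by simpa using hx)
          · intro x _ y _ hxy
            exact Sym2.congr_right.1 hxy
        have h2 := hdeg p
        rw [SimpleGraph.card_neighborFinset_eq_degree, hPpair p.1 p.2] at h1
        omega
      have hSx := hnp _ _ hvx hxp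
      obtain ⟨y, z, hyz, hy, hz, hSyz⟩ := TJoin.avoid_cross G h2vc (fun v => S (Sum.inl v))
        (ctr p) u x hvu.ne' hvx.ne' (by rw [← hSx, hSu]; exact hp)
      apply hSyz
      apply hnp y z hyz
      intro hmem
      have := hctr p _ hmem
      rw [Sym2.mem_iff] at this
      grind
  obtain ⟨q, hq0, hq1, hqe⟩ := TJoin.third_distribution s t hcut
  let F := {M : Finset (EG ⊕ PP) // TJoin.bd s t M = TJoin.bd s t Finset.univ}
  let F' := {M : F // q M ≠ 0}
  let proj : Finset (EG ⊕ PP) → Finset (Sym2 V) := fun M =>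
    (Finset.univ.filter (fun e : EG => Sum.inl e ∈ M)).map (Function.Embedding.subtype _)
  have hproj : ∀ M (e : EG), e.1 ∈ proj M ↔ Sum.inl e ∈ M := by
    intro M e
    simp only [proj, Finset.mem_map, Finset.mem_filter, Finset.mem_univ, true_and,
      Function.Embedding.subtype_apply]
    constructor
    · rintro ⟨f, hf, hfe⟩
      rwa [← Subtype.ext hfe]
    · intro h
      exact ⟨e, h, rfl⟩
  have hprojE : ∀ M, proj M ⊆ G.edgeFinset := by
    intro M e he
    simp only [proj, Finset.mem_map, Function.Embedding.subtype_apply] at he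
    obtain ⟨f, _, rfl⟩ := he
    exact f.2
  have hprojcard : ∀ (M : Finset (EG ⊕ PP)) (Q : Sym2 V → Prop) [DecidablePred Q],
      ((proj M).filter Q).card = (M ∩ (Finset.univ.filter (fun e : EG => Q e.1)).disjSum ∅).card := by
    intro M Q _
    have : M ∩ (Finset.univ.filter (fun e : EG => Q e.1)).disjSum ∅ =
        ((Finset.univ.filter (fun e : EG => Sum.inl e ∈ M)).filter (fun e : EG => Q e.1)).map
          Function.Embedding.inl := by
      ext f
      rcases f with e | r <;> simp
    rw [this, Finset.card_map]
    simp only [proj]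
    rw [Finset.filter_map, Finset.card_map]
    rfl
  -- sums over positive members
  have hsum : ∀ g : F → ℝ, ∑ M : F', (g M.1) * q M.1 = ∑ M : F, g M * q M := by
    intro g
    have h1 : ∑ M ∈ Finset.univ.filter (fun M : F => q M ≠ 0), g M * q M =
        ∑ M : F', (g M.1) * q M.1 :=
      Finset.sum_subtype (p := fun M : F => q M ≠ 0) _ (by simp) (fun M => g M * q M)
    rw [← h1, Finset.sum_filter]
    refine Finset.sum_congr rfl fun M _ => ?_
    by_cases h : q M = 0 <;> simp [h]
  have hstar : ∀ p : PP, TJoin.star s t (Sum.inr p) =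
      (Finset.univ.filter (fun e : EG => e.1 ∈ p.1)).disjSum {p} := by
    intro p
    ext f
    rw [TJoin.mem_star]
    rcases f with e | r
    · simp only [s, t, Sum.elim_inl, Finset.inl_mem_disjSum, Finset.mem_filter, Finset.mem_univ,
        true_and, hφr, ne_eq]
      have h1 := (hadj e).ne
      have h2 := hctr p e.1
      rw [hXY e, Sym2.mem_iff, ← hXY e] at h2
      grind
    · simp [s, t]
  have hstarcard : ∀ p : PP, (TJoin.star s t (Sum.inr p)).card = 3 := by
    intro p
    rw [hstar, Finset.card_disjSum, Finset.card_singleton]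
    have : (Finset.univ.filter (fun e : EG => e.1 ∈ p.1)).map (Function.Embedding.subtype _)
        = p.1 := by
      ext e
      simp only [Finset.mem_map, Finset.mem_filter, Finset.mem_univ, true_and,
        Function.Embedding.subtype_apply]
      constructor
      · rintro ⟨f, hf, rfl⟩; exact hf
      · intro he
        exact ⟨⟨e, hR (hPsub p.1 p.2 he)⟩, he, rfl⟩
    have h2 := congrArg Finset.card this
    rw [Finset.card_map, hPpair p.1 p.2] at h2
    rw [h2]
  have hstar1 : ∀ (p : PP) (M : F), q M ≠ 0 → (M.1 ∩ TJoin.star s t (Sum.inr p)).card = 1 := by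
    intro p M hM
    have hge : ∀ M : F, 1 ≤ (M.1 ∩ TJoin.star s t (Sum.inr p)).card := by
      intro M
      have h1 := congrFun M.2 (Sum.inr p)
      rw [TJoin.bd_apply, TJoin.bd_apply, Finset.univ_inter, hstarcard,
        ZMod.natCast_eq_natCast_iff'] at h1
      omega
    have htot : ∑ M : F, q M * ((M.1 ∩ TJoin.star s t (Sum.inr p)).card : ℝ) = 1 := by
      have h1 : ∀ M : F, q M * ((M.1 ∩ TJoin.star s t (Sum.inr p)).card : ℝ) =
          ∑ f ∈ TJoin.star s t (Sum.inr p), if f ∈ M.1 then q M else 0 := by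
        intro M
        rw [← Finset.sum_filter, Finset.sum_const, Finset.filter_mem_eq_inter, Finset.inter_comm,
          nsmul_eq_mul, mul_comm]
      simp only [h1]
      rw [Finset.sum_comm]
      rw [Finset.sum_congr rfl (fun f _ => hqe f)]
      rw [Finset.sum_const, hstarcard]
      norm_num
    have hz : ∑ M : F, q M * (((M.1 ∩ TJoin.star s t (Sum.inr p)).card : ℝ) - 1) = 0 := by
      simp only [mul_sub, mul_one, Finset.sum_sub_distrib]
      rw [htot, hq1, sub_self]
    rw [Finset.sum_eq_zero_iff_of_nonneg] at hz
    · have h1 := hz M (Finset.mem_univ _)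
      rcases mul_eq_zero.1 h1 with h2 | h2
      · exact absurd h2 hM
      · have : ((M.1 ∩ TJoin.star s t (Sum.inr p)).card : ℝ) = 1 := by linarith
        exact_mod_cast this
    · intro M _
      apply mul_nonneg (hq0 M)
      have : (1 : ℝ) ≤ (M.1 ∩ TJoin.star s t (Sum.inr p)).card := by exact_mod_cast hge M
      linarith
  let eqv : Fin (Fintype.card F') ≃ F' := (Fintype.equivFin F').symm
  refine ⟨Fintype.card F', fun i => proj (eqv i).1.1, fun i => q (eqv i).1, fun i => hprojE _,
    fun i => hq0 _, ?_, ?_, ?_, ?_⟩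
  · rw [Equiv.sum_comp eqv (fun M : F' => q M.1)]
    have := hsum (fun _ => 1)
    simp only [one_mul] at this
    rw [this, hq1]
  · intro e he
    rw [Finset.sum_filter,
      Equiv.sum_comp eqv (fun M : F' => if e ∈ proj M.1.1 then q M.1 else 0)]
    have := hsum (fun M => if e ∈ proj M.1 then 1 else 0)
    simp only [ite_mul, one_mul, zero_mul] at this
    rw [this, ← hqe (Sum.inl ⟨e, he⟩)]
    refine Finset.sum_congr rfl fun M _ => ?_
    have h1 := hproj M.1 ⟨e, he⟩
    simp only at h1
    simp only [h1]
  · intro i r hr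
    have h1 := hstar1 ⟨r, hr⟩ (eqv i).1 (eqv i).2
    rw [← h1, ← Finset.filter_mem_eq_inter, hprojcard, hstar]
    apply Finset.card_le_card
    apply Finset.inter_subset_inter_left
    exact Finset.disjSum_mono (le_refl _) (by simp)
  · intro i v
    set M := (eqv i).1
    let S : V ⊕ PP → ZMod 2 := Sum.elim (fun u => if u = v then 1 else 0)
      (fun p => if ctr p = v then 1 else 0)
    have hScut : TJoin.cut s t S = (Finset.univ.filter (fun e : EG => v ∈ e.1)).disjSum ∅ := by
      ext f
      simp only [TJoin.cut, Finset.mem_filter, Finset.mem_univ, true_and]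
      rcases f with e | r
      · have h0 : ∀ u, S (φ e.1 u) = if u = v then 1 else 0 := by
          intro u
          rw [hφS S _ _ (fun p _ => rfl)]
          rfl
        simp only [s, t, Sum.elim_inl, h0, Finset.inl_mem_disjSum, Finset.mem_filter,
          Finset.mem_univ, true_and]
        have h1 := (hadj e).ne
        rw [hXY e, Sym2.mem_iff]
        by_cases h2 : X e = v <;> by_cases h3 : Y e = v
        · exact absurd (h2.trans h3.symm) h1
        · simp [h2, h3]
        · simp [h2, h3]
        · simp [h2, h3, Ne.symm h2, Ne.symm h3]
      · simp [s, t, S]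
    have h1 := congrArg (fun x : V ⊕ PP → ZMod 2 => ∑ u, x u * S u) M.2
    simp only [TJoin.bd_pair] at h1
    rw [TJoin.sum_cut, TJoin.sum_cut, hScut, ← hprojcard M.1 (fun e => v ∈ e),
      ← hprojcard Finset.univ (fun e => v ∈ e),
      ZMod.natCast_eq_natCast_iff'] at h1
    have h2 : proj Finset.univ = G.edgeFinset := by
      apply Finset.Subset.antisymm (hprojE _)
      intro e he
      exact (hproj Finset.univ ⟨e, he⟩).2 (Finset.mem_univ _)
    have h3 : (G.edgeFinset.filter (fun e => v ∈ e)).card = G.degree v := by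
      rw [← SimpleGraph.card_incidenceFinset_eq_degree, SimpleGraph.incidenceFinset_eq_filter]
    rw [h2, h3] at h1
    change Even (G.degree v + ((proj M.1).filter (fun e => v ∈ e)).card)
    rw [Nat.even_iff]
    omega
end

section
/- Let G = (V,E) be a cubic 2-edge-connected simple graph. Then there exist finitely many perfect matchings M_1, …, M_k of G and nonnegative reals p_1, …, p_k summing to 1 such that for every edge e ∈ E, the sum of p_i over all i with e ∈ M_i equals exactly 1/3. -/
open SimpleGraph

namespace PMDist

/-- Weight of the cut `U` inside `W`. -/
def cut {V : Type*} [DecidableEq V] (x : V → V → ℝ) (W U : Finset V) : ℝ :=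
  ∑ u ∈ U, ∑ v ∈ W \ U, x u v

/-- Edmonds' inequality description on vertex set `W`. -/
structure InP {V : Type*} [DecidableEq V] (W : Finset V) (x : V → V → ℝ) : Prop where
  nonneg : ∀ u v, 0 ≤ x u v
  symm : ∀ u v, x u v = x v u
  diag : ∀ u, x u u = 0
  supp : ∀ u v, u ∉ W → x u v = 0
  deg : ∀ u ∈ W, cut x W {u} = 1
  odd : ∀ U, U ⊆ W → Odd U.card → 1 ≤ cut x W U

/-- `f` is a fixed point free involution of `W`. -/
def IsPM {V : Type*} (W : Finset V) (f : V → V) : Prop :=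
  ∀ u ∈ W, f u ∈ W ∧ f (f u) = u ∧ f u ≠ u

/-- Indicator matrix. -/
def mat {V : Type*} [DecidableEq V] (W : Finset V) (f : V → V) : V → V → ℝ :=
  fun u v => if u ∈ W ∧ f u = v then 1 else 0

section
variable {V : Type*} [DecidableEq V] {W : Finset V} {x : V → V → ℝ}

lemma row_eq_cut (hd : ∀ u, x u u = 0) {u : V} (hu : u ∈ W) :
    ∑ v ∈ W, x u v = cut x W {u} := by
  unfold cut
  rw [Finset.sum_singleton, ← Finset.sum_sdiff (Finset.singleton_subset_iff.2 hu)]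
  simp [hd]

lemma InP.row (h : InP W x) {u : V} (hu : u ∈ W) : ∑ v ∈ W, x u v = 1 := by
  rw [row_eq_cut h.diag hu, h.deg u hu]

lemma InP.supp' (h : InP W x) {u v : V} (hv : v ∉ W) : x u v = 0 := by
  rw [h.symm, h.supp _ _ hv]

lemma InP.even (h : InP W x) : Even W.card := by
  by_contra hc
  have := h.odd W (le_refl _) (Nat.not_even_iff_odd.1 hc)
  simp [cut] at this
  linarith

lemma cut_compl (hs : ∀ u v, x u v = x v u) {U : Finset V} (hU : U ⊆ W) :
    cut x W (W \ U) = cut x W U := by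
  unfold cut
  rw [Finset.sdiff_sdiff_eq_self hU, Finset.sum_comm]
  exact Finset.sum_congr rfl fun _ _ => Finset.sum_congr rfl fun _ _ => hs _ _

lemma tutte_univ {α : Type*} [Fintype α] [DecidableEq α] {x : α → α → ℝ}
    (h : InP Finset.univ x) : ∃ f : α → α, IsPM Finset.univ f ∧ ∀ u, 0 < x u (f u) := by
  classical
  let G : SimpleGraph α :=
    { Adj := fun u v => 0 < x u v
      symm := ⟨fun u v huv => by rw [h.symm]; exact huv⟩
      loopless := ⟨fun u hu => by rw [h.diag] at hu; exact lt_irrefl _ hu⟩ }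
  have key : ∀ u, ¬ G.IsTutteViolator u := by
    intro T hT
    unfold IsTutteViolator at hT
    set H := ((⊤ : G.Subgraph).deleteVerts T).coe with hH
    let Tf : Finset α := Finset.univ.filter (· ∈ T)
    have hTf : T.ncard = Tf.card := by
      rw [← Set.ncard_coe_finset]; congr; ext; simp [Tf]
    let C : H.ConnectedComponent → Finset α := fun c =>
      Finset.univ.filter (fun a => ∃ ha : a ∈ ((⊤ : G.Subgraph).deleteVerts T).verts,
        H.connectedComponentMk ⟨a, ha⟩ = c)
    let O : Finset H.ConnectedComponent := Finset.univ.filter (fun c => c ∈ H.oddComponents)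
    have hO : H.oddComponents.ncard = O.card := by
      rw [← Set.ncard_coe_finset]; congr; ext; simp [O]
    have hcard : ∀ c, (C c).card = c.supp.ncard := by
      intro c
      rw [← Set.ncard_image_of_injective _ Subtype.val_injective, ← Set.ncard_coe_finset]
      congr 1
      ext a
      simp [C]
    have h1 : ∀ c ∈ O, (1:ℝ) ≤ ∑ u ∈ C c, ∑ v ∈ Tf, x u v := by
      intro c hc
      have hodd : Odd (C c).card := by
        rw [hcard]; simpa [O] using hc
      refine (h.odd (C c) (Finset.subset_univ _) hodd).trans ?_
      unfold cut
      refine Finset.sum_le_sum fun u hu => ?_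
      rw [← Finset.sum_filter_ne_zero]
      refine Finset.sum_le_sum_of_subset_of_nonneg ?_ fun _ _ _ => h.nonneg _ _
      intro v hv
      simp only [Finset.mem_filter, Finset.mem_sdiff, Finset.mem_univ, true_and] at hv
      obtain ⟨hv, hx⟩ := hv
      by_contra hvT
      apply hv
      simp only [C, Finset.mem_filter, Finset.mem_univ, true_and] at hu ⊢
      obtain ⟨ha, hac⟩ := hu
      have hvT' : v ∉ T := by simpa [Tf] using hvT
      have hvm : v ∈ ((⊤ : G.Subgraph).deleteVerts T).verts := by simp [hvT']
      refine ⟨hvm, ?_⟩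
      rw [← hac, ConnectedComponent.eq]
      apply SimpleGraph.Adj.reachable
      have huT : u ∉ T := by simpa using ha
      have : G.Adj v u := by
        change 0 < x v u
        rw [h.symm]
        exact lt_of_le_of_ne (h.nonneg _ _) (Ne.symm hx)
      simp [hH, hvT', huT, this]
    have h2 : (O.card : ℝ) ≤ Tf.card := by
      calc (O.card : ℝ) = ∑ c ∈ O, (1:ℝ) := by simp
        _ ≤ ∑ c ∈ O, ∑ u ∈ C c, ∑ v ∈ Tf, x u v := Finset.sum_le_sum h1
        _ = ∑ u ∈ O.biUnion C, ∑ v ∈ Tf, x u v := by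
            rw [Finset.sum_biUnion]
            intro c _ d _ hcd
            rw [Function.onFun, Finset.disjoint_left]
            intro a ha hb
            simp only [C, Finset.mem_filter, Finset.mem_univ, true_and] at ha hb
            obtain ⟨ha, ha'⟩ := ha
            obtain ⟨hb, hb'⟩ := hb
            exact hcd (ha'.symm.trans hb')
        _ ≤ ∑ u, ∑ v ∈ Tf, x u v :=
            Finset.sum_le_sum_of_subset_of_nonneg (Finset.subset_univ _)
              fun _ _ _ => Finset.sum_nonneg fun _ _ => h.nonneg _ _
        _ = ∑ v ∈ Tf, ∑ u, x v u := by
            rw [Finset.sum_comm]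
            exact Finset.sum_congr rfl fun _ _ => Finset.sum_congr rfl fun _ _ => h.symm _ _
        _ = Tf.card := by
            rw [Finset.sum_congr rfl fun v _ => h.row (Finset.mem_univ v)]
            simp
    rw [hTf, hO] at hT
    have : O.card ≤ Tf.card := by exact_mod_cast h2
    omega
  obtain ⟨M, hM⟩ := SimpleGraph.tutte.2 key
  rw [Subgraph.isPerfectMatching_iff] at hM
  choose f hf hu using hM
  refine ⟨f, fun u _ => ⟨Finset.mem_univ _, ?_, ?_⟩, fun u => ?_⟩
  · exact (hu (f u) u (M.adj_comm _ _ |>.1 (hf u))).symm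
  · exact (M.adj_sub (hf u)).ne'
  · exact M.adj_sub (hf u)

lemma tutte_on (h : InP W x) : ∃ f : V → V, IsPM W f ∧ ∀ u ∈ W, 0 < x u (f u) := by
  have hcut : ∀ U : Finset W, cut (fun a b : W => x a b) Finset.univ U
      = cut x W (U.map (Function.Embedding.subtype _)) := by
    intro U
    unfold cut
    rw [Finset.sum_map]
    refine Finset.sum_congr rfl fun u _ => ?_
    have : W \ U.map (Function.Embedding.subtype _)
        = (Finset.univ \ U).map (Function.Embedding.subtype _) := by
      ext a; by_cases ha : a ∈ W <;> simp [ha]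
    rw [this, Finset.sum_map]
    rfl
  have h' : InP (Finset.univ : Finset W) (fun a b : W => x a b) := by
    refine ⟨fun _ _ => h.nonneg _ _, fun _ _ => h.symm _ _, fun _ => h.diag _, by simp, ?_, ?_⟩
    · intro u _
      rw [hcut]
      exact h.deg u u.2
    · intro U _ hU
      rw [hcut]
      refine h.odd _ ?_ (by simpa using hU)
      intro a; simp; intro a _; exact a
  obtain ⟨f, hf, hp⟩ := tutte_univ h'
  refine ⟨fun v => if hv : v ∈ W then f ⟨v, hv⟩ else v, ?_, ?_⟩
  · intro u hu
    obtain ⟨-, h2, h3⟩ := hf ⟨u, hu⟩ (Finset.mem_univ _)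
    refine ⟨by simp [hu], by simp [hu, h2], ?_⟩
    simp only [hu, dite_true]
    intro hc
    exact h3 (Subtype.ext hc)
  · intro u hu
    simpa [hu] using hp ⟨u, hu⟩
end

section
variable {V : Type*} [DecidableEq V] {W : Finset V} {x : V → V → ℝ} {f : V → V}

lemma mat_nonneg (W : Finset V) (f : V → V) (u v : V) : 0 ≤ mat W f u v := by
  unfold mat; split_ifs <;> norm_num

lemma mat_symm (hf : IsPM W f) (u v : V) : mat W f u v = mat W f v u := by
  unfold mat
  congr 1
  apply propext
  constructor
  · rintro ⟨h, rfl⟩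
    exact ⟨(hf u h).1, (hf u h).2.1⟩
  · rintro ⟨h, rfl⟩
    exact ⟨(hf v h).1, (hf v h).2.1⟩

lemma mat_diag (hf : IsPM W f) (u : V) : mat W f u u = 0 := by
  unfold mat
  rw [if_neg]
  rintro ⟨h, h'⟩
  exact (hf u h).2.2 h'

lemma mat_supp {u : V} (hu : u ∉ W) (v : V) : mat W f u v = 0 := by
  simp [mat, hu]

lemma mat_row (hf : IsPM W f) {u : V} (hu : u ∈ W) : ∑ v ∈ W, mat W f u v = 1 := by
  simp [mat, hu, (hf u hu).1]

lemma mat_cut_le (hf : IsPM W f) {U : Finset V} (hU : U ⊆ W) : cut (mat W f) W U ≤ U.card := by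
  unfold cut
  calc _ ≤ ∑ u ∈ U, (1:ℝ) := by
        refine Finset.sum_le_sum fun u hu => ?_
        rw [← mat_row hf (hU hu)]
        exact Finset.sum_le_sum_of_subset_of_nonneg Finset.sdiff_subset
          fun _ _ _ => mat_nonneg _ _ _ _
    _ = _ := by simp

lemma cut_lin (x y z : V → V → ℝ) (a b : ℝ) (h : ∀ u v, z u v = a * x u v + b * y u v)
    (U : Finset V) : cut z W U = a * cut x W U + b * cut y W U := by
  unfold cut
  simp only [h, Finset.sum_add_distrib, Finset.mul_sum]

/-- Support size. -/
noncomputable def ssize (W : Finset V) (x : V → V → ℝ) : ℕ :=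
  ((W ×ˢ W).filter fun p => x p.1 p.2 ≠ 0).card

lemma ratio_aux {ι : Type*} (I : Finset ι) (a b : ι → ℝ) (ha : ∀ i ∈ I, 0 ≤ a i)
    (hb : ∃ i ∈ I, 0 < b i) :
    ∃ ε : ℝ, 0 ≤ ε ∧ (∀ i ∈ I, ε * b i ≤ a i) ∧ ∃ i ∈ I, 0 < b i ∧ a i = ε * b i := by
  classical
  obtain ⟨i0, hi0, hb0⟩ := hb
  obtain ⟨i, hi, hmin⟩ := Finset.exists_min_image (I.filter fun i => 0 < b i)
    (fun i => a i / b i) ⟨i0, by simp [hi0, hb0]⟩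
  simp only [Finset.mem_filter] at hi hmin
  have hε : 0 ≤ a i / b i := div_nonneg (ha i hi.1) hi.2.le
  refine ⟨a i / b i, hε, ?_, i, hi.1, hi.2, ?_⟩
  · intro j hj
    by_cases hbj : 0 < b j
    · have := hmin j ⟨hj, hbj⟩
      rwa [le_div_iff₀ hbj] at this
    · exact (mul_nonpos_of_nonneg_of_nonpos hε (not_lt.1 hbj)).trans (ha j hj)
  · field_simp [hi.2.ne']

lemma step (h : InP W x) (hf : IsPM W f) (hp : ∀ u ∈ W, 0 < x u (f u)) (hW : W.Nonempty) :
    x = mat W f ∨ ∃ (ε : ℝ) (y : V → V → ℝ), 0 ≤ ε ∧ ε ≤ 1 ∧ InP W y ∧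
      x = ε • mat W f + (1 - ε) • y ∧
      (ssize W y < ssize W x ∨
        ∃ U ⊆ W, Odd U.card ∧ cut y W U = 1 ∧ 2 ≤ U.card ∧ 2 ≤ (W \ U).card) := by
  classical
  let I : Finset (V ⊕ Finset V) := W.disjSum (W.powerset.filter fun U => Odd U.card)
  let a : V ⊕ Finset V → ℝ := Sum.elim (fun u => x u (f u)) (fun U => cut x W U - 1)
  let b : V ⊕ Finset V → ℝ := Sum.elim (fun _ => 1) (fun U => cut (mat W f) W U - 1)
  obtain ⟨ε, hε0, hall, i, hi, hbi, htight⟩ := ratio_aux I a b (by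
    rintro (u | U) hi
    · exact h.nonneg _ _
    · have : U ⊆ W ∧ Odd U.card := by simpa [I] using hi
      have := h.odd U this.1 this.2
      simp only [a, Sum.elim_inr]; linarith) (by
    obtain ⟨u, hu⟩ := hW
    exact ⟨Sum.inl u, by simpa [I] using hu, by simp [b]⟩)
  have hle : ∀ u ∈ W, ε ≤ x u (f u) := by
    intro u hu
    simpa [a, b] using hall (Sum.inl u) (by simpa [I] using hu)
  have hcut : ∀ U ⊆ W, Odd U.card → ε * (cut (mat W f) W U - 1) ≤ cut x W U - 1 := by
    intro U hU ho
    exact hall (Sum.inr U) (by simp [I, hU, ho])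
  have hx1 : ∀ u ∈ W, x u (f u) ≤ 1 := by
    intro u hu
    rw [← h.row hu]
    exact Finset.single_le_sum (f := fun v => x u v) (fun _ _ => h.nonneg _ _) (hf u hu).1
  have hε1 : ε ≤ 1 := by
    obtain ⟨u, hu⟩ := hW
    exact (hle u hu).trans (hx1 u hu)
  rcases hε1.eq_or_lt with hε | hlt
  · left
    ext u v
    by_cases hu : u ∈ W
    · have hfu : x u (f u) = 1 := le_antisymm (hx1 u hu) (hε ▸ hle u hu)
      by_cases hv : f u = v
      · subst hv; simp [mat, hu, hfu]
      · have : mat W f u v = 0 := by simp [mat, hv]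
        rw [this]
        by_cases hvW : v ∈ W
        · have hr := h.row hu
          rw [← Finset.add_sum_erase _ _ (hf u hu).1, hfu] at hr
          have hz : ∑ v ∈ W.erase (f u), x u v = 0 := by linarith
          rw [Finset.sum_eq_zero_iff_of_nonneg fun _ _ => h.nonneg _ _] at hz
          exact hz v (by simp [hvW, Ne.symm hv])
        · exact h.supp' hvW
    · rw [h.supp _ _ hu, mat_supp hu]
  · right
    have h1 : 0 < 1 - ε := by linarith
    let y : V → V → ℝ := fun u v => (1 - ε)⁻¹ * x u v + (-((1 - ε)⁻¹ * ε)) * mat W f u v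
    have hy : ∀ u v, y u v = (1 - ε)⁻¹ * (x u v - ε * mat W f u v) := by
      intro u v; simp only [y]; ring
    have hycut : ∀ U, cut y W U = (1 - ε)⁻¹ * (cut x W U - ε * cut (mat W f) W U) := by
      intro U
      rw [cut_lin x (mat W f) y _ _ (fun _ _ => rfl)]; ring
    have hyP : InP W y := by
      refine ⟨?_, ?_, ?_, ?_, ?_, ?_⟩
      · intro u v
        rw [hy]
        refine mul_nonneg (inv_nonneg.2 h1.le) ?_
        by_cases hc : u ∈ W ∧ f u = v
        · obtain ⟨hu, rfl⟩ := hc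
          have := hle u hu
          simp [mat, hu]; linarith
        · simp [mat, hc, h.nonneg]
      · intro u v; rw [hy, hy, h.symm, mat_symm hf]
      · intro u; rw [hy, h.diag, mat_diag hf]; simp
      · intro u v hu; rw [hy, h.supp _ _ hu, mat_supp hu]; simp
      · intro u hu
        rw [hycut, h.deg u hu, ← row_eq_cut (mat_diag hf) hu, mat_row hf hu]
        field_simp
      · intro U hU ho
        rw [hycut, inv_mul_eq_div, le_div_iff₀ h1]
        have := hcut U hU ho
        linarith
    refine ⟨ε, y, hε0, hε1, hyP, ?_, ?_⟩
    · ext u v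
      simp only [Pi.add_apply, Pi.smul_apply, smul_eq_mul, hy]
      field_simp
      ring
    · rcases i with u | U
      · left
        have hu : u ∈ W := by simpa [I] using hi
        have ht : x u (f u) = ε := by simpa [a, b] using htight
        unfold ssize
        apply Finset.card_lt_card
        rw [Finset.ssubset_iff_of_subset]
        · refine ⟨(u, f u), ?_, ?_⟩
          · simp [hu, (hf u hu).1, (hp u hu).ne']
          · simp [hy, mat, hu, ht]
        · intro p hpm
          simp only [Finset.mem_filter] at hpm ⊢
          refine ⟨hpm.1, fun h0 => hpm.2 ?_⟩
          have h2 := hyP.nonneg p.1 p.2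
          have h3 : 0 ≤ ε * mat W f p.1 p.2 := mul_nonneg hε0 (mat_nonneg _ _ _ _)
          refine le_antisymm ?_ h2
          rw [hy, h0]
          exact mul_nonpos_of_nonneg_of_nonpos (inv_nonneg.2 h1.le) (by linarith)
      · right
        obtain ⟨hU, ho⟩ : U ⊆ W ∧ Odd U.card := by simpa [I] using hi
        have ht : cut x W U - 1 = ε * (cut (mat W f) W U - 1) := htight
        have hb : 0 < cut (mat W f) W U - 1 := hbi
        refine ⟨U, hU, ho, ?_, ?_, ?_⟩
        · rw [hycut]
          have : cut x W U - ε * cut (mat W f) W U = 1 - ε := by linarith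
          rw [this]; field_simp
        · have := mat_cut_le hf hU
          have : (1:ℝ) < U.card := by linarith
          exact_mod_cast this
        · have := mat_cut_le hf (Finset.sdiff_subset (s := W) (t := U))
          rw [cut_compl (mat_symm hf) hU] at this
          have : (1:ℝ) < (W \ U).card := by linarith
          exact_mod_cast this
end

section
variable {V : Type*} [DecidableEq V] {W : Finset V} {x : V → V → ℝ} {f : V → V}

/-- Collapse `S` to `s0`. -/
def col (S : Finset V) (s0 v : V) : V := if v ∈ S then s0 else v

/-- Contracted weights. -/
def contr (W : Finset V) (x : V → V → ℝ) (S : Finset V) (s0 : V) : V → V → ℝ := fun u v =>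
  if u = v then 0 else
    ∑ a ∈ W with col S s0 a = u, ∑ b ∈ W with col S s0 b = v, x a b

variable {S : Finset V} {s0 : V}

lemma contr_cut (U : Finset V) :
    cut (contr W x S s0) (insert s0 (W \ S)) U = cut x W (W.filter fun a => col S s0 a ∈ U) := by
  unfold cut
  have h1 : W \ (W.filter fun a => col S s0 a ∈ U)
      = W.filter fun a => col S s0 a ∈ insert s0 (W \ S) \ U := by
    ext a
    simp only [Finset.mem_sdiff, Finset.mem_filter, Finset.mem_insert]
    unfold col
    split_ifs <;> simp_all
  rw [h1, ← Finset.sum_fiberwise_eq_sum_filter]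
  refine Finset.sum_congr rfl fun u hu => ?_
  simp_rw [← Finset.sum_fiberwise_eq_sum_filter W (insert s0 (W \ S) \ U) (col S s0)]
  rw [Finset.sum_comm]
  refine Finset.sum_congr rfl fun v hv => ?_
  have : u ≠ v := by
    rintro rfl
    exact (Finset.mem_sdiff.1 hv).2 hu
  simp [contr, this]

lemma fib_s0 (hS : S ⊆ W) (hs0 : s0 ∈ S) : (W.filter fun a => col S s0 a = s0) = S := by
  ext a
  simp only [Finset.mem_filter]
  unfold col
  constructor
  · rintro ⟨h1, h2⟩
    by_contra hc
    rw [if_neg hc] at h2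
    exact hc (h2 ▸ hs0)
  · intro h; exact ⟨hS h, by simp [h]⟩

lemma fib_t (hs0 : s0 ∈ S) {t : V} (ht : t ∈ W \ S) :
    (W.filter fun a => col S s0 a = t) = {t} := by
  ext a
  rw [Finset.mem_sdiff] at ht
  simp only [Finset.mem_filter, Finset.mem_singleton]
  unfold col
  constructor
  · rintro ⟨h1, h2⟩
    split_ifs at h2 with hc
    · exact absurd hs0 (h2 ▸ ht.2)
    · exact h2
  · rintro rfl; exact ⟨ht.1, by simp [ht.2]⟩

lemma contr_odd (hS : S ⊆ W) (hs0 : s0 ∈ S) (hSo : Odd S.card) {U : Finset V}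
    (hU : U ⊆ insert s0 (W \ S)) (hUo : Odd U.card) :
    Odd (W.filter fun a => col S s0 a ∈ U).card := by
  by_cases h : s0 ∈ U
  · have : (W.filter fun a => col S s0 a ∈ U) = U.erase s0 ∪ S := by
      ext a
      have := @hU a
      have := @hS a
      simp only [Finset.mem_filter, Finset.mem_union, Finset.mem_erase, Finset.mem_insert,
        Finset.mem_sdiff] at *
      unfold col
      by_cases ha : a ∈ S
      · simp_all
      · rw [if_neg ha]
        have : a ≠ s0 := by rintro rfl; exact ha hs0
        tauto
    rw [this, Finset.card_union_of_disjoint, Finset.card_erase_of_mem h]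
    · have := Finset.card_pos.2 ⟨s0, h⟩
      obtain ⟨k, hk⟩ := hUo
      obtain ⟨l, hl⟩ := hSo
      exact ⟨k + l, by omega⟩
    · rw [Finset.disjoint_left]
      intro a ha haS
      have := hU (Finset.mem_of_mem_erase ha)
      have hne := Finset.ne_of_mem_erase ha
      simp_all
  · have : (W.filter fun a => col S s0 a ∈ U) = U := by
      ext a
      have := @hU a
      simp only [Finset.mem_filter, Finset.mem_insert, Finset.mem_sdiff] at *
      unfold col
      by_cases ha : a ∈ S
      · simp only [ha, if_true]
        constructor
        · intro h'; exact absurd h'.2 h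
        · intro h'
          rcases this h' with rfl | h''
          · exact absurd h' h
          · exact absurd ha h''.2
      · rw [if_neg ha]
        constructor
        · exact fun h' => h'.2
        · intro h'
          rcases this h' with rfl | h''
          · exact absurd h' h
          · exact ⟨h''.1, h'⟩
    rwa [this]

lemma contr_InP (h : InP W x) (hS : S ⊆ W) (hs0 : s0 ∈ S) (hSo : Odd S.card)
    (hc : cut x W S = 1) : InP (insert s0 (W \ S)) (contr W x S s0) := by
  refine ⟨?_, ?_, ?_, ?_, ?_, ?_⟩
  · intro u v
    unfold contr
    split_ifs
    · exact le_rfl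
    · exact Finset.sum_nonneg fun _ _ => Finset.sum_nonneg fun _ _ => h.nonneg _ _
  · intro u v
    unfold contr
    by_cases huv : u = v
    · simp [huv]
    · rw [if_neg huv, if_neg (Ne.symm huv), Finset.sum_comm]
      exact Finset.sum_congr rfl fun _ _ => Finset.sum_congr rfl fun _ _ => h.symm _ _
  · intro u; simp [contr]
  · intro u v hu
    unfold contr
    split_ifs
    · rfl
    · have : (W.filter fun a => col S s0 a = u) = ∅ := by
        rw [Finset.filter_eq_empty_iff]
        rintro a ha rfl
        apply hu
        unfold col
        split_ifs with haS <;> simp [ha, haS]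
      rw [this]; simp
  · intro u hu
    rw [contr_cut]
    simp only [Finset.mem_singleton]
    rcases Finset.mem_insert.1 hu with rfl | hu
    · rw [fib_s0 hS hs0, hc]
    · rw [fib_t hs0 hu, h.deg u (Finset.mem_sdiff.1 hu).1]
  · intro U hU hUo
    rw [contr_cut]
    exact h.odd _ (Finset.filter_subset _ _) (contr_odd hS hs0 hSo hU hUo)

lemma contr_tt (h : InP W x) (hs0 : s0 ∈ S) {u v : V} (hu : u ∈ W \ S) (hv : v ∈ W \ S) :
    contr W x S s0 u v = x u v := by
  unfold contr
  split_ifs with huv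
  · rw [huv, h.diag]
  · rw [fib_t hs0 hu, fib_t hs0 hv]; simp

lemma contr_st (h : InP W x) (hS : S ⊆ W) (hs0 : s0 ∈ S) {u : V} (hu : u ∈ W \ S) :
    contr W x S s0 s0 u = ∑ s ∈ S, x u s := by
  unfold contr
  rw [if_neg, fib_t hs0 hu, fib_s0 hS hs0]
  · simp [h.symm u]
  · rintro rfl; exact (Finset.mem_sdiff.1 hu).2 hs0

lemma coupling_half {κ : Type*} [Fintype κ] (S T : Finset V) (hx : ∀ u v, 0 ≤ x u v)
    (r : κ → ℝ) (s : κ → V) (hs : ∀ j, s j ∈ S)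
    (hβ : ∀ v ∈ S, ∑ j, r j * (if s j = v then 1 else 0) = ∑ u ∈ T, x u v)
    (t : V) (ht : t ∈ T) (hα : 0 < ∑ v ∈ S, x t v) :
    ∑ j, r j * (x t (s j) / ((∑ v ∈ S, x t v) * ∑ u ∈ T, x u (s j))) = 1 := by
  have h1 : ∀ φ : V → ℝ, ∑ j, r j * φ (s j) = ∑ v ∈ S, (∑ u ∈ T, x u v) * φ v := by
    intro φ
    calc ∑ j, r j * φ (s j) = ∑ j, ∑ v ∈ S, r j * (if s j = v then 1 else 0) * φ v := by
          refine Finset.sum_congr rfl fun j _ => ?_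
          rw [Finset.sum_eq_single (s j)]
          · simp
          · intro b _ hb; simp [Ne.symm hb]
          · intro hc; exact absurd (hs j) hc
      _ = _ := by
          rw [Finset.sum_comm]
          refine Finset.sum_congr rfl fun v hv => ?_
          rw [← Finset.sum_mul, hβ v hv]
  rw [h1 (fun v => x t v / ((∑ v ∈ S, x t v) * ∑ u ∈ T, x u v))]
  have h2 : ∀ v ∈ S, (∑ u ∈ T, x u v) * (x t v / ((∑ v ∈ S, x t v) * ∑ u ∈ T, x u v))
      = x t v / ∑ v ∈ S, x t v := by
    intro v _
    have hle : x t v ≤ ∑ u ∈ T, x u v :=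
      Finset.single_le_sum (f := fun u => x u v) (fun _ _ => hx _ _) ht
    by_cases h0 : ∑ u ∈ T, x u v = 0
    · have : x t v = 0 := le_antisymm (h0 ▸ hle) (hx _ _)
      rw [h0, this]; simp
    · field_simp
  rw [Finset.sum_congr rfl h2, ← Finset.sum_div, div_self hα.ne']

lemma coupling {ι κ : Type*} [Fintype ι] [Fintype κ] (S T : Finset V) (hx : ∀ u v, 0 ≤ x u v)
    (w : ι → ℝ) (t : ι → V) (ht : ∀ i, t i ∈ T) (hw : ∀ i, 0 < w i)
    (r : κ → ℝ) (s : κ → V) (hs : ∀ j, s j ∈ S) (hr : ∀ j, 0 < r j)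
    (hα : ∀ u ∈ T, ∑ i, w i * (if t i = u then 1 else 0) = ∑ v ∈ S, x u v)
    (hβ : ∀ v ∈ S, ∑ j, r j * (if s j = v then 1 else 0) = ∑ u ∈ T, x u v) :
    ∃ ω : ι → κ → ℝ, (∀ i j, 0 ≤ ω i j) ∧ (∀ i, ∑ j, ω i j = w i) ∧ (∀ j, ∑ i, ω i j = r j) ∧
      ∀ u ∈ T, ∀ v ∈ S,
        ∑ i, ∑ j, ω i j * ((if t i = u then 1 else 0) * (if s j = v then 1 else 0)) = x u v := by
  have hα0 : ∀ i, 0 < ∑ v ∈ S, x (t i) v := by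
    intro i
    rw [← hα _ (ht i)]
    refine Finset.sum_pos' (fun k _ => mul_nonneg (hw k).le (by split_ifs <;> norm_num))
      ⟨i, Finset.mem_univ _, by simpa using hw i⟩
  have hβ0 : ∀ j, 0 < ∑ u ∈ T, x u (s j) := by
    intro j
    rw [← hβ _ (hs j)]
    refine Finset.sum_pos' (fun k _ => mul_nonneg (hr k).le (by split_ifs <;> norm_num))
      ⟨j, Finset.mem_univ _, by simpa using hr j⟩
  refine ⟨fun i j => w i * (r j * (x (t i) (s j) /
    ((∑ v ∈ S, x (t i) v) * ∑ u ∈ T, x u (s j)))), ?_, ?_, ?_, ?_⟩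
  · intro i j
    exact mul_nonneg (hw i).le (mul_nonneg (hr j).le (div_nonneg (hx _ _)
      (mul_nonneg (hα0 i).le (hβ0 j).le)))
  · intro i
    rw [← Finset.mul_sum, coupling_half S T hx r s hs hβ (t i) (ht i) (hα0 i), mul_one]
  · intro j
    have := coupling_half (x := fun a b => x b a) T S (fun _ _ => hx _ _) w t ht hα
      (s j) (hs j) (hβ0 j)
    calc _ = r j * ∑ i, w i * (x (t i) (s j) /
          ((∑ u ∈ T, x u (s j)) * ∑ v ∈ S, x (t i) v)) := by
          rw [Finset.mul_sum]
          refine Finset.sum_congr rfl fun i _ => ?_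
          simp only
          rw [mul_comm (∑ v ∈ S, x (t i) v)]
          ring
      _ = r j := by rw [this, mul_one]
  · intro u hu v hv
    have e : ∀ i j, w i * (r j * (x (t i) (s j) /
        ((∑ v ∈ S, x (t i) v) * ∑ u ∈ T, x u (s j)))) *
        ((if t i = u then 1 else 0) * (if s j = v then 1 else 0))
        = (w i * (if t i = u then 1 else 0)) * ((r j * (if s j = v then 1 else 0)) *
          (x u v / ((∑ v ∈ S, x u v) * ∑ u ∈ T, x u v))) := by
      intro i j
      by_cases h1 : t i = u
      · by_cases h2 : s j = v
        · subst h1 h2; simp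
        · simp [h2]
      · simp [h1]
    simp_rw [e, ← Finset.mul_sum, ← Finset.sum_mul]
    rw [hα u hu, hβ v hv]
    have h1 : x u v ≤ ∑ v ∈ S, x u v :=
      Finset.single_le_sum (f := fun v => x u v) (fun _ _ => hx _ _) hv
    have h2 : x u v ≤ ∑ u ∈ T, x u v :=
      Finset.single_le_sum (f := fun u => x u v) (fun _ _ => hx _ _) hu
    rcases (hx u v).eq_or_lt with h0 | h0
    · rw [← h0]; simp
    · have h1' : (∑ v ∈ S, x u v) ≠ 0 := (h0.trans_le h1).ne'
      have h2' : (∑ u ∈ T, x u v) ≠ 0 := (h0.trans_le h2).ne'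
      field_simp

/-- Perfect matching polytope. -/
def Hull (W : Finset V) : Set (V → V → ℝ) :=
  convexHull ℝ {m | ∃ f, IsPM W f ∧ mat W f = m}

/-- Extraction of a positive finite distribution. -/
lemma hull_extract {V : Type*} [DecidableEq V] {W : Finset V} {x : V → V → ℝ}
    (h : x ∈ Hull W) : ∃ (k : ℕ) (f : Fin k → V → V) (w : Fin k → ℝ),
      (∀ i, IsPM W (f i)) ∧ (∀ i, 0 < w i) ∧ ∑ i, w i = 1 ∧
      ∀ u v, ∑ i, w i * mat W (f i) u v = x u v := by
  obtain ⟨ι, _, z, w, hz, -, hw, hs, he⟩ := eq_pos_convex_span_of_mem_convexHull h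
  have : ∀ i, ∃ f, IsPM W f ∧ mat W f = z i := fun i => hz ⟨i, rfl⟩
  choose f hf hfz using this
  let e := (Fintype.equivFin ι).symm
  refine ⟨Fintype.card ι, fun i => f (e i), fun i => w (e i), fun i => hf _, fun i => hw _, ?_, ?_⟩
  · rw [← hs]; exact e.sum_comp w
  · intro u v
    rw [← he, e.sum_comp (fun i => w i * mat W (f i) u v)]
    simp [Finset.sum_apply, hfz]
end

section
variable {V : Type*} [DecidableEq V] {W : Finset V} {x : V → V → ℝ} {S : Finset V}

/-- Glued matching. -/
def glue (S : Finset V) (f g : V → V) (s0 t0 : V) : V → V := fun v =>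
  if v = f s0 then g t0 else if v = g t0 then f s0 else if v ∈ S then g v else f v

lemma glue_T {f g : V → V} {s0 t0 v : V} (hs0 : s0 ∈ S)
    (hg : IsPM (insert t0 S) g) (ht0 : t0 ∉ S) (hv : v ∉ S) :
    glue S f g s0 t0 v = if v = f s0 then g t0 else f v := by
  have h := hg t0 (by simp)
  have : g t0 ∈ S := by
    rcases Finset.mem_insert.1 h.1 with h' | h'
    · exact absurd h' h.2.2
    · exact h'
  have h2 : v ≠ g t0 := by rintro rfl; exact hv this
  simp [glue, h2, hv]

lemma glue_S {f g : V → V} {s0 t0 v : V} (hs0 : s0 ∈ S) (hS : S ⊆ W)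
    (hf : IsPM (insert s0 (W \ S)) f) (hv : v ∈ S) :
    glue S f g s0 t0 v = if v = g t0 then f s0 else g v := by
  have h := hf s0 (by simp)
  have : f s0 ∈ W \ S := by
    rcases Finset.mem_insert.1 h.1 with h' | h'
    · exact absurd h' h.2.2
    · exact h'
  have h2 : v ≠ f s0 := by rintro rfl; exact (Finset.mem_sdiff.1 this).2 hv
  simp [glue, h2, hv]

lemma IsPM.root {T : Finset V} {f : V → V} {s0 : V} (hf : IsPM (insert s0 T) f) : f s0 ∈ T := by
  have h := hf s0 (by simp)
  rcases Finset.mem_insert.1 h.1 with h' | h'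
  · exact absurd h' h.2.2
  · exact h'

lemma IsPM.stay {T : Finset V} {f : V → V} {s0 v : V} (hf : IsPM (insert s0 T) f) (hv : v ∈ T)
    (hne : v ≠ f s0) : f v ∈ T ∧ f v ≠ f s0 ∨ v = s0 := by
  have h := hf v (by simp [hv])
  by_cases hvs : v = s0
  · exact Or.inr hvs
  left
  refine ⟨?_, ?_⟩
  · rcases Finset.mem_insert.1 h.1 with h' | h'
    · exact absurd (h' ▸ h.2.1).symm hne
    · exact h'
  · intro h'
    have h2 := (hf s0 (by simp)).2.1
    rw [← h', h.2.1] at h2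
    exact hvs h2

lemma glue_isPM (hS : S ⊆ W) {f g : V → V} {s0 t0 : V} (hs0 : s0 ∈ S) (ht0 : t0 ∈ W \ S)
    (hf : IsPM (insert s0 (W \ S)) f) (hg : IsPM (insert t0 S) g) :
    IsPM W (glue S f g s0 t0) := by
  have hft := hf.root
  have hgs := hg.root
  have ht0' := (Finset.mem_sdiff.1 ht0).2
  have hft' := Finset.mem_sdiff.1 hft
  intro v hv
  by_cases hvS : v ∈ S
  · rw [glue_S hs0 hS hf hvS]
    split_ifs with h1
    · refine ⟨hft'.1, ?_, ?_⟩
      · rw [glue_T hs0 hg ht0' hft'.2]; simp [h1]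
      · rintro rfl; exact hft'.2 hvS
    · rcases hg.stay hvS h1 with h2 | h2
      · refine ⟨hS h2.1, ?_, (hg v (by simp [hvS])).2.2⟩
        rw [glue_S hs0 hS hf h2.1, if_neg h2.2]
        exact (hg v (by simp [hvS])).2.1
      · exact absurd (h2 ▸ hvS) ht0'
  · have hvT : v ∈ W \ S := by simp [hv, hvS]
    rw [glue_T hs0 hg ht0' hvS]
    split_ifs with h1
    · refine ⟨hS hgs, ?_, ?_⟩
      · rw [glue_S hs0 hS hf hgs]; simp [h1]
      · rintro rfl; exact hvS hgs
    · rcases hf.stay hvT h1 with h2 | h2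
      · have h3 := Finset.mem_sdiff.1 h2.1
        refine ⟨h3.1, ?_, (hf v (by simp [hv, hvS])).2.2⟩
        rw [glue_T hs0 hg ht0' h3.2, if_neg h2.2]
        exact (hf v (by simp [hv, hvS])).2.1
      · exact absurd hs0 (h2 ▸ hvS)

lemma glue_TT (hS : S ⊆ W) {f g : V → V} {s0 t0 : V} (hs0 : s0 ∈ S) (ht0 : t0 ∈ W \ S)
    (hf : IsPM (insert s0 (W \ S)) f) (hg : IsPM (insert t0 S) g) {u v : V}
    (hu : u ∈ W \ S) (hv : v ∈ W \ S) :
    mat W (glue S f g s0 t0) u v = mat (insert s0 (W \ S)) f u v := by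
  have hgs := hg.root
  have ht0' := (Finset.mem_sdiff.1 ht0).2
  have hu' := Finset.mem_sdiff.1 hu
  have hv' := Finset.mem_sdiff.1 hv
  unfold mat
  rw [glue_T hs0 hg ht0' hu'.2]
  congr 1
  apply propext
  split_ifs with h1
  · have e1 : g t0 ≠ v := by rintro rfl; exact hv'.2 hgs
    have e2 : f u ≠ v := by
      rw [h1, (hf s0 (by simp)).2.1]; rintro rfl; exact hv'.2 hs0
    simp [e1, e2]
  · simp [hu'.1, hu'.2]

lemma glue_SS (hS : S ⊆ W) {f g : V → V} {s0 t0 : V} (hs0 : s0 ∈ S) (ht0 : t0 ∈ W \ S)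
    (hf : IsPM (insert s0 (W \ S)) f) (hg : IsPM (insert t0 S) g) {u v : V}
    (hu : u ∈ S) (hv : v ∈ S) :
    mat W (glue S f g s0 t0) u v = mat (insert t0 S) g u v := by
  have hft' := Finset.mem_sdiff.1 hf.root
  have ht0' := (Finset.mem_sdiff.1 ht0).2
  unfold mat
  rw [glue_S hs0 hS hf hu]
  congr 1
  apply propext
  split_ifs with h1
  · have e1 : f s0 ≠ v := by rintro rfl; exact hft'.2 hv
    have e2 : g u ≠ v := by
      rw [h1, (hg t0 (by simp)).2.1]; rintro rfl; exact ht0' hv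
    simp [e1, e2]
  · simp [hu, hS hu]

lemma glue_TS (hS : S ⊆ W) {f g : V → V} {s0 t0 : V} (hs0 : s0 ∈ S) (ht0 : t0 ∈ W \ S)
    (hf : IsPM (insert s0 (W \ S)) f) (hg : IsPM (insert t0 S) g) {u v : V}
    (hu : u ∈ W \ S) (hv : v ∈ S) :
    mat W (glue S f g s0 t0) u v
      = (if f s0 = u then 1 else 0) * (if g t0 = v then 1 else 0) := by
  have ht0' := (Finset.mem_sdiff.1 ht0).2
  have hu' := Finset.mem_sdiff.1 hu
  unfold mat
  rw [glue_T hs0 hg ht0' hu'.2]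
  by_cases h1 : u = f s0
  · simp [← h1, hu'.1]
  · rw [if_neg h1, if_neg (Ne.symm h1), zero_mul, if_neg]
    rintro ⟨-, h2⟩
    rcases hf.stay hu h1 with h3 | h3
    · exact (Finset.mem_sdiff.1 h3.1).2 (h2 ▸ hv)
    · exact hu'.2 (h3 ▸ hs0)

lemma gluing (h : InP W x) (hS : S ⊆ W) {s0 t0 : V} (hs0 : s0 ∈ S) (ht0 : t0 ∈ W \ S)
    {x1 x2 : V → V → ℝ} (h1 : x1 ∈ Hull (insert s0 (W \ S))) (h2 : x2 ∈ Hull (insert t0 S))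
    (h1T : ∀ u ∈ W \ S, ∀ v ∈ W \ S, x1 u v = x u v)
    (h1s : ∀ u ∈ W \ S, x1 s0 u = ∑ s ∈ S, x u s)
    (h2S : ∀ u ∈ S, ∀ v ∈ S, x2 u v = x u v)
    (h2t : ∀ v ∈ S, x2 t0 v = ∑ t ∈ W \ S, x v t) : x ∈ Hull W := by
  obtain ⟨k, f, w, hf, hw, hw1, hfx⟩ := hull_extract h1
  obtain ⟨l, g, r, hg, hr, hr1, hgx⟩ := hull_extract h2
  obtain ⟨ω, hω0, hωi, hωj, hωx⟩ := coupling (x := x) S (W \ S) h.nonneg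
    w (fun i => f i s0) (fun i => (hf i).root) hw r (fun j => g j t0) (fun j => (hg j).root) hr
    (by
      intro u hu
      rw [← h1s u hu, ← hfx]
      simp [mat]) (by
      intro v hv
      rw [Finset.sum_congr rfl fun u _ => h.symm u v, ← h2t v hv, ← hgx]
      simp [mat])
  have hPM := fun i j => glue_isPM hS hs0 ht0 (hf i) (hg j)
  have hx : x = ∑ p : Fin k × Fin l, ω p.1 p.2 • mat W (glue S (f p.1) (g p.2) s0 t0) := by
    ext u v
    simp only [Finset.sum_apply, Pi.smul_apply, smul_eq_mul, Fintype.sum_prod_type]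
    by_cases hu : u ∈ W
    swap
    · simp [h.supp _ _ hu, mat_supp hu]
    by_cases hv : v ∈ W
    swap
    · rw [h.supp' hv]
      simp [mat_symm (hPM _ _) u v, mat_supp hv]
    by_cases huS : u ∈ S
    · by_cases hvS : v ∈ S
      · simp_rw [glue_SS hS hs0 ht0 (hf _) (hg _) huS hvS]
        rw [Finset.sum_comm]
        simp_rw [← Finset.sum_mul, hωj]
        rw [hgx, h2S u huS v hvS]
      · have hvT : v ∈ W \ S := by simp [hv, hvS]
        simp_rw [mat_symm (hPM _ _) u v, glue_TS hS hs0 ht0 (hf _) (hg _) hvT huS]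
        rw [hωx v hvT u huS, h.symm]
    · have huT : u ∈ W \ S := by simp [hu, huS]
      by_cases hvS : v ∈ S
      · simp_rw [glue_TS hS hs0 ht0 (hf _) (hg _) huT hvS]
        rw [hωx u huT v hvS]
      · have hvT : v ∈ W \ S := by simp [hv, hvS]
        simp_rw [glue_TT hS hs0 ht0 (hf _) (hg _) huT hvT, ← Finset.sum_mul, hωi]
        rw [hfx, h1T u huT v hvT]
  rw [hx]
  refine (convex_convexHull ℝ _).sum_mem (fun p _ => hω0 _ _) ?_ ?_
  · rw [Fintype.sum_prod_type]; simp_rw [hωi]; exact hw1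
  · intro p _
    exact subset_convexHull ℝ _ ⟨_, hPM _ _, rfl⟩

theorem edmonds : ∀ (n : ℕ) (W : Finset V), W.card = n → ∀ (m : ℕ) (x : V → V → ℝ),
    ssize W x = m → InP W x → x ∈ Hull W := by
  intro n
  induction n using Nat.strong_induction_on with
  | _ n ihn =>
  intro W hW m
  induction m using Nat.strong_induction_on with
  | _ m ihm =>
  intro x hm h
  rcases W.eq_empty_or_nonempty with rfl | hne
  · apply subset_convexHull
    refine ⟨id, fun u hu => by simp at hu, ?_⟩
    ext u v
    rw [h.supp u v (by simp)]
    simp [mat]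
  obtain ⟨f, hf, hp⟩ := tutte_on h
  rcases step h hf hp hne with he | ⟨ε, y, hε0, hε1, hy, hxy, hc⟩
  · rw [he]
    exact subset_convexHull ℝ _ ⟨f, hf, rfl⟩
  · suffices hyH : y ∈ Hull W by
      rw [hxy]
      have hfH : mat W f ∈ Hull W := subset_convexHull ℝ _ ⟨f, hf, rfl⟩
      exact (convex_convexHull ℝ _) hfH hyH hε0 (by linarith) (by ring)
    rcases hc with hc | ⟨S, hS, hSo, hcut, hc1, hc2⟩
    · exact ihm _ (hm ▸ hc) y rfl hy
    · have hcard := Finset.card_sdiff_add_card_eq_card hS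
      have hTo : Odd (W \ S).card := by
        have := hy.even
        rw [← hcard, Nat.even_add] at this
        rw [← Nat.not_even_iff_odd] at hSo ⊢
        tauto
      obtain ⟨s0, hs0⟩ := Finset.card_pos.1 (by omega : 0 < S.card)
      obtain ⟨t0, ht0⟩ := Finset.card_pos.1 (by omega : 0 < (W \ S).card)
      have hTS : W \ (W \ S) = S := Finset.sdiff_sdiff_eq_self hS
      have hs0' : s0 ∈ W \ (W \ S) := by rw [hTS]; exact hs0
      have p1 := contr_InP hy hS hs0 hSo hcut
      have p2 := contr_InP hy Finset.sdiff_subset ht0 hTo (by rw [cut_compl hy.symm hS, hcut])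
      rw [hTS] at p2
      have c1 : (insert s0 (W \ S)).card < n := by
        have := Finset.card_insert_le s0 (W \ S)
        omega
      have c2 : (insert t0 S).card < n := by
        have := Finset.card_insert_le t0 S
        omega
      refine gluing hy hS hs0 ht0 (ihn _ c1 _ rfl _ _ rfl p1) (ihn _ c2 _ rfl _ _ rfl p2)
        ?_ ?_ ?_ ?_
      · intro u hu v hv; exact contr_tt hy hs0 hu hv
      · intro u hu; exact contr_st hy hS hs0 hu
      · intro u hu v hv
        exact contr_tt hy ht0 (by rwa [hTS]) (by rwa [hTS])
      · intro v hv
        exact contr_st hy Finset.sdiff_subset ht0 (by rwa [hTS])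
end

section
variable {V : Type*} [Fintype V] [DecidableEq V]

lemma even_inner (G : SimpleGraph V) [DecidableRel G.Adj] (U : Finset V) :
    Even ((U ×ˢ U).filter fun p => G.Adj p.1 p.2).card := by
  rw [← ZMod.natCast_eq_zero_iff_even, Finset.card_eq_sum_ones, Nat.cast_sum]
  refine Finset.sum_involution (fun p _ => (p.2, p.1)) ?_ ?_ ?_ ?_
  · intro p _; decide
  · intro p hp _ he
    rw [Finset.mem_filter] at hp
    have : p.2 = p.1 := congrArg Prod.fst he
    exact hp.2.ne this.symm
  · intro p hp
    simp only [Finset.mem_filter, Finset.mem_product] at hp ⊢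
    exact ⟨⟨hp.1.2, hp.1.1⟩, hp.2.symm⟩
  · intro p _; rfl

lemma cubic_InP (G : SimpleGraph V) [DecidableRel G.Adj]
    (hcubic : ∀ v : V, G.degree v = 3)
    (h2ec : ∀ e ∈ G.edgeSet, (G.deleteEdges {e}).Connected) :
    InP Finset.univ (fun u v => if G.Adj u v then (1/3 : ℝ) else 0) := by
  have hrow : ∀ u, ∑ v, (if G.Adj u v then 1 else 0) = 3 := by
    intro u
    rw [← hcubic u, ← G.card_neighborFinset_eq_degree, G.neighborFinset_eq_filter]
    simp
  have hdiag : ∀ u, (fun u v => if G.Adj u v then (1/3 : ℝ) else 0) u u = 0 := by simp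
  refine ⟨?_, ?_, hdiag, ?_, ?_, ?_⟩
  · intro u v; split_ifs <;> norm_num
  · intro u v; simp only [G.adj_comm]
  · intro u v hu; simp at hu
  · intro u hu
    rw [← row_eq_cut hdiag hu]
    have : ∑ v, (if G.Adj u v then (1/3 : ℝ) else 0)
        = (1/3) * ((∑ v, (if G.Adj u v then 1 else 0) : ℕ) : ℝ) := by
      push_cast
      rw [Finset.mul_sum]
      simp
    rw [this, hrow]; norm_num
  · intro U _ hU
    set D := ((U ×ˢ (Finset.univ \ U)).filter fun p => G.Adj p.1 p.2) with hD
    have hcut : cut (fun u v => if G.Adj u v then (1/3 : ℝ) else 0) Finset.univ U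
        = (1/3) * (D.card : ℝ) := by
      unfold cut
      rw [← Finset.sum_product', hD, Finset.card_filter]
      push_cast
      rw [Finset.mul_sum]
      simp
    have hsum : ((U ×ˢ U).filter fun p => G.Adj p.1 p.2).card + D.card = 3 * U.card := by
      rw [hD, Finset.card_filter, Finset.card_filter, Finset.sum_product, Finset.sum_product,
        ← Finset.sum_add_distrib]
      have : ∀ u ∈ U, (∑ v ∈ U, if G.Adj u v then 1 else 0)
          + (∑ v ∈ Finset.univ \ U, if G.Adj u v then 1 else 0) = 3 := by
        intro u _
        rw [← hrow u, add_comm]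
        exact Finset.sum_sdiff (Finset.subset_univ U)
      rw [Finset.sum_congr rfl this]
      simp [mul_comm]
    have hDodd : Odd D.card := by
      obtain ⟨a, ha⟩ := even_inner G U
      obtain ⟨b, hb⟩ := hU
      rw [ha, hb] at hsum
      exact ⟨3 * b + 1 - a, by omega⟩
    have hD1 : D.card ≠ 1 := by
      intro h1
      obtain ⟨⟨a, b⟩, hab⟩ := Finset.card_eq_one.1 h1
      have hm : (a, b) ∈ D := by rw [hab]; simp
      simp only [hD, Finset.mem_filter, Finset.mem_product, Finset.mem_sdiff, Finset.mem_univ,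
        true_and] at hm
      obtain ⟨⟨haU, hbU⟩, hadj⟩ := hm
      obtain ⟨p⟩ := (h2ec s(a, b) hadj).preconnected a b
      obtain ⟨d, -, hd1, hd2⟩ := p.exists_boundary_dart (U : Set V) haU hbU
      have hda := d.adj
      rw [SimpleGraph.deleteEdges_adj] at hda
      have hdD : (d.fst, d.snd) ∈ D := by
        simp only [hD, Finset.mem_filter, Finset.mem_product, Finset.mem_sdiff, Finset.mem_univ,
          true_and]
        exact ⟨⟨hd1, hd2⟩, hda.1⟩
      rw [hab, Finset.mem_singleton, Prod.mk.injEq] at hdD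
      apply hda.2
      rw [hdD.1, hdD.2]
      rfl
    have h3 : 3 ≤ D.card := by
      obtain ⟨c, hc⟩ := hDodd
      omega
    rw [hcut]
    have : (3:ℝ) ≤ D.card := by exact_mod_cast h3
    linarith
end

end PMDist

/-- Every cubic 2-edge-connected simple graph admits a finite
distribution over perfect matchings such that every edge lies in a matching drawn
from this distribution with probability exactly `1/3`. -/
theorem distribution_over_perfect_matchings_cubic_two_edge_connected
    {V : Type*} [Fintype V] [DecidableEq V]
    (G : SimpleGraph V) [DecidableRel G.Adj]
    (hcubic : ∀ v : V, G.degree v = 3)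
    (hconn : G.Connected)
    (h2ec : ∀ e ∈ G.edgeSet, (G.deleteEdges {e}).Connected) :
    ∃ (k : ℕ) (M : Fin k → Finset (Sym2 V)) (p : Fin k → ℝ),
      (∀ i, M i ⊆ G.edgeFinset) ∧
      (∀ i, ∀ v : V, ∃! e, e ∈ M i ∧ v ∈ e) ∧
      (∀ i, 0 ≤ p i) ∧ (∑ i, p i = 1) ∧
      (∀ e ∈ G.edgeFinset,
        ∑ i ∈ Finset.univ.filter (fun i => e ∈ M i), p i = 1 / 3) := by
  
  obtain ⟨k, f, p, hf, hp, hp1, hx⟩ := PMDist.hull_extract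
    (PMDist.edmonds _ Finset.univ rfl _ _ rfl (PMDist.cubic_InP G hcubic h2ec))
  have hmem : ∀ i u v, s(u, v) ∈ Finset.univ.image (fun a => s(a, f i a)) ↔ f i u = v := by
    intro i u v
    simp only [Finset.mem_image, Finset.mem_univ, true_and, Sym2.eq_iff]
    constructor
    · rintro ⟨a, ⟨rfl, h⟩ | ⟨rfl, h⟩⟩
      · exact h
      · rw [← h]; exact (hf i _ (Finset.mem_univ _)).2.1
    · intro h; exact ⟨u, Or.inl ⟨rfl, h⟩⟩
  have hadj : ∀ i u, G.Adj u (f i u) := by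
    intro i u
    by_contra hc
    have h := hx u (f i u)
    rw [if_neg hc] at h
    rw [Finset.sum_eq_zero_iff_of_nonneg
      (fun j _ => mul_nonneg (hp j).le (PMDist.mat_nonneg _ _ _ _))] at h
    have := h i (Finset.mem_univ _)
    simp [PMDist.mat, (hp i).ne'] at this
  refine ⟨k, fun i => Finset.univ.image (fun a => s(a, f i a)), p, ?_, ?_,
    fun i => (hp i).le, hp1, ?_⟩
  · intro i e he
    simp only [Finset.mem_image, Finset.mem_univ, true_and] at he
    obtain ⟨a, rfl⟩ := he
    simpa using hadj i a
  · intro i v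
    refine ⟨s(v, f i v), ⟨(hmem i _ _).2 rfl, by simp⟩, ?_⟩
    rintro e ⟨he, hv⟩
    obtain ⟨b, rfl⟩ := Sym2.mem_iff_exists.1 hv
    rw [(hmem i v b).1 he]
  · intro e he
    induction e using Sym2.ind with
    | _ u v =>
      have h : G.Adj u v := by simpa using he
      have h' := hx u v
      rw [if_pos h] at h'
      rw [← h', Finset.sum_filter]
      refine Finset.sum_congr rfl fun i _ => ?_
      simp only [hmem, PMDist.mat, Finset.mem_univ, true_and]
      split_ifs <;> simp
end
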